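/- arXiv:math/0507441 — 3 statements merged into one kernel-verified Lean document; each statement's English description precedes it below -/
import Mathlib

section
/- Uniform Tits alternative for Zariski-dense subgroups of SL_d(ℤ) (the case 𝕂 = ℚ, S = {∞}, 𝔾 = SL_d of Theorem 2): For every d ≥ 2 there exists a constant m = m(d) ≥ 1 with the following property: for every finite symmetric subset Σ of SL_d(ℤ) with 1 ∈ Σ whose generated subgroup is Zariski dense in SL_d(ℝ), the set Σ^m contains two independent elements. -/
open Matrix Pointwise

/-!
A proper subvariety of bounded degree cannot contain a large enough ball of a Zariski-dense
subgroup: the spaces of polynomials of degree `D` vanishing on the successive balls decrease, and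
once they are stationary their zero set is stable under the whole subgroup. For integral matrices
this escape is automatically quantitative, and uniformly so over all real conjugates of the
subgroup: the Gram determinant of the `D`-th power of the trace form on suitable elements of the
ball is a nonzero integer invariant under conjugation, so it is at least `1` in absolute value.

Let `T` be the largest absolute value of a trace on a ball of bounded radius. Escape makes `T`
exceed any prescribed constant, and Cramer's rule in a basis taken from the ball provides a real
conjugation after which the generators have norm polynomial in `T`. A spectral radius comparable
with `T` and the determinant `1` force a gap in the singular values of a power of the element of
trace `T`; the exponent of the power is at our disposal, so in some exterior power the gap exceeds
`T ^ e` for any `e` fixed in advance, whereas the quantitative escape produces elements of bounded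
length that are transverse up to a loss of a fixed power of `T`. Two conjugates of the proximal
element obtained in this way play ping-pong, and their word length is bounded by the dimension
alone.
-/

namespace UniformTits

open scoped MatrixGroups Matrix.Norms.Elementwise

section EntrywiseNorm

variable {ι 𝕜 : Type*} [Fintype ι] [NormedField 𝕜]

lemma norm_dotProduct_le (v w : ι → 𝕜) : ‖v ⬝ᵥ w‖ ≤ Fintype.card ι * ‖v‖ * ‖w‖ :=
  calc ‖∑ i, v i * w i‖ ≤ ∑ _i : ι, ‖v‖ * ‖w‖ := norm_sum_le_of_le _ fun i _ =>
        (norm_mul _ _).trans_le <| by gcongr <;> exact norm_le_pi_norm _ i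
    _ = Fintype.card ι * ‖v‖ * ‖w‖ := by
        rw [Finset.sum_const, Finset.card_univ, nsmul_eq_mul, mul_assoc]

lemma norm_mulVec_le (A : Matrix ι ι 𝕜) (v : ι → 𝕜) :
    ‖A *ᵥ v‖ ≤ Fintype.card ι * ‖A‖ * ‖v‖ := by
  refine (pi_norm_le_iff_of_nonneg (by positivity)).2 fun i => (norm_dotProduct_le _ _).trans ?_
  gcongr
  exact norm_le_pi_norm A i

lemma norm_vecMul_le (v : ι → 𝕜) (A : Matrix ι ι 𝕜) :
    ‖v ᵥ* A‖ ≤ Fintype.card ι * ‖A‖ * ‖v‖ := by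
  rw [← mulVec_transpose, ← norm_transpose A]
  exact norm_mulVec_le _ _

lemma norm_mul_le_card_mul (A B : Matrix ι ι 𝕜) : ‖A * B‖ ≤ Fintype.card ι * ‖A‖ * ‖B‖ := by
  refine (pi_norm_le_iff_of_nonneg (by positivity)).2 fun i => ?_
  have h := norm_vecMul_le (A i) B
  rw [mul_right_comm] at h
  refine h.trans ?_
  gcongr
  exact norm_le_pi_norm A i

variable [DecidableEq ι]

lemma norm_det_le (A : Matrix ι ι 𝕜) :
    ‖A.det‖ ≤ (Fintype.card ι).factorial * ‖A‖ ^ Fintype.card ι := by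
  simpa using! det_le (abv := NormedField.toAbsoluteValue 𝕜) (A := A) fun _ _ =>
    norm_entry_le_entrywise_sup_norm A

lemma norm_adjugate_le {A : Matrix ι ι 𝕜} {x : ℝ} (hx : 1 ≤ x) (hA : ‖A‖ ≤ x) :
    ‖A.adjugate‖ ≤ (Fintype.card ι).factorial * x ^ Fintype.card ι := by
  refine (norm_le_iff (by positivity)).2 fun i j => ?_
  rw [adjugate_apply]
  refine (norm_det_le _).trans ?_
  gcongr
  refine (norm_le_iff (by positivity)).2 fun k l => ?_
  rw [updateRow_apply]
  split_ifs with hk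
  · rcases eq_or_ne l i with rfl | hl
    · simpa using hx
    · simp [Pi.single_eq_of_ne hl, zero_le_one.trans hx]
  · exact (norm_entry_le_entrywise_sup_norm A).trans hA

lemma norm_le_of_vecMul_eq {G : Matrix ι ι 𝕜} {c y : ι → 𝕜} {T : ℝ} (hT : 1 ≤ T)
    (hdet : 1 ≤ ‖G.det‖) (hG : ‖G‖ ≤ T) (hy : ‖y‖ ≤ T) (hc : c ᵥ* G = y) :
    ‖c‖ ≤ Fintype.card ι * ((Fintype.card ι).factorial * T ^ Fintype.card ι) * T := by
  have hdetc : G.det • c = y ᵥ* G.adjugate := by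
    rw [← hc, vecMul_vecMul, mul_adjugate, vecMul_smul, vecMul_one]
  calc ‖c‖ ≤ ‖G.det‖ * ‖c‖ := le_mul_of_one_le_left (norm_nonneg _) hdet
    _ = ‖y ᵥ* G.adjugate‖ := by rw [← hdetc, norm_smul]
    _ ≤ Fintype.card ι * ‖G.adjugate‖ * ‖y‖ := norm_vecMul_le _ _
    _ ≤ _ := by gcongr; exact norm_adjugate_le hT hG

lemma norm_le_one_of_mem_orthogonalGroup {K : Matrix ι ι ℝ}
    (hK : K ∈ Matrix.orthogonalGroup ι ℝ) : ‖K‖ ≤ 1 :=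
  (norm_le_iff zero_le_one).2 fun i j => entry_norm_bound_of_unitary hK i j

end EntrywiseNorm

section PingPong

variable {ι : Type*} [Fintype ι]

/-- `M` agrees with the rank-one matrix `p ξᵀ`, of size at least `Λ`, up to a relative error `ε`:
it contracts the projective space, minus a neighbourhood of the hyperplane `ξ = 0`, to a
neighbourhood of `p`. -/
structure IsNearRankOne (M : Matrix ι ι ℝ) (p ξ : ι → ℝ) (ε Λ : ℝ) : Prop where
  norm_sub_le : ‖M - vecMulVec p ξ‖ ≤ ε * (‖p‖ * ‖ξ‖)
  le_norm_mul_norm : Λ ≤ ‖p‖ * ‖ξ‖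

/-- The vector `p` is quantitatively off the hyperplane `ξ = 0`, in a form invariant under scaling
`ξ` and `p`. -/
def IsTransverse (Q : ℝ) (ξ p : ι → ℝ) : Prop := ‖ξ‖ * ‖p‖ ≤ Q * |ξ ⬝ᵥ p|

/-- `v` lies in a narrow cone around the line spanned by `q`, with a component of size at least
`m` along that line. -/
def IsAligned (Q : ℝ) (q : ι → ℝ) (m : ℝ) (v : ι → ℝ) : Prop :=
  ∃ c : ℝ, 2 * Fintype.card ι * Q * ‖v - c • q‖ ≤ ‖c • q‖ ∧ m ≤ ‖c • q‖

variable {M : Matrix ι ι ℝ} {p ξ q v : ι → ℝ} {ε Λ Q m : ℝ}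

lemma IsNearRankOne.norm_mulVec_sub_le (h : IsNearRankOne M p ξ ε Λ) (v : ι → ℝ) :
    ‖M *ᵥ v - (ξ ⬝ᵥ v) • p‖ ≤ Fintype.card ι * (ε * (‖p‖ * ‖ξ‖)) * ‖v‖ := by
  have hrank : M *ᵥ v - (ξ ⬝ᵥ v) • p = (M - vecMulVec p ξ) *ᵥ v := by
    rw [sub_mulVec, vecMulVec_mulVec, op_smul_eq_smul]
  rw [hrank]
  refine (norm_mulVec_le _ _).trans ?_
  gcongr
  exact h.norm_sub_le

lemma IsTransverse.le_abs_dotProduct (hξq : IsTransverse Q ξ q) (hQ : 0 ≤ Q) {c : ℝ}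
    (hv : 2 * Fintype.card ι * Q * ‖v - c • q‖ ≤ ‖c • q‖) :
    ‖ξ‖ * ‖c • q‖ ≤ 2 * Q * |ξ ⬝ᵥ v| := by
  have hmain : ‖ξ‖ * ‖c • q‖ ≤ Q * |ξ ⬝ᵥ c • q| := by
    rw [norm_smul, dotProduct_smul, smul_eq_mul, abs_mul, Real.norm_eq_abs, mul_left_comm,
      mul_left_comm Q]
    exact mul_le_mul_of_nonneg_left hξq (abs_nonneg c)
  have hsplit : |ξ ⬝ᵥ c • q| ≤ |ξ ⬝ᵥ v| + |ξ ⬝ᵥ (v - c • q)| := by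
    rw [dotProduct_sub]
    linarith [abs_sub_abs_le_abs_sub (ξ ⬝ᵥ c • q) (ξ ⬝ᵥ v), abs_sub_comm (ξ ⬝ᵥ c • q) (ξ ⬝ᵥ v)]
  have herr : 2 * (Q * |ξ ⬝ᵥ (v - c • q)|) ≤ ‖ξ‖ * ‖c • q‖ :=
    calc 2 * (Q * |ξ ⬝ᵥ (v - c • q)|)
        ≤ 2 * (Q * (Fintype.card ι * ‖ξ‖ * ‖v - c • q‖)) := by
          gcongr; exact norm_dotProduct_le ξ (v - c • q)
      _ = ‖ξ‖ * (2 * Fintype.card ι * Q * ‖v - c • q‖) := by ring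
      _ ≤ ‖ξ‖ * ‖c • q‖ := by gcongr
  linarith [mul_le_mul_of_nonneg_left hsplit hQ]

lemma IsNearRankOne.isAligned_mulVec [Nonempty ι] (hM : IsNearRankOne M p ξ ε Λ)
    (hξq : IsTransverse Q ξ q) (hQ : 1 ≤ Q) (hε : 8 * Fintype.card ι ^ 2 * ε * Q ^ 2 ≤ 1)
    (hΛ : 8 * Q ≤ Λ) (hv : IsAligned Q q m v) : IsAligned Q p (4 * m) (M *ᵥ v) := by
  obtain ⟨c, hcone, hm⟩ := hv
  have hfun := hξq.le_abs_dotProduct (zero_le_one.trans hQ) hcone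
  have hcard : (1 : ℝ) ≤ Fintype.card ι := by exact_mod_cast Fintype.card_pos
  set N : ℝ := (Fintype.card ι : ℝ)
  set x := ‖c • q‖
  have hsize : ‖p‖ * ‖ξ‖ * x ≤ 2 * Q * ‖(ξ ⬝ᵥ v) • p‖ := by
    rw [norm_smul, Real.norm_eq_abs]
    linarith [mul_le_mul_of_nonneg_left hfun (norm_nonneg p)]
  have hvx : ‖v‖ ≤ 2 * x := by
    have hclose : ‖v - c • q‖ ≤ x := by
      refine le_trans ?_ hcone
      exact le_mul_of_one_le_left (norm_nonneg _) (by nlinarith)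
    linarith [norm_le_norm_add_norm_sub' v (c • q)]
  refine ⟨ξ ⬝ᵥ v, ?_, ?_⟩
  · have hε0 : 0 ≤ ε * (‖p‖ * ‖ξ‖) := (norm_nonneg _).trans hM.norm_sub_le
    refine le_of_mul_le_mul_left ?_ (by positivity : 0 < 2 * Q)
    calc 2 * Q * (2 * N * Q * ‖M *ᵥ v - (ξ ⬝ᵥ v) • p‖)
        ≤ 2 * Q * (2 * N * Q * (N * (ε * (‖p‖ * ‖ξ‖)) * (2 * x))) := by
          gcongr
          exact (hM.norm_mulVec_sub_le v).trans (by gcongr)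
      _ = 8 * N ^ 2 * ε * Q ^ 2 * (‖p‖ * ‖ξ‖ * x) := by ring
      _ ≤ 1 * (‖p‖ * ‖ξ‖ * x) := by gcongr
      _ ≤ 2 * Q * ‖(ξ ⬝ᵥ v) • p‖ := by rwa [one_mul]
  · refine le_of_mul_le_mul_left ?_ (by positivity : 0 < 2 * Q)
    calc 2 * Q * (4 * m) = 8 * Q * m := by ring
      _ ≤ 8 * Q * x := by gcongr
      _ ≤ ‖p‖ * ‖ξ‖ * x :=
          mul_le_mul_of_nonneg_right (hΛ.trans hM.le_norm_mul_norm) (norm_nonneg _)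
      _ ≤ _ := hsize

lemma isAligned_self (q : ι → ℝ) : IsAligned Q q ‖q‖ q := ⟨1, by simp, by simp⟩

lemma IsAligned.le_two_mul_norm [Nonempty ι] (hQ : 1 ≤ Q) (h : IsAligned Q q m v) :
    m ≤ 2 * ‖v‖ := by
  obtain ⟨c, hcone, hm⟩ := h
  have hcard : (1 : ℝ) ≤ Fintype.card ι := by exact_mod_cast Fintype.card_pos
  have hclose : 2 * ‖v - c • q‖ ≤ ‖c • q‖ :=
    le_trans (mul_le_mul_of_nonneg_right (by nlinarith) (norm_nonneg _)) hcone
  linarith [norm_le_norm_add_norm_sub v (c • q)]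

/-- The letter `g` or `g⁻¹` of a word, with the sign convention of `FreeGroup`. -/
def signed {Γ : Type*} [Group Γ] (g : Γ) (b : Bool) : Γ := bif b then g else g⁻¹

lemma injective_lift_of_isNearRankOne {Γ α : Type*} [Group Γ] [Nonempty ι] [DecidableEq ι]
    (R : Γ →* Matrix ι ι ℝ) (f : α → Γ) (p ξ : α × Bool → ι → ℝ) (hQ : 1 ≤ Q)
    (hε : 8 * Fintype.card ι ^ 2 * ε * Q ^ 2 ≤ 1) (hΛ : 8 * Q ≤ Λ)
    (hR : ∀ s, IsNearRankOne (R (signed (f s.1) s.2)) (p s) (ξ s) ε Λ)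
    (htrans : ∀ s t : α × Bool, (s.1 = t.1 → s.2 = t.2) → IsTransverse Q (ξ s) (p t)) :
    Function.Injective (FreeGroup.lift f) := by
  classical
  set L : α × Bool → Γ := fun s => signed (f s.1) s.2 with hL
  have hp (s) : 0 < ‖p s‖ := by
    refine (norm_nonneg _).lt_of_ne fun h => ?_
    have := (hR s).le_norm_mul_norm
    rw [← h, zero_mul] at this
    linarith
  have hword : ∀ (l : List (α × Bool)) (s : α × Bool), FreeGroup.IsReduced (s :: l) →
      ∃ v, 0 < ‖v‖ ∧ IsAligned Q (p s) (4 * ‖v‖) (R (((s :: l).map L).prod) *ᵥ v) := by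
    intro l
    induction l with
    | nil =>
      intro s _
      refine ⟨p s, hp s, ?_⟩
      simpa using (hR s).isAligned_mulVec (htrans s s fun _ => rfl) hQ hε hΛ (isAligned_self (p s))
    | cons t l ih =>
      intro s hs
      rw [FreeGroup.IsReduced, List.isChain_cons_cons] at hs
      obtain ⟨v, hv, halign⟩ := ih t hs.2
      refine ⟨v, hv, ?_⟩
      rw [List.map_cons, List.prod_cons, map_mul, ← mulVec_mulVec]
      obtain ⟨c, hcone, hm⟩ := (hR s).isAligned_mulVec (htrans s t hs.1) hQ hε hΛ halign
      exact ⟨c, hcone, by linarith⟩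
  rw [injective_iff_map_eq_one]
  intro w hw
  by_contra hne
  obtain ⟨s, l, hsl⟩ := List.exists_cons_of_ne_nil (mt FreeGroup.toWord_eq_nil_iff.1 hne)
  obtain ⟨v, hv, halign⟩ := hword l s (hsl ▸ FreeGroup.isReduced_toWord)
  have hone : ((s :: l).map L).prod = 1 := by
    rw [← hw, ← FreeGroup.mk_toWord (x := w), hsl, FreeGroup.lift_mk, hL]
    rfl
  rw [hone, map_one, one_mulVec] at halign
  linarith [halign.le_two_mul_norm hQ]

end PingPong

section PingPongPair

variable {ι : Type*} [Fintype ι]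

/-- `L` moves the vector `p` quantitatively off the hyperplane `ξ = 0`. -/
def MovesOff (Q : ℝ) (L : Matrix ι ι ℝ) (ξ p : ι → ℝ) : Prop := ‖ξ‖ * ‖p‖ ≤ Q * |ξ ⬝ᵥ (L *ᵥ p)|

variable {L L' M : Matrix ι ι ℝ} {p ξ : ι → ℝ} {ε Λ Q κ : ℝ}

lemma MovesOff.isTransverse_mulVec (h : MovesOff Q L ξ p) (hκ : 0 ≤ κ)
    (hL : Fintype.card ι * ‖L‖ ≤ κ) : IsTransverse (κ * Q) ξ (L *ᵥ p) :=
  calc ‖ξ‖ * ‖L *ᵥ p‖ ≤ ‖ξ‖ * (κ * ‖p‖) := by gcongr; exact (norm_mulVec_le L p).trans (by gcongr)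
    _ = κ * (‖ξ‖ * ‖p‖) := by ring
    _ ≤ κ * (Q * |ξ ⬝ᵥ (L *ᵥ p)|) := mul_le_mul_of_nonneg_left h hκ
    _ = κ * Q * |ξ ⬝ᵥ (L *ᵥ p)| := by ring

lemma MovesOff.isTransverse_vecMul (h : MovesOff Q L ξ p) (hκ : 0 ≤ κ)
    (hL : Fintype.card ι * ‖L‖ ≤ κ) : IsTransverse (κ * Q) (ξ ᵥ* L) p :=
  calc ‖ξ ᵥ* L‖ * ‖p‖ ≤ (κ * ‖ξ‖) * ‖p‖ := by gcongr; exact (norm_vecMul_le ξ L).trans (by gcongr)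
    _ = κ * (‖ξ‖ * ‖p‖) := by ring
    _ ≤ κ * (Q * |ξ ⬝ᵥ (L *ᵥ p)|) := mul_le_mul_of_nonneg_left h hκ
    _ = κ * Q * |ξ ᵥ* L ⬝ᵥ p| := by rw [dotProduct_mulVec]; ring

lemma MovesOff.mono {Q' : ℝ} (h : MovesOff Q L ξ p) (hQ : Q ≤ Q') : MovesOff Q' L ξ p :=
  h.trans <| by gcongr

lemma IsTransverse.mono {Q' : ℝ} (h : IsTransverse Q ξ p) (hQ : Q ≤ Q') : IsTransverse Q' ξ p :=
  h.trans <| by gcongr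

lemma IsNearRankOne.mono {ε' Λ' : ℝ} (h : IsNearRankOne M p ξ ε Λ) (hε : ε ≤ ε') (hΛ : Λ' ≤ Λ) :
    IsNearRankOne M p ξ ε' Λ' :=
  ⟨h.norm_sub_le.trans <| by gcongr, hΛ.trans h.le_norm_mul_norm⟩

lemma IsNearRankOne.transpose (h : IsNearRankOne M p ξ ε Λ) : IsNearRankOne Mᵀ ξ p ε Λ where
  norm_sub_le := by
    rw [← transpose_vecMulVec, ← transpose_sub, norm_transpose, mul_comm ‖ξ‖]
    exact h.norm_sub_le
  le_norm_mul_norm := by rw [mul_comm]; exact h.le_norm_mul_norm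

variable [DecidableEq ι]

/-- `L'` is inverse to `L`, and both act on `ι → ℝ` with operator norm at most `κ`, as witnessed by
their entries. -/
structure IsInversePair (L L' : Matrix ι ι ℝ) (κ : ℝ) : Prop where
  mul_eq_one : L * L' = 1
  card_mul_norm_le : Fintype.card ι * ‖L‖ ≤ κ
  card_mul_norm_inv_le : Fintype.card ι * ‖L'‖ ≤ κ

lemma IsInversePair.mono {κ' : ℝ} (h : IsInversePair L L' κ) (hκ : κ ≤ κ') :
    IsInversePair L L' κ' :=
  ⟨h.mul_eq_one, h.card_mul_norm_le.trans hκ, h.card_mul_norm_inv_le.trans hκ⟩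

lemma IsInversePair.symm (h : IsInversePair L L' κ) : IsInversePair L' L κ :=
  ⟨mul_eq_one_comm.1 h.mul_eq_one, h.card_mul_norm_inv_le, h.card_mul_norm_le⟩

lemma IsInversePair.transpose (h : IsInversePair L L' κ) : IsInversePair Lᵀ L'ᵀ κ where
  mul_eq_one := by rw [← transpose_mul, h.symm.mul_eq_one, transpose_one]
  card_mul_norm_le := by rw [norm_transpose]; exact h.card_mul_norm_le
  card_mul_norm_inv_le := by rw [norm_transpose]; exact h.card_mul_norm_inv_le

lemma isInversePair_of_mem_orthogonalGroup {K : Matrix ι ι ℝ}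
    (hK : K ∈ Matrix.orthogonalGroup ι ℝ) (hκ : Fintype.card ι ≤ κ) : IsInversePair K Kᵀ κ := by
  have hle : Fintype.card ι * ‖K‖ ≤ κ :=
    (mul_le_of_le_one_right (by positivity) (norm_le_one_of_mem_orthogonalGroup hK)).trans hκ
  exact ⟨(mem_orthogonalGroup_iff ι ℝ).1 hK, hle, by rwa [norm_transpose]⟩

lemma IsInversePair.norm_le_mul_norm_mulVec (h : IsInversePair L L' κ) (p : ι → ℝ) :
    ‖p‖ ≤ κ * ‖L *ᵥ p‖ :=
  calc ‖p‖ = ‖L' *ᵥ (L *ᵥ p)‖ := by rw [mulVec_mulVec, h.symm.mul_eq_one, one_mulVec]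
    _ ≤ Fintype.card ι * ‖L'‖ * ‖L *ᵥ p‖ := norm_mulVec_le _ _
    _ ≤ κ * ‖L *ᵥ p‖ := by gcongr; exact h.card_mul_norm_inv_le

lemma IsInversePair.norm_conj_le (h : IsInversePair L L' κ) (hκ : 0 ≤ κ) (A : Matrix ι ι ℝ) :
    ‖L * A * L'‖ ≤ κ ^ 2 * ‖A‖ :=
  calc ‖L * A * L'‖ ≤ Fintype.card ι * ‖L * A‖ * ‖L'‖ := norm_mul_le_card_mul _ _
    _ = Fintype.card ι * ‖L'‖ * ‖L * A‖ := by ring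
    _ ≤ κ * (κ * ‖A‖) := by
      gcongr
      · exact h.card_mul_norm_inv_le
      · exact (norm_mul_le_card_mul L A).trans (by gcongr; exact h.card_mul_norm_le)
    _ = κ ^ 2 * ‖A‖ := by ring

lemma IsTransverse.conj (h : IsTransverse Q ξ p) (hL : IsInversePair L L' κ) (hκ : 0 ≤ κ) :
    IsTransverse (κ ^ 2 * Q) (ξ ᵥ* L') (L *ᵥ p) :=
  calc ‖ξ ᵥ* L'‖ * ‖L *ᵥ p‖ ≤ (κ * ‖ξ‖) * (κ * ‖p‖) := by
        gcongr
        · exact (norm_vecMul_le ξ L').trans (by gcongr; exact hL.card_mul_norm_inv_le)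
        · exact (norm_mulVec_le L p).trans (by gcongr; exact hL.card_mul_norm_le)
    _ = κ ^ 2 * (‖ξ‖ * ‖p‖) := by ring
    _ ≤ κ ^ 2 * (Q * |ξ ⬝ᵥ p|) := mul_le_mul_of_nonneg_left h (by positivity)
    _ = κ ^ 2 * Q * |ξ ᵥ* L' ⬝ᵥ (L *ᵥ p)| := by
      rw [← dotProduct_mulVec, mulVec_mulVec, hL.symm.mul_eq_one, one_mulVec, mul_assoc]

lemma IsNearRankOne.mul_left (hM : IsNearRankOne M p ξ ε Λ) (hL : IsInversePair L L' κ)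
    (hε : 0 ≤ ε) (hκ : 0 < κ) : IsNearRankOne (L * M) (L *ᵥ p) ξ (κ ^ 2 * ε) (Λ / κ) where
  norm_sub_le := by
    rw [← mul_vecMulVec, ← Matrix.mul_sub]
    calc ‖L * (M - vecMulVec p ξ)‖ ≤ Fintype.card ι * ‖L‖ * ‖M - vecMulVec p ξ‖ :=
          norm_mul_le_card_mul _ _
      _ ≤ κ * (ε * (‖p‖ * ‖ξ‖)) := by
          gcongr
          exacts [hL.card_mul_norm_le, hM.norm_sub_le]
      _ ≤ κ * (ε * (κ * ‖L *ᵥ p‖ * ‖ξ‖)) := by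
          gcongr
          exact hL.norm_le_mul_norm_mulVec p
      _ = κ ^ 2 * ε * (‖L *ᵥ p‖ * ‖ξ‖) := by ring
  le_norm_mul_norm := by
    rw [div_le_iff₀' hκ, ← mul_assoc]
    refine hM.le_norm_mul_norm.trans ?_
    gcongr
    exact hL.norm_le_mul_norm_mulVec p

lemma IsNearRankOne.mul_right (hM : IsNearRankOne M p ξ ε Λ) (hL : IsInversePair L L' κ)
    (hε : 0 ≤ ε) (hκ : 0 < κ) : IsNearRankOne (M * L) p (ξ ᵥ* L) (κ ^ 2 * ε) (Λ / κ) := by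
  have h := (hM.transpose.mul_left hL.transpose hε hκ).transpose
  rwa [transpose_mul, transpose_transpose, transpose_transpose, mulVec_transpose] at h

lemma IsNearRankOne.conj (hM : IsNearRankOne M p ξ ε Λ) (hL : IsInversePair L L' κ)
    (hε : 0 ≤ ε) (hκ : 0 < κ) :
    IsNearRankOne (L * M * L') (L *ᵥ p) (ξ ᵥ* L') (κ ^ 4 * ε) (Λ / κ ^ 2) := by
  convert (hM.mul_left hL hε hκ).mul_right hL.symm (by positivity) hκ using 1 <;> field_simp

/-- Conjugation rescales the entry `(i, j)` by `α i / α j`, so all rows other than `i₀` become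
negligible. -/
lemma isNearRankOne_diagonal_mul_mul_diagonal {α : ι → ℝ} (hα : ∀ i, 0 < α i) {i₀ j₀ : ι} {G B : ℝ}
    (hG : 0 < G) (hgap : ∀ i, i ≠ i₀ → G * α i ≤ α i₀) (hmin : ∀ j, α j₀ ≤ α j)
    (hmax : G * α j₀ ≤ α i₀) (hB : 0 ≤ B) {H : Matrix ι ι ℝ} (hH : ‖H‖ ≤ B * |H i₀ j₀|) :
    IsNearRankOne (diagonal α * H * diagonal α⁻¹) (Pi.single i₀ 1)
      ((diagonal α * H * diagonal α⁻¹) i₀) (B / G) (G * |H i₀ j₀|) := by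
  have hentry (i j) : ‖(diagonal α * H * diagonal α⁻¹) i j‖ = α i * |H i j| / α j := by
    rw [mul_diagonal, diagonal_mul, Pi.inv_apply, norm_mul, norm_mul, norm_inv, Real.norm_eq_abs,
      Real.norm_eq_abs, Real.norm_eq_abs, abs_of_pos (hα i), abs_of_pos (hα j), div_eq_mul_inv]
  set M := diagonal α * H * diagonal α⁻¹
  have hrow : α i₀ * |H i₀ j₀| / α j₀ ≤ ‖M i₀‖ := (hentry i₀ j₀).symm.trans_le (norm_le_pi_norm _ _)
  have hsingle : ‖(Pi.single i₀ 1 : ι → ℝ)‖ = 1 := by rw [Pi.norm_single, norm_one]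
  refine ⟨(norm_le_iff (by positivity)).2 fun i j => ?_, ?_⟩
  · rw [hsingle, one_mul, Matrix.sub_apply, vecMulVec_apply]
    rcases eq_or_ne i i₀ with rfl | hi
    · rw [Pi.single_eq_same, one_mul, sub_self, norm_zero]
      positivity
    · rw [Pi.single_eq_of_ne hi, zero_mul, sub_zero, hentry]
      have hαi : α i ≤ α i₀ / G := by rw [le_div_iff₀' hG]; exact hgap i hi
      have hα₀ := hα i₀
      have hβ₀ := hα j₀
      calc α i * |H i j| / α j ≤ α i₀ / G * (B * |H i₀ j₀|) / α j₀ := by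
            gcongr
            exacts [(norm_entry_le_entrywise_sup_norm H).trans hH, hmin j]
        _ = B / G * (α i₀ * |H i₀ j₀| / α j₀) := by ring
        _ ≤ B / G * ‖M i₀‖ := by gcongr
  · rw [hsingle, one_mul]
    refine le_trans ?_ hrow
    rw [le_div_iff₀ (hα j₀), mul_right_comm]
    gcongr

variable {Γ : Type*} [Group Γ] {R : Γ →* Matrix ι ι ℝ} {F : Set Γ}

/-- The matrices `R f`, for `f ∈ F`, and their inverses can move any two vectors off any two
hyperplanes simultaneously, with a uniform constant `Q`. -/
def HasTransversals (R : Γ →* Matrix ι ι ℝ) (F : Set Γ) (Q : ℝ) : Prop :=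
  ∀ ξ p : Bool → ι → ℝ, ∃ f ∈ F, ∀ b b',
    MovesOff Q (R f) (ξ b) (p b') ∧ MovesOff Q (R f⁻¹) (ξ b) (p b')

lemma HasTransversals.mono {Q' : ℝ} (h : HasTransversals R F Q) (hQ : Q ≤ Q') :
    HasTransversals R F Q' := fun ξ p =>
  let ⟨f, hf, hoff⟩ := h ξ p
  ⟨f, hf, fun b b' => ⟨(hoff b b').1.mono hQ, (hoff b b').2.mono hQ⟩⟩

lemma MovesOff.one_le_mul_abs_apply {K K' H : Matrix ι ι ℝ} {i₀ j₀ : ι}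
    (h : MovesOff Q H (K i₀) (K'.col j₀)) (hK : IsInversePair K K' κ) :
    1 ≤ κ ^ 2 * Q * |(K * H * K') i₀ j₀| := by
  have hrow : 1 ≤ κ * ‖K i₀‖ := by
    simpa [Pi.norm_single] using! hK.transpose.norm_le_mul_norm_mulVec (Pi.single i₀ 1)
  have hcol : 1 ≤ κ * ‖K'.col j₀‖ := by
    simpa [Pi.norm_single] using! hK.symm.norm_le_mul_norm_mulVec (Pi.single j₀ 1)
  calc 1 ≤ κ * ‖K i₀‖ * (κ * ‖K'.col j₀‖) := one_le_mul_of_one_le_of_one_le hrow hcol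
    _ = κ ^ 2 * (‖K i₀‖ * ‖K'.col j₀‖) := by ring
    _ ≤ κ ^ 2 * (Q * |K i₀ ⬝ᵥ (H *ᵥ K'.col j₀)|) := mul_le_mul_of_nonneg_left h (by positivity)
    _ = κ ^ 2 * Q * |(K * H * K') i₀ j₀| := by rw [mul_mul_apply, mul_assoc]; rfl

lemma map_inv_eq_of_map_eq {K₁ K₁' K₂ K₂' : Matrix ι ι ℝ} {α : ι → ℝ} (hα : ∀ i, α i ≠ 0) {g : Γ}
    (hK₁ : K₁ * K₁' = 1) (hK₂ : K₂ * K₂' = 1) (hg : R g = K₁ * diagonal α * K₂) :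
    R g⁻¹ = K₂' * diagonal α⁻¹ * K₁' := by
  have hα1 : diagonal α * diagonal α⁻¹ = 1 := by
    rw [diagonal_mul_diagonal, ← diagonal_one]
    exact congrArg diagonal (funext fun i => mul_inv_cancel₀ (hα i))
  refine left_inv_eq_right_inv (a := R g) ?_ ?_
  · rw [← map_mul, inv_mul_cancel, map_one]
  · calc R g * (K₂' * diagonal α⁻¹ * K₁')
        = K₁ * (diagonal α * (K₂ * K₂') * diagonal α⁻¹) * K₁' := by
          simp only [hg, Matrix.mul_assoc]
      _ = 1 := by rw [hK₂, Matrix.mul_one, hα1, Matrix.mul_one, hK₁]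

lemma exists_isNearRankOne_map_conj {f g : Γ} (hf : IsInversePair (R f) (R f⁻¹) κ)
    (hκ : 1 ≤ κ) (hQ : 0 < Q) {K₁ K₁' K₂ K₂' : Matrix ι ι ℝ}
    (hK₁ : IsInversePair K₁ K₁' κ) (hK₂ : IsInversePair K₂ K₂' κ) {α : ι → ℝ} (hα : ∀ i, 0 < α i)
    (hg : R g = K₁ * diagonal α * K₂) {G : ℝ} (hG : 0 < G) {i₀ j₀ : ι}
    (hgap : ∀ i, i ≠ i₀ → G * α i ≤ α i₀) (hmin : ∀ j, α j₀ ≤ α j) (hmax : G * α j₀ ≤ α i₀)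
    (hoff : MovesOff Q (R f) (K₂ i₀) (K₂'.col j₀)) :
    ∃ ξ, IsNearRankOne (R (g * f * g⁻¹)) (K₁.col i₀) ξ (Q * κ ^ 9 / G) (G / (Q * κ ^ 4)) := by
  have hκ0 : 0 < κ := by positivity
  have : Nonempty ι := ⟨i₀⟩
  have hfκ : ‖R f‖ ≤ κ :=
    (le_mul_of_one_le_left (norm_nonneg _) (by exact_mod_cast Fintype.card_pos)).trans
      hf.card_mul_norm_le
  set H := K₂ * R f * K₂' with hH
  have hlow : 1 ≤ κ ^ 2 * Q * |H i₀ j₀| := hoff.one_le_mul_abs_apply hK₂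
  have hup : ‖H‖ ≤ Q * κ ^ 5 * |H i₀ j₀| :=
    calc ‖H‖ ≤ κ ^ 2 * ‖R f‖ := hK₂.norm_conj_le hκ0.le (R f)
      _ ≤ κ ^ 2 * κ * (κ ^ 2 * Q * |H i₀ j₀|) := by
        rw [mul_assoc]; gcongr; exact hfκ.trans (le_mul_of_one_le_right hκ0.le hlow)
      _ = Q * κ ^ 5 * |H i₀ j₀| := by ring
  have hbase := isNearRankOne_diagonal_mul_mul_diagonal hα hG hgap hmin hmax (by positivity) hup
  have hconj := hbase.conj hK₁ (by positivity) hκ0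
  have hmap : R (g * f * g⁻¹) = K₁ * (diagonal α * H * diagonal α⁻¹) * K₁' := by
    rw [map_mul, map_mul, hg, map_inv_eq_of_map_eq (fun i => (hα i).ne') hK₁.mul_eq_one
      hK₂.mul_eq_one hg, hH]
    simp only [Matrix.mul_assoc]
  rw [← hmap, mulVec_single_one] at hconj
  refine ⟨_, hconj.mono (le_of_eq (by ring)) ?_⟩
  rw [le_div_iff₀ (by positivity), div_mul_eq_mul_div, div_le_iff₀ (by positivity)]
  calc G * κ ^ 2 = G * κ ^ 2 * 1 := (mul_one _).symm
    _ ≤ G * κ ^ 2 * (κ ^ 2 * Q * |H i₀ j₀|) := by gcongr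
    _ = G * |H i₀ j₀| * (Q * κ ^ 4) := by ring

lemma exists_isNearRankOne_conj (hT : HasTransversals R F Q) (hQ : 0 < Q) (hκ : 1 ≤ κ)
    (hF : ∀ f ∈ F, IsInversePair (R f) (R f⁻¹) κ) {g : Γ} {K₁ K₁' K₂ K₂' : Matrix ι ι ℝ}
    (hK₁ : IsInversePair K₁ K₁' κ) (hK₂ : IsInversePair K₂ K₂' κ) {α : ι → ℝ} (hα : ∀ i, 0 < α i)
    (hg : R g = K₁ * diagonal α * K₂) {G : ℝ} (hG : 0 < G) {i₀ i₁ : ι} (hi : i₁ ≠ i₀)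
    (hgap : ∀ i, i ≠ i₀ → G * α i ≤ α i₀) :
    ∃ h ∈ F, ∃ p, ∃ ξ : Bool → ι → ℝ, ∀ b,
      IsNearRankOne (R (signed (g * h * g⁻¹) b)) p (ξ b) (Q * κ ^ 9 / G) (G / (Q * κ ^ 4)) := by
  have : Nonempty ι := ⟨i₀⟩
  obtain ⟨j₀, hj₀⟩ := Finite.exists_min α
  have hmax : G * α j₀ ≤ α i₀ := le_trans (by gcongr; exact hj₀ i₁) (hgap i₁ hi)
  obtain ⟨h, hh, hoff⟩ := hT (fun _ => K₂ i₀) (fun _ => K₂'.col j₀)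
  obtain ⟨hoff, hoff_inv⟩ := hoff true true
  obtain ⟨ξ, hξ⟩ := exists_isNearRankOne_map_conj (hF h hh) hκ hQ hK₁ hK₂ hα hg hG hgap hj₀ hmax
    hoff
  obtain ⟨ξ', hξ'⟩ := exists_isNearRankOne_map_conj (f := h⁻¹) (by simpa using (hF h hh).symm) hκ
    hQ hK₁ hK₂ hα hg hG hgap hj₀ hmax hoff_inv
  refine ⟨h, hh, K₁.col i₀, fun b => bif b then ξ else ξ', fun b => ?_⟩
  cases b
  · simpa [signed, mul_assoc] using hξ'
  · exact hξ

lemma exists_isTransverse_mul (hT : HasTransversals R F Q) (hκ : 0 < κ)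
    (hF : ∀ f ∈ F, IsInversePair (R f) (R f⁻¹) κ) {x : Γ} {ξ : Bool → ι → ℝ} (hε : 0 ≤ ε)
    (hx : ∀ b, IsNearRankOne (R (signed x b)) p (ξ b) ε Λ) :
    ∃ u ∈ F, ∃ p' ξ' : Bool → ι → ℝ,
      (∀ b, IsNearRankOne (R (signed (x * u) b)) (p' b) (ξ' b) (κ ^ 2 * ε) (Λ / κ)) ∧
      ∀ b, IsTransverse (κ * Q) (ξ' b) (p' b) := by
  obtain ⟨u, hu, hoff⟩ := hT ξ fun _ => p
  have hpair := hF u hu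
  refine ⟨u, hu, fun b => bif b then p else R u⁻¹ *ᵥ p,
    fun b => bif b then ξ true ᵥ* R u else ξ false, fun b => ?_, fun b => ?_⟩ <;> cases b
  · simpa [signed] using (hx false).mul_left hpair.symm hε hκ
  · simpa [signed] using (hx true).mul_right hpair hε hκ
  · exact (hoff false false).2.isTransverse_mulVec hκ.le hpair.card_mul_norm_inv_le
  · exact (hoff true true).1.isTransverse_vecMul hκ.le hpair.card_mul_norm_le

lemma exists_injective_lift_conj [Nonempty ι] (hT : HasTransversals R F Q) (hQ : 1 ≤ Q)
    (hκ : 1 ≤ κ) (hF : ∀ f ∈ F, IsInversePair (R f) (R f⁻¹) κ) {a : Γ} {p ξ : Bool → ι → ℝ}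
    (hε : 0 ≤ ε) (ha : ∀ b, IsNearRankOne (R (signed a b)) (p b) (ξ b) ε Λ) (hΛ : 0 ≤ Λ)
    (htrans : ∀ b, IsTransverse (κ * Q) (ξ b) (p b))
    (hsmall : 8 * Fintype.card ι ^ 2 * (κ ^ 4 * ε) * (κ ^ 3 * Q) ^ 2 ≤ 1)
    (hlarge : 8 * (κ ^ 3 * Q) ≤ Λ / κ ^ 2) :
    ∃ y ∈ F, Function.Injective (FreeGroup.lift ![a, y * a * y⁻¹]) := by
  have hκ0 : 0 < κ := by positivity
  obtain ⟨y, hy, hoff⟩ := hT ξ p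
  have hpair := hF y hy
  have hconj (b) : IsNearRankOne (R (signed (y * a * y⁻¹) b)) (R y *ᵥ p b) (ξ b ᵥ* R y⁻¹)
      (κ ^ 4 * ε) (Λ / κ ^ 2) := by
    have h := (ha b).conj hpair hε hκ0
    rw [← map_mul, ← map_mul] at h
    cases b <;> simpa [signed, mul_assoc] using h
  have hself (b) : IsTransverse (κ ^ 3 * Q) (ξ b ᵥ* R y⁻¹) (R y *ᵥ p b) := by
    convert (htrans b).conj hpair hκ0.le using 1
    ring
  refine ⟨y, hy, injective_lift_of_isNearRankOne R _ (fun s => ![p s.2, R y *ᵥ p s.2] s.1)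
    (fun s => ![ξ s.2, ξ s.2 ᵥ* R y⁻¹] s.1) (one_le_mul_of_one_le_of_one_le (one_le_pow₀ hκ) hQ)
    hsmall hlarge ?_ ?_⟩
  · rintro ⟨s, b⟩
    fin_cases s
    · exact (ha b).mono (le_mul_of_one_le_left hε (one_le_pow₀ hκ))
        (div_le_self hΛ (one_le_pow₀ hκ))
    · exact hconj b
  · have hκ3 : κ * Q ≤ κ ^ 3 * Q := by gcongr; exact le_self_pow₀ hκ (by norm_num)
    rintro ⟨s, b⟩ ⟨t, b'⟩ hst
    fin_cases s <;> fin_cases t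
    · obtain rfl : b = b' := hst rfl
      exact (htrans b).mono hκ3
    · exact ((hoff b b').1.isTransverse_mulVec hκ0.le hpair.card_mul_norm_le).mono hκ3
    · exact ((hoff b b').2.isTransverse_vecMul hκ0.le hpair.card_mul_norm_inv_le).mono hκ3
    · obtain rfl : b = b' := hst rfl
      exact hself b

/-- Ping-pong pairs are produced in three moves inside `F`: `h` turns the Cartan decomposition of
`g` into an attracting element `g h g⁻¹`, `u` separates its attracting point from its repelling
hyperplane, and `y` provides a second such element in general position. -/
lemma exists_injective_lift_of_gap (hT : HasTransversals R F Q) (hQ : 1 ≤ Q)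
    (hκ : Fintype.card ι ≤ κ) (hF : ∀ f ∈ F, IsInversePair (R f) (R f⁻¹) κ)
    {g : Γ} {K₁ K₂ : Matrix ι ι ℝ} (hK₁ : K₁ ∈ Matrix.orthogonalGroup ι ℝ)
    (hK₂ : K₂ ∈ Matrix.orthogonalGroup ι ℝ) {α : ι → ℝ} (hα : ∀ i, 0 < α i)
    (hg : R g = K₁ * diagonal α * K₂) {G : ℝ}
    (hG : 8 * Q ^ 3 * κ ^ 23 ≤ G) {i₀ i₁ : ι} (hi : i₁ ≠ i₀)
    (hgap : ∀ i, i ≠ i₀ → G * α i ≤ α i₀) :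
    ∃ h ∈ F, ∃ u ∈ F, ∃ y ∈ F,
      Function.Injective (FreeGroup.lift ![g * h * g⁻¹ * u, y * (g * h * g⁻¹ * u) * y⁻¹]) := by
  have : Nonempty ι := ⟨i₀⟩
  have hκ1 : 1 ≤ κ := le_trans (by exact_mod_cast Fintype.card_pos) hκ
  have hQ0 : 0 < Q := by positivity
  have hκ0 : 0 < κ := by positivity
  have hG0 : 0 < G := lt_of_lt_of_le (by positivity) hG
  obtain ⟨h, hh, p, ξ, hx⟩ := exists_isNearRankOne_conj hT hQ0 hκ1 hF
    (isInversePair_of_mem_orthogonalGroup hK₁ hκ) (isInversePair_of_mem_orthogonalGroup hK₂ hκ)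
    hα hg hG0 hi hgap
  obtain ⟨u, hu, p', ξ', ha, htrans⟩ := exists_isTransverse_mul hT hκ0 hF (by positivity) hx
  refine ⟨h, hh, u, hu, exists_injective_lift_conj hT hQ hκ1 hF (by positivity) ha
    (by positivity) htrans ?_ ?_⟩
  · calc 8 * Fintype.card ι ^ 2 * (κ ^ 4 * (κ ^ 2 * (Q * κ ^ 9 / G))) * (κ ^ 3 * Q) ^ 2
        ≤ 8 * κ ^ 2 * (κ ^ 4 * (κ ^ 2 * (Q * κ ^ 9 / G))) * (κ ^ 3 * Q) ^ 2 := by gcongr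
      _ = 8 * Q ^ 3 * κ ^ 23 / G := by ring
      _ ≤ 1 := (div_le_one hG0).2 hG
  · rw [div_div, div_div, le_div_iff₀ (by positivity)]
    calc 8 * (κ ^ 3 * Q) * (Q * κ ^ 4 * (κ * κ ^ 2)) = 8 * Q ^ 2 * κ ^ 10 := by ring
      _ ≤ 8 * Q ^ 3 * κ ^ 23 := by gcongr <;> first | assumption | norm_num
      _ ≤ G := hG

end PingPongPair

section Compound

open Set.powersetCard (ofFinEmbEquiv)

variable {n R : Type*} [LinearOrder n] [CommRing R] {i : ℕ}

/-- The `i`-th compound of a square matrix, formed by its `i × i` minors: the matrix of the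
`i`-th exterior power, with rows and columns indexed by the subsets of size `i`. -/
def compound (i : ℕ) (A : Matrix n n R) :
    Matrix (Set.powersetCard n i) (Set.powersetCard n i) R :=
  Matrix.of fun I J => (A.submatrix (ofFinEmbEquiv.symm I) (ofFinEmbEquiv.symm J)).det

lemma compound_transpose (A : Matrix n n R) : compound i Aᵀ = (compound i A)ᵀ := by
  ext I J
  simp only [compound, of_apply, transpose_apply]
  rw [← transpose_submatrix, det_transpose]

lemma compound_map {S : Type*} [CommRing S] (f : R →+* S) (A : Matrix n n R) :
    compound i (A.map f) = (compound i A).map f := by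
  ext I J
  simp only [compound, of_apply, map_apply, RingHom.map_det]
  rfl

lemma exists_ofFinEmbEquiv_symm_ne {I J : Set.powersetCard n i} (h : I ≠ J) :
    ∃ k, ∀ l, ofFinEmbEquiv.symm I k ≠ ofFinEmbEquiv.symm J l := by
  obtain ⟨x, hxI, hxJ⟩ := (Set.powersetCard.exists_mem_notMem_iff_ne I J).1 h
  obtain ⟨k, rfl⟩ := (Set.powersetCard.mem_range_ofFinEmbEquiv_symm_iff_mem I x).2 hxI
  exact ⟨k, fun l hl =>
    hxJ ((Set.powersetCard.mem_range_ofFinEmbEquiv_symm_iff_mem J _).1 ⟨l, hl.symm⟩)⟩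

lemma prod_ofFinEmbEquiv_symm (a : n → R) (I : Set.powersetCard n i) :
    ∏ k, a (ofFinEmbEquiv.symm I k) = ∏ x ∈ I.1, a x := by
  have hI : I.1 = Finset.univ.map (ofFinEmbEquiv.symm I).toEmbedding := by
    ext x
    simpa using! (Set.powersetCard.mem_range_ofFinEmbEquiv_symm_iff_mem I x).symm
  conv_rhs => rw [hI]
  simp

lemma compound_diagonal (a : n → R) :
    compound i (diagonal a) = diagonal fun I : Set.powersetCard n i => ∏ x ∈ I.1, a x := by
  ext I J
  rw [compound, of_apply]
  rcases eq_or_ne I J with rfl | h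
  · rw [diagonal_apply_eq, submatrix_diagonal _ _ (ofFinEmbEquiv.symm I).injective, det_diagonal]
    exact prod_ofFinEmbEquiv_symm a I
  · obtain ⟨k, hk⟩ := exists_ofFinEmbEquiv_symm_ne h
    rw [diagonal_apply_ne _ h]
    exact det_eq_zero_of_row_eq_zero k fun l => diagonal_apply_ne _ (hk l)

lemma compound_one : compound i (1 : Matrix n n R) = 1 := by
  rw [← diagonal_one, compound_diagonal]
  simp

lemma exists_compound_eq_single (I J : Set.powersetCard n i) :
    ∃ A : Matrix n n R, compound i A = Matrix.single I J 1 := by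
  classical
  refine ⟨of fun x y => if ∃ k, ofFinEmbEquiv.symm I k = x ∧ ofFinEmbEquiv.symm J k = y
    then 1 else 0, ?_⟩
  ext I' J'
  rw [compound, of_apply]
  by_cases hI : I' = I
  · by_cases hJ : J' = J
    · subst hI hJ
      rw [single_apply_same, ← det_one (n := Fin i) (R := R)]
      congr 1
      ext a b
      simp [one_apply, eq_comm]
    · obtain ⟨k, hk⟩ := exists_ofFinEmbEquiv_symm_ne hJ
      rw [single_apply_of_ne _ _ _ _ _ (by tauto)]
      exact det_eq_zero_of_column_eq_zero k fun l => if_neg fun ⟨m, _, hm⟩ => hk m hm.symm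
  · obtain ⟨k, hk⟩ := exists_ofFinEmbEquiv_symm_ne hI
    rw [single_apply_of_ne _ _ _ _ _ (by tauto)]
    exact det_eq_zero_of_row_eq_zero k fun l => if_neg fun ⟨m, hm, _⟩ => hk m hm.symm

variable [Fintype n]

lemma compound_eq_toMatrix_exteriorPower_map (A : Matrix n n R) :
    compound i A = LinearMap.toMatrix ((Pi.basisFun R n).exteriorPower i)
      ((Pi.basisFun R n).exteriorPower i) (exteriorPower.map i (Matrix.toLin' A)) := by
  ext J I
  rw [LinearMap.toMatrix_apply, exteriorPower.basis_apply, exteriorPower.ιMulti_family,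
    exteriorPower.map_apply_ιMulti, exteriorPower.basis_repr_apply,
    exteriorPower.ιMultiDual_apply_ιMulti, compound, Matrix.of_apply, ← Matrix.det_transpose]
  congr 1
  ext a b
  simp [Matrix.transpose_apply]

lemma compound_mul (A B : Matrix n n R) : compound i (A * B) = compound i A * compound i B := by
  simp only [compound_eq_toMatrix_exteriorPower_map]
  rw [Matrix.toLin'_mul, exteriorPower.map_comp,
    LinearMap.toMatrix_comp _ ((Pi.basisFun R n).exteriorPower i)]

/-- The `i`-th exterior power representation of the monoid of square matrices. -/
def compoundHom (i : ℕ) :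
    Matrix n n R →* Matrix (Set.powersetCard n i) (Set.powersetCard n i) R where
  toFun := compound i
  map_one' := compound_one
  map_mul' := compound_mul

lemma compound_mem_orthogonalGroup {K : Matrix n n R} (hK : K ∈ orthogonalGroup n R) :
    compound i K ∈ orthogonalGroup (Set.powersetCard n i) R := by
  rw [mem_orthogonalGroup_iff] at hK ⊢
  rw [← compound_transpose, ← compound_mul, hK, compound_one]

lemma norm_compound_le {𝕜 : Type*} [NormedField 𝕜] (A : Matrix n n 𝕜) :
    ‖compound i A‖ ≤ i.factorial * ‖A‖ ^ i := by
  refine (norm_le_iff (by positivity)).2 fun I J => ?_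
  refine (norm_det_le _).trans ?_
  rw [Fintype.card_fin]
  gcongr
  exact (norm_le_iff (norm_nonneg _)).2 fun k l => norm_entry_le_entrywise_sup_norm A

end Compound

section Escape

variable {n K R : Type*} [CommRing R] [Field K]

/-- Evaluation at a matrix of a polynomial in the matrix entries. -/
noncomputable def matrixEval (A : Matrix n n R) : MvPolynomial (n × n) R →+* R :=
  MvPolynomial.eval fun ij => A ij.1 ij.2

lemma map_matrixEval_mvPolynomialX (A : Matrix n n R) :
    (mvPolynomialX n n R).map (matrixEval A) = A :=
  Matrix.ext fun i j => MvPolynomial.eval_X (f := fun p : n × n => A p.1 p.2) (i, j)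

lemma matrixEval_smul {D : ℕ} {p : MvPolynomial (n × n) R} (hp : p.IsHomogeneous D) (t : R)
    (A : Matrix n n R) : matrixEval (t • A) p = t ^ D * matrixEval A p := by
  rw [matrixEval, matrixEval, MvPolynomial.eval_eq, MvPolynomial.eval_eq, Finset.mul_sum]
  refine Finset.sum_congr rfl fun m hm => ?_
  have hdeg : ∑ ij ∈ m.support, m ij = D := (hp.degree_eq_sum_deg_support hm).symm
  simp only [Matrix.smul_apply, smul_eq_mul, mul_pow, Finset.prod_mul_distrib,
    Finset.prod_pow_eq_pow_sum, hdeg]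
  ring

/-- The homogeneous polynomials of degree `D` in the matrix entries that vanish on `W`. -/
noncomputable def vanishing (W : Set (Matrix n n K)) (D : ℕ) :
    Submodule K (MvPolynomial (n × n) K) :=
  MvPolynomial.homogeneousSubmodule (n × n) K D ⊓
    ⨅ A ∈ W, LinearMap.ker (MvPolynomial.aeval fun ij : n × n => A ij.1 ij.2).toLinearMap

lemma mem_vanishing {W : Set (Matrix n n K)} {D : ℕ} {p : MvPolynomial (n × n) K} :
    p ∈ vanishing W D ↔ p.IsHomogeneous D ∧ ∀ A ∈ W, matrixEval A p = 0 := by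
  simp [vanishing, matrixEval, MvPolynomial.aeval_eq_eval]

lemma vanishing_anti {W W' : Set (Matrix n n K)} (h : W ⊆ W') (D : ℕ) :
    vanishing W' D ≤ vanishing W D := fun _ hp =>
  mem_vanishing.2 ⟨(mem_vanishing.1 hp).1, fun A hA => (mem_vanishing.1 hp).2 A (h hA)⟩

/-- No nonzero homogeneous polynomial of degree `D` in the matrix entries vanishes on `W`. -/
def EscapesDegree (W : Set (Matrix n n K)) (D : ℕ) : Prop := vanishing W D = ⊥

lemma EscapesDegree.mono {W W' : Set (Matrix n n K)} {D : ℕ} (hW : EscapesDegree W D)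
    (h : W ⊆ W') : EscapesDegree W' D :=
  eq_bot_mono (vanishing_anti h D) hW

lemma EscapesDegree.exists_ne_zero {W : Set (Matrix n n K)} {D : ℕ} (hW : EscapesDegree W D)
    {p : MvPolynomial (n × n) K} (hp : p.IsHomogeneous D) (hp0 : p ≠ 0) :
    ∃ A ∈ W, matrixEval A p ≠ 0 := by
  by_contra! h
  exact hp0 <| (Submodule.mem_bot K).1 <| hW ▸ mem_vanishing.2 ⟨hp, h⟩

lemma EscapesDegree.of_le [Nonempty n] {W : Set (Matrix n n K)} {D D' : ℕ}
    (hW : EscapesDegree W D) (h : D' ≤ D) : EscapesDegree W D' := by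
  refine le_bot_iff.1 fun p hp => ?_
  obtain ⟨hhom, hp⟩ := mem_vanishing.1 hp
  let x : MvPolynomial (n × n) K := MvPolynomial.X (Classical.arbitrary _)
  have hx : x ^ (D - D') * p ∈ vanishing W D := by
    refine mem_vanishing.2 ⟨?_, fun A hA => by rw [map_mul, hp A hA, mul_zero]⟩
    have h1 := (MvPolynomial.isHomogeneous_X K (Classical.arbitrary (n × n))).pow (D - D')
    simpa only [one_mul, Nat.sub_add_cancel h] using h1.mul hhom
  rw [hW, Submodule.mem_bot] at hx
  exact (mul_eq_zero.1 hx).resolve_left (pow_ne_zero _ (MvPolynomial.X_ne_zero _))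

lemma EscapesDegree.nonempty [Nonempty n] {W : Set (Matrix n n K)} {D : ℕ}
    (hW : EscapesDegree W D) : W.Nonempty := by
  obtain ⟨A, hA, -⟩ := (hW.of_le D.zero_le).exists_ne_zero
    (MvPolynomial.isHomogeneous_one (n × n) K) one_ne_zero
  exact ⟨A, hA⟩

variable [Fintype n]

/-- The polynomial `X ↦ p (A * X * B)`. -/
noncomputable def translate (A B : Matrix n n R) :
    MvPolynomial (n × n) R →ₐ[R] MvPolynomial (n × n) R :=
  MvPolynomial.aeval fun ij => (A.map (MvPolynomial.C (σ := n × n)) * mvPolynomialX n n R *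
    B.map (MvPolynomial.C (σ := n × n)) : Matrix n n _) ij.1 ij.2

lemma matrixEval_translate (A B M : Matrix n n R) (p : MvPolynomial (n × n) R) :
    matrixEval M (translate A B p) = matrixEval (A * M * B) p := by
  unfold matrixEval translate
  rw [MvPolynomial.aeval_def, MvPolynomial.hom_eval₂]
  conv_rhs => rw [MvPolynomial.eval, MvPolynomial.coe_eval₂Hom]
  congr 1
  · ext x; simp
  · ext ij; simp [Matrix.mul_apply]

lemma isHomogeneous_translate (A B : Matrix n n R) {D : ℕ} {p : MvPolynomial (n × n) R}
    (hp : p.IsHomogeneous D) : (translate A B p).IsHomogeneous D := by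
  rw [← one_mul D]
  refine hp.aeval _ fun ij => .sum _ _ _ fun k _ => ?_
  simp only [map_apply, Matrix.mul_apply]
  rw [mul_comm]
  refine MvPolynomial.IsHomogeneous.C_mul (.sum _ _ _ fun l _ => ?_) _
  exact MvPolynomial.isHomogeneous_C_mul_X _ _

lemma eq_zero_of_forall_specialLinearGroup [DecidableEq n] [Nonempty n] {D : ℕ}
    {p : MvPolynomial (n × n) ℝ} (hp : p.IsHomogeneous D)
    (h : ∀ g : SpecialLinearGroup n ℝ, matrixEval (g : Matrix n n ℝ) p = 0) : p = 0 := by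
  have hpos (A : Matrix n n ℝ) (hA : 0 < A.det) : matrixEval A p = 0 := by
    obtain ⟨t, ht, htA⟩ : ∃ t > 0, t ^ Fintype.card n = A.det :=
      ⟨A.det ^ (Fintype.card n : ℝ)⁻¹, Real.rpow_pos_of_pos hA _,
        Real.rpow_inv_natCast_pow hA.le Fintype.card_ne_zero⟩
    have hdet : (t⁻¹ • A).det = 1 := by
      rw [det_smul, inv_pow, htA, inv_mul_cancel₀ hA.ne']
    rw [← smul_inv_smul₀ ht.ne' A, matrixEval_smul hp, h ⟨_, hdet⟩, mul_zero]
  have hopen : IsOpen {x : n × n → ℝ | 0 < (Matrix.of fun i j => x (i, j)).det} :=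
    isOpen_lt continuous_const (by fun_prop)
  have hone : (fun ij => (1 : Matrix n n ℝ) ij.1 ij.2) ∈
      {x : n × n → ℝ | 0 < (Matrix.of fun i j => x (i, j)).det} :=
    show 0 < (1 : Matrix n n ℝ).det by simp
  obtain ⟨r, hr, hball⟩ := Metric.nhds_basis_closedBall.mem_iff.1 (hopen.mem_nhds hone)
  refine MvPolynomial.funext_set
    (fun ij => Metric.closedBall ((1 : Matrix n n ℝ) ij.1 ij.2) r) (fun ij => ?_) fun x hx => ?_
  · exact (Real.closedBall_eq_Icc ..).symm ▸ Set.Icc_infinite (by linarith)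
  · rw [map_zero]
    exact hpos _ (hball ((closedBall_pi _ hr.le).superset hx))

lemma mem_vanishing_mul [DecidableEq n] {S W : Set (Matrix n n K)} {D : ℕ}
    {p : MvPolynomial (n × n) K} (hp : p.IsHomogeneous D) :
    p ∈ vanishing (S * W) D ↔ ∀ A ∈ S, translate A 1 p ∈ vanishing W D := by
  simp only [mem_vanishing, hp, isHomogeneous_translate _ _ hp, matrixEval_translate, mul_one,
    true_and, ← Set.image2_mul, Set.forall_mem_image2]

lemma vanishing_pow_stable [DecidableEq n] {S : Set (Matrix n n K)} {D k : ℕ}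
    (h : vanishing (S ^ k) D = vanishing (S ^ (k + 1)) D) :
    vanishing (S ^ (k + 1)) D = vanishing (S ^ (k + 2)) D := by
  ext p
  by_cases hp : p.IsHomogeneous D
  · rw [pow_succ' S (k + 1), mem_vanishing_mul hp, ← h, ← mem_vanishing_mul hp, ← pow_succ', h]
  · simp [mem_vanishing, hp]

lemma apply_finrank_le_of_stable {V : Type*} [AddCommGroup V] [Module K V] {H : Submodule K V}
    [FiniteDimensional K H] {U : ℕ → Submodule K V} (hU : Antitone U) (hH : U 0 ≤ H)
    (hstable : ∀ k, U k = U (k + 1) → U (k + 1) = U (k + 2)) (k : ℕ) :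
    U (Module.finrank K H) ≤ U k := by
  have hfin (j) : FiniteDimensional K (U j) :=
    Submodule.finiteDimensional_of_le ((hU j.zero_le).trans hH)
  have hle (j) : Module.finrank K (U j) ≤ Module.finrank K H :=
    Submodule.finrank_mono ((hU j.zero_le).trans hH)
  have heq {j j' : ℕ} (hj : j ≤ j') (h : Module.finrank K H - Module.finrank K (U j) =
      Module.finrank K H - Module.finrank K (U j')) : U j' = U j :=
    Submodule.eq_of_le_of_finrank_eq (hU hj) (by have := hle j; have := hle j'; lia)
  have hmono : Monotone fun j => Module.finrank K H - Module.finrank K (U j) := fun j j' hj =>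
    Nat.sub_le_sub_left (Submodule.finrank_mono (hU hj)) _
  refine (le_total k (Module.finrank K H)).elim (hU ·) fun hk => (heq hk ?_).ge
  exact (Nat.stabilises_of_monotone hmono (fun j => Nat.sub_le _ _)
    (fun j hj => by rw [hstable j (heq j.le_succ hj).symm]) hk).symm

instance finiteDimensional_homogeneousSubmodule {σ : Type*} [Finite σ] (D : ℕ) :
    FiniteDimensional K (MvPolynomial.homogeneousSubmodule σ K D) :=
  Module.Finite.iff_fg.2 (MvPolynomial.homogeneousSubmodule_fg _ _ _)

lemma exists_mem_pow_of_mem_closure {M : Type*} [Monoid M] {S : Set M} {x : M}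
    (hx : x ∈ Submonoid.closure S) : ∃ k, x ∈ S ^ k := by
  induction hx using Submonoid.closure_induction with
  | mem x hx => exact ⟨1, by simpa using hx⟩
  | one => exact ⟨0, by simp⟩
  | mul x y _ _ hx hy =>
    obtain ⟨⟨k, hk⟩, ⟨l, hl⟩⟩ := And.intro hx hy
    exact ⟨k + l, pow_add S k l ▸ Set.mul_mem_mul hk hl⟩

lemma escapesDegree_pow_finrank [DecidableEq n] {S : Set (Matrix n n K)} (h1 : 1 ∈ S) {D : ℕ}
    (h : EscapesDegree (Submonoid.closure S : Set (Matrix n n K)) D) :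
    EscapesDegree (S ^ Module.finrank K (MvPolynomial.homogeneousSubmodule (n × n) K D)) D := by
  refine le_bot_iff.1 <| h ▸ fun p hp => mem_vanishing.2 ⟨(mem_vanishing.1 hp).1, fun A hA => ?_⟩
  obtain ⟨k, hk⟩ := exists_mem_pow_of_mem_closure hA
  exact (mem_vanishing.1 <| apply_finrank_le_of_stable (U := fun k => vanishing (S ^ k) D)
    (fun _ _ hj => vanishing_anti (Set.pow_subset_pow_right h1 hj) D) inf_le_left
    (fun _ => vanishing_pow_stable) k hp).2 A hk

end Escape

section ReproducingKernel

variable {n R K : Type*} [CommRing R] [Field K]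

/-- The coordinates of the tensor power `A ^ ⊗ D`: all products of `D` entries of `A`. -/
def tensorPow (D : ℕ) (A : Matrix n n R) : (Fin D → n × n) → R :=
  fun f => ∏ k, A (f k).1 (f k).2

lemma tensorPow_transpose (D : ℕ) (A : Matrix n n R) (f : Fin D → n × n) :
    tensorPow D Aᵀ f = tensorPow D A (Prod.swap ∘ f) := rfl

lemma sum_smul_eq_of_tensorPow_one {ι : Type*} [Fintype ι] {w : ι → Matrix n n R} {c : ι → R}
    {A : Matrix n n R} (hA : ∑ j, c j • tensorPow 1 (w j) = tensorPow 1 A) :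
    ∑ j, c j • w j = A := by
  ext a b
  simpa [tensorPow, Matrix.sum_apply] using congrFun hA fun _ => (a, b)

/-- The homogeneous polynomial with tensor of coefficients `c`. -/
noncomputable def tensorPoly [Fintype n] {D : ℕ} (c : (Fin D → n × n) → R) :
    MvPolynomial (n × n) R :=
  ∑ f, MvPolynomial.C (c f) * ∏ k, MvPolynomial.X (f k)

lemma isHomogeneous_tensorPoly [Fintype n] {D : ℕ} (c : (Fin D → n × n) → R) :
    (tensorPoly c).IsHomogeneous D := by
  refine .sum _ _ _ fun f _ => MvPolynomial.IsHomogeneous.C_mul ?_ _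
  simpa using MvPolynomial.IsHomogeneous.prod Finset.univ (fun k => MvPolynomial.X (f k))
    (fun _ => 1) fun k _ => MvPolynomial.isHomogeneous_X R (f k)

lemma matrixEval_tensorPoly [Fintype n] {D : ℕ} (c : (Fin D → n × n) → R) (A : Matrix n n R) :
    matrixEval A (tensorPoly c) = c ⬝ᵥ tensorPow D A := by
  simp [tensorPoly, matrixEval, tensorPow, dotProduct]

lemma exists_eq_tensorPoly [Fintype n] {D : ℕ} {p : MvPolynomial (n × n) R}
    (hp : p.IsHomogeneous D) : ∃ c, p = tensorPoly (D := D) c := by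
  have hspan : p ∈ Submodule.span R (Set.range fun f : Fin D → n × n =>
      ∏ k, (MvPolynomial.X (f k) : MvPolynomial (n × n) R)) := by
    have h := (MvPolynomial.mem_homogeneousSubmodule D p).2 hp
    rw [← MvPolynomial.homogeneousSubmodule_one_pow,
      MvPolynomial.homogeneousSubmodule_one_eq_span_X, Submodule.span_pow] at h
    refine Submodule.span_mono (fun q hq => ?_) h
    obtain ⟨f, rfl⟩ := Set.mem_pow.1 hq
    choose g hg using fun k => (f k).2
    exact ⟨g, by simp [List.prod_ofFn, hg]⟩
  obtain ⟨c, hc⟩ := Submodule.mem_span_range_iff_exists_fun R |>.1 hspan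
  exact ⟨c, by simp only [tensorPoly, ← hc, MvPolynomial.smul_eq_C_mul]⟩

lemma matrixEval_eq_dotProduct [Finite n] {ι : Type*} [Fintype ι] {D : ℕ}
    {p : MvPolynomial (n × n) R} (hp : p.IsHomogeneous D) {w : ι → Matrix n n R} {c : ι → R}
    {A : Matrix n n R} (hA : ∑ j, c j • tensorPow D (w j) = tensorPow D A) :
    matrixEval A p = c ⬝ᵥ fun j => matrixEval (w j) p := by
  cases nonempty_fintype n
  obtain ⟨x, rfl⟩ := exists_eq_tensorPoly hp
  simp only [matrixEval_tensorPoly, ← hA, dotProduct_sum, dotProduct_smul]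
  rfl

lemma EscapesDegree.tensorPow_mem_span [Finite n] {W : Set (Matrix n n K)} {D : ℕ}
    (hW : EscapesDegree W D) (A : Matrix n n K) :
    tensorPow D A ∈ Submodule.span K (tensorPow D '' W) := by
  classical
  cases nonempty_fintype n
  by_contra hA
  obtain ⟨ℓ, hℓA, hℓ⟩ := Submodule.exists_le_ker_of_notMem hA
  obtain ⟨c, rfl⟩ := (dotProductEquiv K (Fin D → n × n)).surjective ℓ
  simp only [dotProductEquiv_apply_apply, ← matrixEval_tensorPoly] at hℓA
  obtain ⟨M, hM, hne⟩ := hW.exists_ne_zero (isHomogeneous_tensorPoly c) fun h0 =>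
    hℓA (by rw [h0, map_zero])
  exact hne ((matrixEval_tensorPoly c M).trans (hℓ (Submodule.subset_span ⟨M, hM, rfl⟩)))

/-- The dimension of the space of symmetric `D`-tensors spanned by the powers `A ^ ⊗ D`. -/
noncomputable def tensorRank (n K : Type*) [Field K] (D : ℕ) : ℕ :=
  Module.finrank K (Submodule.span K (Set.range (tensorPow D : Matrix n n K → _)))

lemma EscapesDegree.exists_basis [Finite n] {W : Set (Matrix n n K)} {D : ℕ}
    (hW : EscapesDegree W D) :
    ∃ w : Fin (tensorRank n K D) → Matrix n n K, (∀ j, w j ∈ W) ∧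
      (LinearIndependent K fun j => tensorPow D (w j)) ∧
      ∀ A, tensorPow D A ∈ Submodule.span K (Set.range fun j => tensorPow D (w j)) := by
  have hspanW : Submodule.span K (tensorPow D '' W) = Submodule.span K (Set.range (tensorPow D)) :=
    le_antisymm (Submodule.span_mono (Set.image_subset_range _ _))
      (Submodule.span_le.2 (Set.range_subset_iff.2 hW.tensorPow_mem_span))
  obtain ⟨v, hv, hvspan, hvli⟩ : ∃ v : Fin (tensorRank n K D) → (Fin D → n × n) → K,
      (∀ j, v j ∈ tensorPow D '' W) ∧
      Submodule.span K (Set.range v) = Submodule.span K (tensorPow D '' W) ∧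
      LinearIndependent K v := by
    rw [tensorRank, ← hspanW]
    exact Submodule.exists_fun_fin_finrank_span_eq K _
  choose w hw hwv using hv
  obtain rfl : (fun j => tensorPow D (w j)) = v := funext hwv
  exact ⟨w, hw, hvli, fun A => hvspan ▸ hW.tensorPow_mem_span A⟩

lemma EscapesDegree.exists_finite_subset [Finite n] {W : Set (Matrix n n K)} {D : ℕ}
    (hW : EscapesDegree W D) : ∃ W' ⊆ W, W'.Finite ∧ EscapesDegree W' D := by
  obtain ⟨w, hw, -, hspan⟩ := hW.exists_basis
  refine ⟨Set.range w, Set.range_subset_iff.2 hw, Set.finite_range w,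
    le_bot_iff.1 <| hW ▸ fun p hp => ?_⟩
  obtain ⟨hhom, hp⟩ := mem_vanishing.1 hp
  refine mem_vanishing.2 ⟨hhom, fun A _ => ?_⟩
  obtain ⟨c, hc⟩ := (Submodule.mem_span_range_iff_exists_fun K).1 (hspan A)
  have hp0 : (fun j => matrixEval (w j) p) = 0 := funext fun j => hp _ ⟨j, rfl⟩
  rw [matrixEval_eq_dotProduct hhom hc, hp0, dotProduct_zero]

variable [Fintype n]

lemma tensorPow_dotProduct_transpose (D : ℕ) (A B : Matrix n n R) :
    tensorPow D A ⬝ᵥ tensorPow D Bᵀ = (A * B).trace ^ D := by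
  have htrace : (A * B).trace = ∑ ij : n × n, A ij.1 ij.2 * B ij.2 ij.1 := by
    simp [Fintype.sum_prod_type, trace, Matrix.mul_apply]
  simp only [htrace, Fintype.sum_pow, dotProduct, tensorPow, transpose_apply,
    Finset.prod_mul_distrib]

/-- The Gram matrix of a family of matrices for the `D`-th power of the trace form. -/
def traceGram {ι : Type*} (D : ℕ) (w : ι → Matrix n n R) : Matrix ι ι R :=
  of fun j k => (w j * w k).trace ^ D

lemma vecMul_traceGram {ι : Type*} [Fintype ι] {D : ℕ} {w : ι → Matrix n n R} {c : ι → R}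
    {A : Matrix n n R} (hA : ∑ j, c j • tensorPow D (w j) = tensorPow D A) :
    c ᵥ* traceGram D w = fun k => (A * w k).trace ^ D := by
  ext k
  rw [← tensorPow_dotProduct_transpose, ← hA, sum_dotProduct]
  simp only [smul_dotProduct, tensorPow_dotProduct_transpose, smul_eq_mul]
  rfl

/-- Transposition permutes coordinates, so a combination of the tensors `(w k)ᵀ ^ ⊗ D` that is
orthogonal to their span is zero. -/
lemma det_traceGram_ne_zero {ι : Type*} [Fintype ι] [DecidableEq ι] {D : ℕ}
    {w : ι → Matrix n n ℝ} (hw : LinearIndependent ℝ fun j => tensorPow D (w j))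
    (hspan : ∀ A, tensorPow D A ∈ Submodule.span ℝ (Set.range fun j => tensorPow D (w j))) :
    (traceGram D w).det ≠ 0 := by
  intro h0
  obtain ⟨x, hx, hGx⟩ := exists_mulVec_eq_zero_iff.2 h0
  set y := ∑ k, x k • tensorPow D (w k)ᵀ with hy
  have horth {v} (hv : v ∈ Submodule.span ℝ (Set.range fun j => tensorPow D (w j))) :
      v ⬝ᵥ y = 0 := by
    induction hv using Submodule.span_induction with
    | mem v hv =>
      obtain ⟨j, rfl⟩ := hv
      refine Eq.trans ?_ (congrFun hGx j)
      simp only [hy, dotProduct_sum, dotProduct_smul, tensorPow_dotProduct_transpose, smul_eq_mul,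
        mul_comm (x _)]
      rfl
    | zero => exact zero_dotProduct y
    | add u v _ _ hu hv => rw [add_dotProduct, hu, hv, add_zero]
    | smul a u _ hu => rw [smul_dotProduct, hu, smul_zero]
  have hy0 : y = 0 := by
    refine dotProduct_self_eq_zero.1 ((congrArg (· ⬝ᵥ y) hy).trans ?_)
    simp only [sum_dotProduct, smul_dotProduct, horth (hspan _), smul_zero, Finset.sum_const_zero]
  refine hx (funext (Fintype.linearIndependent_iff.1 hw x (funext fun f => ?_)))
  simpa [hy, tensorPow_transpose, Function.comp_def] using congrFun hy0 (Prod.swap ∘ f)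

end ReproducingKernel

section IntegralRepresentation

variable {n : Type*} [Fintype n]

lemma abs_trace_mul_le (A B : Matrix n n ℝ) :
    |(A * B).trace| ≤ Fintype.card n ^ 2 * ‖A‖ * ‖B‖ := by
  calc |∑ i, (A * B) i i| ≤ ∑ _i : n, Fintype.card n * ‖A‖ * ‖B‖ :=
        norm_sum_le_of_le _ fun i _ =>
          (norm_entry_le_entrywise_sup_norm _).trans (norm_mul_le_card_mul A B)
    _ = Fintype.card n ^ 2 * ‖A‖ * ‖B‖ := by
        rw [Finset.sum_const, Finset.card_univ, nsmul_eq_mul]; ring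

variable [DecidableEq n]

/-- The inclusion of `Matrix.SpecialLinearGroup n ℤ` into the real matrices, conjugated by `P`. -/
def conjHom (P : GL n ℝ) : Matrix.SpecialLinearGroup n ℤ →* Matrix n n ℝ :=
  (Units.coeHom _).comp ((MulAut.conj P).toMonoidHom.comp (SpecialLinearGroup.mapGL ℝ))

lemma conjHom_apply (P : GL n ℝ) (g : Matrix.SpecialLinearGroup n ℤ) :
    conjHom P g = (P : Matrix n n ℝ) * (g : Matrix n n ℤ).map (↑) * (↑P⁻¹ : Matrix n n ℝ) := rfl

lemma conjHom_one_apply (g : Matrix.SpecialLinearGroup n ℤ) :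
    conjHom 1 g = (g : Matrix n n ℤ).map (↑) := by
  simp [conjHom_apply]

lemma conjHom_eq (P : GL n ℝ) (g : Matrix.SpecialLinearGroup n ℤ) :
    conjHom P g = (P : Matrix n n ℝ) * conjHom 1 g * (↑P⁻¹ : Matrix n n ℝ) := by
  rw [conjHom_one_apply, conjHom_apply]

lemma trace_conjHom (P : GL n ℝ) (g : Matrix.SpecialLinearGroup n ℤ) :
    (conjHom P g).trace = ((g : Matrix n n ℤ).trace : ℝ) := by
  rw [conjHom_apply, trace_units_conj]
  exact (AddMonoidHom.map_trace (Int.castRingHom ℝ) _).symm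

lemma det_conjHom (P : GL n ℝ) (g : Matrix.SpecialLinearGroup n ℤ) : (conjHom P g).det = 1 := by
  rw [conjHom_apply, det_units_conj]
  exact (SpecialLinearGroup.map (Int.castRingHom ℝ) g).det_coe

lemma conjHom_inv (P : GL n ℝ) (g : Matrix.SpecialLinearGroup n ℤ) :
    conjHom P g⁻¹ = (conjHom P g).adjugate := by
  refine left_inv_eq_right_inv (a := conjHom P g) ?_ ?_
  · rw [← map_mul, inv_mul_cancel, map_one]
  · rw [mul_adjugate, det_conjHom, one_smul]

lemma EscapesDegree.conj {W : Set (Matrix.SpecialLinearGroup n ℤ)} {D : ℕ}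
    (hW : EscapesDegree (conjHom 1 '' W) D)
    (P : GL n ℝ) : EscapesDegree (conjHom P '' W) D := by
  refine le_bot_iff.1 fun p hp => ?_
  obtain ⟨hhom, hp⟩ := mem_vanishing.1 hp
  have hp' : translate (P : Matrix n n ℝ) (↑P⁻¹ : Matrix n n ℝ) p ∈
      vanishing (conjHom 1 '' W) D := by
    refine mem_vanishing.2
      ⟨isHomogeneous_translate _ _ hhom, Set.forall_mem_image.2 fun g hg => ?_⟩
    rw [matrixEval_translate, ← conjHom_eq, hp _ ⟨g, hg, rfl⟩]
  rw [hW, Submodule.mem_bot] at hp'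
  refine (Submodule.mem_bot ℝ).2 (MvPolynomial.funext fun x => ?_)
  have hx := matrixEval_translate (P : Matrix n n ℝ) (↑P⁻¹ : Matrix n n ℝ)
    ((↑P⁻¹ : Matrix n n ℝ) * (of fun i j => x (i, j)) * (P : Matrix n n ℝ)) p
  rw [hp', map_zero, Matrix.mul_assoc, Units.mul_inv_cancel_right, Units.mul_inv_cancel_left] at hx
  simpa using! hx.symm

lemma one_le_norm_det_traceGram {ι : Type*} [Fintype ι] [DecidableEq ι] {P : GL n ℝ} {D : ℕ}
    {w : ι → Matrix.SpecialLinearGroup n ℤ} (h : (traceGram D fun j => conjHom P (w j)).det ≠ 0) :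
    1 ≤ ‖(traceGram D fun j => conjHom P (w j)).det‖ := by
  have hint : (traceGram D fun j => conjHom P (w j)).det =
      ((traceGram D fun j => (w j : Matrix n n ℤ)).det : ℝ) := by
    refine Eq.trans (congrArg det (Matrix.ext fun j k => ?_)) (Int.cast_det _).symm
    simp [traceGram, ← map_mul, trace_conjHom]
  rw [hint] at h ⊢
  rw [Real.norm_eq_abs]
  exact_mod_cast Int.one_le_abs (Int.cast_ne_zero.1 h)

/-- The coefficients solve a linear system with integral determinant, so they are bounded
polynomially in terms of the traces alone. -/
lemma EscapesDegree.exists_reproducing {W : Set (Matrix.SpecialLinearGroup n ℤ)} {D : ℕ}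
    (hW : EscapesDegree (conjHom 1 '' W) D) (P : GL n ℝ) :
    ∃ w : Fin (tensorRank n ℝ D) → Matrix.SpecialLinearGroup n ℤ, (∀ j, w j ∈ W) ∧
      ∀ (T : ℝ) (A : Matrix n n ℝ), 1 ≤ T →
      ‖traceGram D fun j => conjHom P (w j)‖ ≤ T →
      ‖fun k => (A * conjHom P (w k)).trace ^ D‖ ≤ T →
      ∃ c : Fin (tensorRank n ℝ D) → ℝ,
        ‖c‖ ≤ tensorRank n ℝ D * ((tensorRank n ℝ D).factorial * T ^ tensorRank n ℝ D) * T ∧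
        ∑ j, c j • tensorPow D (conjHom P (w j)) = tensorPow D A := by
  obtain ⟨v, hv, hli, hspan⟩ := (hW.conj P).exists_basis
  choose w hw hwv using hv
  obtain rfl : (fun j => conjHom P (w j)) = v := funext hwv
  refine ⟨w, hw, fun T A hT hG hy => ?_⟩
  have hdet := one_le_norm_det_traceGram (det_traceGram_ne_zero hli hspan)
  obtain ⟨c, hc⟩ := (Submodule.mem_span_range_iff_exists_fun ℝ).1 (hspan A)
  refine ⟨c, ?_, hc⟩
  simpa using norm_le_of_vecMul_eq hT hdet hG hy (vecMul_traceGram hc)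

end IntegralRepresentation

section QuantitativeEscape

variable {n : Type*} [Fintype n]

lemma abs_trace_mul_pow_le {A X : Matrix n n ℝ} {B : ℝ} (hA : ‖A‖ ≤ B) (hX : ‖X‖ ≤ B) (D : ℕ) :
    ‖(A * X).trace ^ D‖ ≤ (Fintype.card n ^ 2 * B ^ 2) ^ D := by
  rw [norm_pow]
  refine pow_le_pow_left₀ (norm_nonneg _) ((abs_trace_mul_le A X).trans ?_) D
  rw [mul_assoc, pow_two B]
  gcongr
  exact (norm_nonneg A).trans hA

lemma exists_mem_forall_apply_le {α ι : Type*} [Finite ι] {W : Set α} (hW : W.Nonempty)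
    {w : ι → α} (hw : ∀ j, w j ∈ W) (φ : α → ℝ) : ∃ f ∈ W, ∀ j, φ (w j) ≤ φ f := by
  rcases isEmpty_or_nonempty ι with _ | _
  · exact hW.imp fun f hf => ⟨hf, isEmptyElim⟩
  · obtain ⟨j, hj⟩ := Finite.exists_max (φ ∘ w)
    exact ⟨w j, hw j, hj⟩

variable [DecidableEq n]

lemma exists_abs_matrixEval_le (n : Type*) [Fintype n] [DecidableEq n] [Nonempty n] (D : ℕ) :
    ∃ C : ℕ, ∀ (W : Set (Matrix.SpecialLinearGroup n ℤ)) (P : GL n ℝ) (B : ℝ), 1 ≤ B →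
      EscapesDegree (conjHom 1 '' W) D → (∀ f ∈ W, ‖conjHom P f‖ ≤ B) →
      ∀ (p : MvPolynomial (n × n) ℝ) (A : Matrix n n ℝ), p.IsHomogeneous D → ‖A‖ ≤ 1 →
      ∃ f ∈ W, |matrixEval A p| ≤ C * B ^ C * |matrixEval (conjHom P f) p| := by
  set N := tensorRank n ℝ D
  set m := Fintype.card n ^ 2
  have hm : 1 ≤ m := Nat.one_le_pow _ _ Fintype.card_pos
  refine ⟨N ^ 2 * N.factorial * m ^ (D * (N + 1)) + 2 * (D * (N + 1)),
    fun W P B hB hW hWB p A hp hA => ?_⟩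
  obtain ⟨w, hw, hrep⟩ := hW.exists_reproducing P
  obtain ⟨f, hf, hmax⟩ := exists_mem_forall_apply_le (Set.image_nonempty.1 hW.nonempty) hw
    fun f => |matrixEval (conjHom P f) p|
  refine ⟨f, hf, ?_⟩
  have hwB (j) : ‖conjHom P (w j)‖ ≤ B := hWB _ (hw j)
  have hT : 1 ≤ (m * B ^ 2) ^ D :=
    one_le_pow₀ (one_le_mul_of_one_le_of_one_le (by exact_mod_cast hm) (one_le_pow₀ hB))
  obtain ⟨c, hc, hcA⟩ := hrep ((m * B ^ 2) ^ D) A hT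
    ((norm_le_iff (by positivity)).2 fun j k => by
      push_cast [m]; exact abs_trace_mul_pow_le (hwB j) (hwB k) D)
    ((pi_norm_le_iff_of_nonneg (by positivity)).2 fun k => by
      push_cast [m]; exact abs_trace_mul_pow_le (hA.trans hB) (hwB k) D)
  calc |matrixEval A p|
      ≤ N * ‖c‖ * ‖fun j => matrixEval (conjHom P (w j)) p‖ := by
        rw [matrixEval_eq_dotProduct hp hcA]
        simpa using! norm_dotProduct_le c _
    _ ≤ N * (N * (N.factorial * ((m * B ^ 2) ^ D) ^ N) * (m * B ^ 2) ^ D) *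
        |matrixEval (conjHom P f) p| := by
        gcongr
        exact (pi_norm_le_iff_of_nonneg (abs_nonneg _)).2 hmax
    _ = (N ^ 2 * N.factorial * m ^ (D * (N + 1)) : ℕ) * B ^ (2 * (D * (N + 1))) *
        |matrixEval (conjHom P f) p| := by
        push_cast; ring
    _ ≤ _ := by
        gcongr <;> first | exact hB | simp

lemma exists_frame_of_span_eq_top {ι : Type*} [Finite ι] {v : ι → n → ℝ}
    (hv : Submodule.span ℝ (Set.range v) = ⊤) :
    ∃ J : n → ι, (of fun i m => v (J m) i).det ≠ 0 := by
  obtain ⟨f, hf, -, hli⟩ := Submodule.exists_fun_fin_finrank_span_eq ℝ (Set.range v)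
  choose J hJ using hf
  have e : n ≃ Fin (Module.finrank ℝ (Submodule.span ℝ (Set.range v))) :=
    Fintype.equivOfCardEq (by rw [hv, finrank_top, Module.finrank_fintype_fun_eq_card,
      Fintype.card_fin])
  refine ⟨J ∘ e, IsUnit.ne_zero ((isUnit_iff_isUnit_det _).1 ?_)⟩
  refine linearIndependent_cols_iff_isUnit.1 ?_
  simpa [Function.comp_def, hJ] using! hli.comp e e.injective

/-- The frame of largest determinant: by Cramer's rule all other vectors have coordinates at most
one in it. -/
lemma exists_frame_norm_inv_mulVec_le {ι : Type*} [Finite ι] {v : ι → n → ℝ}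
    (hv : Submodule.span ℝ (Set.range v) = ⊤) :
    ∃ P : GL n ℝ, (∀ m, (P : Matrix n n ℝ) *ᵥ Pi.single m 1 ∈ Set.range v) ∧
      ∀ l, ‖(↑P⁻¹ : Matrix n n ℝ) *ᵥ v l‖ ≤ 1 := by
  obtain ⟨J₀, hJ₀⟩ := exists_frame_of_span_eq_top hv
  let F (J : n → ι) : Matrix n n ℝ := of fun i m => v (J m) i
  have : Nonempty (n → ι) := ⟨J₀⟩
  obtain ⟨J, hJ⟩ := Finite.exists_max fun J => |(F J).det|
  have hdet : 0 < |(F J).det| := (abs_pos.2 hJ₀).trans_le (hJ J₀)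
  let P : GL n ℝ := GeneralLinearGroup.mkOfDetNeZero (F J) (abs_pos.1 hdet)
  refine ⟨P, fun m => ⟨J m, ?_⟩, fun l => (pi_norm_le_iff_of_nonneg zero_le_one).2 fun i => ?_⟩
  · rw [mulVec_single_one]; rfl
  have hupdate : (F J).updateCol i (v l) = F (Function.update J i l) := by
    ext a b
    rcases eq_or_ne b i with rfl | hb <;> simp [F, *]
  have hcramer : (F J).det * ((↑P⁻¹ : Matrix n n ℝ) *ᵥ v l) i =
      (F (Function.update J i l)).det := by
    rw [← hupdate, ← cramer_apply, ← smul_eq_mul, ← Pi.smul_apply, ← mulVec_smul, ← mulVec_cramer,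
      mulVec_mulVec]
    exact congrFun ((congrArg (· *ᵥ _) P.inv_mul).trans (one_mulVec _)) i
  have hle := hJ (Function.update J i l)
  rw [← hcramer, abs_mul] at hle
  exact (mul_le_iff_le_one_right hdet).1 hle

lemma exists_norm_conj_le_of_span_eq_top {ι : Type*} [Fintype ι] {v : ι → n → ℝ}
    (hv : Submodule.span ℝ (Set.range v) = ⊤) :
    ∃ P : GL n ℝ, ∀ (A : Matrix n n ℝ) (x : ℝ),
      (∀ k, ∃ c : ι → ℝ, ‖c‖ ≤ x ∧ A *ᵥ v k = ∑ l, c l • v l) → 0 ≤ x →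
      ‖(P : Matrix n n ℝ) * A * (↑P⁻¹ : Matrix n n ℝ)‖ ≤ Fintype.card ι * x := by
  obtain ⟨P, hP, hPle⟩ := exists_frame_norm_inv_mulVec_le hv
  refine ⟨P⁻¹, fun A x hA hx => (norm_le_iff (by positivity)).2 fun i m => ?_⟩
  obtain ⟨k, hk⟩ := hP m
  obtain ⟨c, hc, hcA⟩ := hA k
  set M := (↑P⁻¹ : Matrix n n ℝ) * A * (↑P⁻¹⁻¹ : Matrix n n ℝ) with hM
  have hcol : M.col m = ∑ l, c l • ((↑P⁻¹ : Matrix n n ℝ) *ᵥ v l) := by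
    rw [← mulVec_single_one, hM, inv_inv, ← mulVec_mulVec, ← mulVec_mulVec, ← hk, hcA, mulVec_sum]
    simp only [mulVec_smul]
  calc ‖M i m‖ ≤ ‖M.col m‖ := norm_le_pi_norm (M.col m) i
    _ ≤ ∑ _l : ι, x * 1 := by
        rw [hcol]
        refine norm_sum_le_of_le _ fun l _ => ?_
        rw [norm_smul]
        gcongr
        exacts [(norm_le_pi_norm c l).trans hc, hPle l]
    _ = Fintype.card ι * x := by rw [Finset.sum_const, Finset.card_univ, nsmul_eq_mul, mul_one]

lemma span_range_mulVec_single_eq_top {R ι : Type*} [CommRing R] [Fintype ι]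
    {w : ι → Matrix n n R} (hw : ∀ A, ∃ c : ι → R, ∑ l, c l • w l = A) (i : n) :
    Submodule.span R (Set.range fun l => w l *ᵥ Pi.single i 1) = ⊤ := by
  refine (Submodule.eq_top_iff').2 fun x => ?_
  let A : Matrix n n R := of fun j _ => x j
  obtain ⟨c, hc⟩ := hw A
  have hx : x = ∑ l, c l • (w l *ᵥ Pi.single i 1) := by
    simp only [← smul_mulVec, ← sum_mulVec, hc]
    exact (mulVec_single_one A i).symm
  rw [hx]
  exact Submodule.sum_mem _ fun l _ => Submodule.smul_mem _ _ (Submodule.subset_span ⟨l, rfl⟩)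

lemma exists_norm_conjHom_le (n : Type*) [Fintype n] [DecidableEq n] [Nonempty n] :
    ∃ C : ℕ, ∀ (S W : Set (Matrix.SpecialLinearGroup n ℤ)) (T : ℝ), 1 ∈ S → 1 ≤ T →
      EscapesDegree (conjHom 1 '' W) 1 →
      (∀ f ∈ S * (W * W), |((f : Matrix n n ℤ).trace : ℝ)| ≤ T) →
      ∃ P : GL n ℝ, ∀ s ∈ S, ‖conjHom P s‖ ≤ C * T ^ C := by
  set N := tensorRank n ℝ 1
  refine ⟨N * (N * N.factorial) + (N + 1), fun S W T h1 hT hW htr => ?_⟩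
  obtain ⟨w, hw, hrep⟩ := hW.exists_reproducing 1
  have hcoeff (f) (hf : f ∈ S * W) : ∃ c : Fin N → ℝ,
      ‖c‖ ≤ N * (N.factorial * T ^ N) * T ∧ ∑ l, c l • conjHom 1 (w l) = conjHom 1 f := by
    have hpair {f} (hf : f ∈ S * W) (k) : ‖(conjHom 1 f * conjHom 1 (w k)).trace ^ 1‖ ≤ T := by
      rw [pow_one, ← map_mul, trace_conjHom]
      exact htr _ (mul_assoc S W W ▸ Set.mul_mem_mul hf (hw k))
    obtain ⟨c, hc, hcA⟩ := hrep T (conjHom 1 f) hT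
      ((norm_le_iff (by positivity)).2 fun j k =>
        hpair (one_mul (w j) ▸ Set.mul_mem_mul h1 (hw j)) k)
      ((pi_norm_le_iff_of_nonneg (by positivity)).2 fun k => hpair hf k)
    exact ⟨c, hc, sum_smul_eq_of_tensorPow_one hcA⟩
  obtain ⟨P, hP⟩ := exists_norm_conj_le_of_span_eq_top <|
    span_range_mulVec_single_eq_top (w := fun l => conjHom 1 (w l)) (fun A =>
      let ⟨c, _, hc⟩ := hrep (max 1 (max _ _)) A (le_max_left _ _)
        ((le_max_left _ _).trans (le_max_right _ _)) ((le_max_right _ _).trans (le_max_right _ _))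
      ⟨c, sum_smul_eq_of_tensorPow_one hc⟩) (Classical.arbitrary n)
  refine ⟨P, fun s hs => ?_⟩
  calc ‖conjHom P s‖ ≤ Fintype.card (Fin N) * (N * (N.factorial * T ^ N) * T) := by
        rw [conjHom_eq]
        refine hP _ _ (fun k => ?_) (by positivity)
        obtain ⟨c, hc, hcs⟩ := hcoeff (s * w k) (Set.mul_mem_mul hs (hw k))
        refine ⟨c, hc, ?_⟩
        rw [mulVec_mulVec, ← map_mul, ← hcs]
        simp only [sum_mulVec, smul_mulVec]
        rfl
    _ = (N * (N * N.factorial) : ℕ) * T ^ (N + 1) := by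
        rw [Fintype.card_fin]
        push_cast; ring
    _ ≤ _ := mul_le_mul (Nat.cast_le.2 (Nat.le_add_right _ _))
        (pow_le_pow_right₀ hT (Nat.le_add_left _ _)) (by positivity) (Nat.cast_nonneg _)

end QuantitativeEscape

section ZariskiDense

variable {n : Type*} [Fintype n] [DecidableEq n]

/-- Zariski density of a subgroup of `SL_n(ℝ)`, tested on polynomials in the matrix entries. -/
def IsZariskiDense (H : Subgroup (Matrix.SpecialLinearGroup n ℝ)) : Prop :=
  ∀ p : MvPolynomial (n × n) ℝ,
    (∀ g ∈ H, matrixEval (g : Matrix n n ℝ) p = 0) →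
      ∀ g : Matrix.SpecialLinearGroup n ℝ, matrixEval (g : Matrix n n ℝ) p = 0

lemma escapesDegree_of_isZariskiDense [Nonempty n] {H : Subgroup (Matrix.SpecialLinearGroup n ℝ)}
    (hH : IsZariskiDense H) (D : ℕ) :
    EscapesDegree ((↑) '' (H : Set (Matrix.SpecialLinearGroup n ℝ)) : Set (Matrix n n ℝ)) D := by
  refine le_bot_iff.1 fun p hp => ?_
  obtain ⟨hhom, hp⟩ := mem_vanishing.1 hp
  exact (Submodule.mem_bot ℝ).2 <| eq_zero_of_forall_specialLinearGroup hhom <|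
    hH p fun g hg => hp _ ⟨g, hg, rfl⟩

lemma escapesDegree_pow_of_isZariskiDense [Nonempty n] {S : Set (Matrix.SpecialLinearGroup n ℤ)}
    (h1 : 1 ∈ S) (hinv : ∀ s ∈ S, s⁻¹ ∈ S)
    (hS : IsZariskiDense
      (Subgroup.closure (Matrix.SpecialLinearGroup.map (Int.castRingHom ℝ) '' S))) (D : ℕ) :
    EscapesDegree
      (conjHom 1 '' (S ^ Module.finrank ℝ (MvPolynomial.homogeneousSubmodule (n × n) ℝ D))) D := by
  rw [Set.image_pow]
  have h1' : (1 : Matrix n n ℝ) ∈ conjHom 1 '' S := ⟨1, h1, map_one _⟩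
  refine escapesDegree_pow_finrank h1' ((escapesDegree_of_isZariskiDense hS D).mono ?_)
  rintro _ ⟨g, hg, rfl⟩
  rw [← MonoidHom.map_closure, SetLike.mem_coe, Subgroup.mem_map] at hg
  obtain ⟨f, hf, rfl⟩ := hg
  have hSinv : S⁻¹ ⊆ S := fun s hs => inv_inv s ▸ hinv _ hs
  rw [← Subgroup.mem_toSubmonoid, Subgroup.closure_toSubmonoid, Set.union_eq_left.2 hSinv] at hf
  rw [SetLike.mem_coe, ← MonoidHom.map_mclosure]
  exact ⟨f, hf, conjHom_one_apply f⟩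

end ZariskiDense

section LargeTrace

variable {n : Type*} [Fintype n] [DecidableEq n]

lemma isHomogeneous_det {σ R : Type*} [CommRing R] {A : Matrix n n (MvPolynomial σ R)} {D : n → ℕ}
    (hA : ∀ i j, (A i j).IsHomogeneous (D i)) : A.det.IsHomogeneous (∑ i, D i) := by
  rw [det_apply']
  refine .sum _ _ _ fun τ _ => ?_
  have hτ := MvPolynomial.IsHomogeneous.prod Finset.univ (fun i => A (τ i) i) (fun i => D (τ i))
    fun i _ => hA (τ i) i
  rw [Equiv.sum_comp τ D] at hτ
  simpa using hτ.C_mul ((Equiv.Perm.sign τ : ℤ) : R)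

/-- A homogeneous polynomial which on `SL_n` cuts out the matrices whose trace is an integer of
absolute value at most `R`; the `n`-th powers and the determinant are there for homogeneity. -/
noncomputable def smallTracePoly (n : Type*) [Fintype n] [DecidableEq n] (R : ℕ) :
    MvPolynomial (n × n) ℝ :=
  ∏ j ∈ Finset.Icc (-R : ℤ) R, ((mvPolynomialX n n ℝ).trace ^ Fintype.card n -
    MvPolynomial.C ((j : ℝ) ^ Fintype.card n) * (mvPolynomialX n n ℝ).det)

lemma isHomogeneous_smallTracePoly (R : ℕ) :
    (smallTracePoly n R).IsHomogeneous (∑ _j ∈ Finset.Icc (-R : ℤ) R, Fintype.card n) := by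
  refine .prod _ _ _ fun j _ => ?_
  have hX (i j : n) : (mvPolynomialX n n ℝ i j).IsHomogeneous 1 :=
    MvPolynomial.isHomogeneous_X ℝ (i, j)
  have htrace : (mvPolynomialX n n ℝ).trace.IsHomogeneous 1 := .sum _ _ _ fun i _ => hX i i
  refine .sub (by simpa only [one_mul] using htrace.pow (Fintype.card n)) (.C_mul ?_ _)
  simpa using isHomogeneous_det (D := 1) hX

lemma matrixEval_smallTracePoly (R : ℕ) (A : Matrix n n ℝ) :
    matrixEval A (smallTracePoly n R) = ∏ j ∈ Finset.Icc (-R : ℤ) R,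
      (A.trace ^ Fintype.card n - (j : ℝ) ^ Fintype.card n * A.det) := by
  have htrace : matrixEval A (mvPolynomialX n n ℝ).trace = A.trace := by
    exact (AddMonoidHom.map_trace (matrixEval A) _).trans
      (congrArg trace (map_matrixEval_mvPolynomialX A))
  have hdet : matrixEval A (mvPolynomialX n n ℝ).det = A.det := by
    rw [RingHom.map_det]
    exact congrArg det (map_matrixEval_mvPolynomialX A)
  have hC (x : ℝ) : matrixEval A (MvPolynomial.C x) = x := MvPolynomial.eval_C x
  simp only [smallTracePoly, map_prod, map_sub, map_mul, map_pow, htrace, hdet, hC]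

lemma smallTracePoly_ne_zero [Nontrivial n] (R : ℕ) : smallTracePoly n R ≠ 0 := by
  intro h
  obtain ⟨i, k, hik⟩ := exists_pair_ne n
  have hdet : (single i i (1 : ℝ)).det = 0 :=
    det_eq_zero_of_row_eq_zero k fun j => by simp [hik]
  have heval := matrixEval_smallTracePoly R (single i i (1 : ℝ))
  simp [h, hdet] at heval

lemma exists_lt_abs_trace (n : Type*) [Fintype n] [DecidableEq n] [Nontrivial n] (R : ℕ) :
    ∃ D : ℕ, ∀ W : Set (Matrix.SpecialLinearGroup n ℤ), EscapesDegree (conjHom 1 '' W) D →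
      ∃ f ∈ W, (R : ℤ) < |(f : Matrix n n ℤ).trace| := by
  refine ⟨∑ _j ∈ Finset.Icc (-R : ℤ) R, Fintype.card n, fun W hW => ?_⟩
  obtain ⟨_, ⟨f, hf, rfl⟩, hne⟩ :=
    hW.exists_ne_zero (isHomogeneous_smallTracePoly R) (smallTracePoly_ne_zero R)
  refine ⟨f, hf, ?_⟩
  by_contra! hle
  rw [matrixEval_smallTracePoly, det_conjHom, trace_conjHom] at hne
  exact hne (Finset.prod_eq_zero (Finset.mem_Icc.2 (abs_le.1 hle)) (by ring))

end LargeTrace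

section Transversality

lemma exists_matrixEval_ne_zero {n : Type*} {q : MvPolynomial (n × n) ℝ} (hq : q ≠ 0) :
    ∃ A : Matrix n n ℝ, matrixEval A q ≠ 0 := by
  by_contra! h
  exact hq (MvPolynomial.funext fun x => by simpa using! h (of fun i j => x (i, j)))

lemma exists_norm_le_one_matrixEval_ne_zero {n : Type*} [Fintype n]
    {q : MvPolynomial (n × n) ℝ} {D : ℕ} (hq : q.IsHomogeneous D) (hq0 : q ≠ 0) :
    ∃ A : Matrix n n ℝ, ‖A‖ ≤ 1 ∧ matrixEval A q ≠ 0 := by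
  obtain ⟨A, hA⟩ := exists_matrixEval_ne_zero hq0
  have hpos : 0 < 1 + ‖A‖ := by positivity
  refine ⟨(1 + ‖A‖)⁻¹ • A, ?_, ?_⟩
  · rw [norm_smul, norm_inv, Real.norm_of_nonneg hpos.le]
    exact inv_mul_le_one_of_le₀ (by linarith) hpos.le
  · rw [matrixEval_smul hq]
    exact mul_ne_zero (pow_ne_zero _ (inv_ne_zero hpos.ne')) hA

/-- `A` or its adjugate, according to `b`; on `SL_n` the adjugate is the inverse. -/
def adjugateIf {n R : Type*} [Fintype n] [DecidableEq n] [CommRing R] (b : Bool)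
    (A : Matrix n n R) : Matrix n n R :=
  bif b then A.adjugate else A

lemma adjugateIf_map {n R R' : Type*} [Fintype n] [DecidableEq n] [CommRing R] [CommRing R']
    (f : R →+* R') (b : Bool) (A : Matrix n n R) :
    (adjugateIf b A).map f = adjugateIf b (A.map f) := by
  cases b
  · rfl
  · exact f.map_adjugate A

lemma isHomogeneous_adjugateIf (n R : Type*) [Fintype n] [DecidableEq n] [CommRing R] (b : Bool)
    (i j : n) :
    (adjugateIf b (mvPolynomialX n n R) i j).IsHomogeneous
      (bif b then Fintype.card n - 1 else 1) := by
  have hX (k l : n) : (mvPolynomialX n n R k l).IsHomogeneous 1 :=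
    MvPolynomial.isHomogeneous_X R (k, l)
  cases b
  · exact hX i j
  · have hdet := isHomogeneous_det (A := (mvPolynomialX n n R).updateRow j (Pi.single i 1))
      (D := fun k => if k = j then 0 else 1) fun k l => ?_
    · simpa [adjugateIf, adjugate_apply, Finset.sum_ite, Finset.filter_ne'] using hdet
    · rcases eq_or_ne k j with rfl | hk
      · rw [updateRow_self, if_pos rfl, Pi.single_apply]
        split_ifs
        exacts [MvPolynomial.isHomogeneous_one _ _, MvPolynomial.isHomogeneous_zero _ _ _]
      · simpa only [updateRow_ne hk, if_neg hk] using hX k l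

variable {n : Type*} [Fintype n] [LinearOrder n] {i : ℕ}

/-- The matrix coefficient of the `i`-th compound of the generic matrix, or of its adjugate, as a
polynomial in the matrix entries. -/
noncomputable def coeffPoly (b : Bool) (ξ p : Set.powersetCard n i → ℝ) :
    MvPolynomial (n × n) ℝ :=
  (MvPolynomial.C ∘ ξ) ⬝ᵥ
    compound i (adjugateIf b (mvPolynomialX n n ℝ)) *ᵥ (MvPolynomial.C ∘ p)

lemma matrixEval_coeffPoly (b : Bool) (ξ p : Set.powersetCard n i → ℝ) (A : Matrix n n ℝ) :
    matrixEval A (coeffPoly b ξ p) = ξ ⬝ᵥ compound i (adjugateIf b A) *ᵥ p := by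
  have hC (v : Set.powersetCard n i → ℝ) : matrixEval A ∘ MvPolynomial.C ∘ v = v :=
    funext fun I => MvPolynomial.eval_C (v I)
  rw [coeffPoly, RingHom.map_dotProduct, hC]
  congr 1
  ext I
  rw [Function.comp_apply, RingHom.map_mulVec, hC, ← compound_map, adjugateIf_map,
    map_matrixEval_mvPolynomialX]

lemma isHomogeneous_coeffPoly (b : Bool) (ξ p : Set.powersetCard n i → ℝ) :
    (coeffPoly b ξ p).IsHomogeneous (i * bif b then Fintype.card n - 1 else 1) := by
  refine .sum _ _ _ fun I _ => .C_mul (.sum _ _ _ fun J _ => ?_) _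
  rw [mul_comm]
  refine .C_mul ?_ _
  simpa using! isHomogeneous_det (n := Fin i) fun k l => isHomogeneous_adjugateIf n ℝ b _ _

lemma coeffPoly_false_ne_zero {ξ p : Set.powersetCard n i → ℝ} (hξ : ξ ≠ 0) (hp : p ≠ 0) :
    coeffPoly false ξ p ≠ 0 := by
  obtain ⟨I, hI⟩ := Function.ne_iff.1 hξ
  obtain ⟨J, hJ⟩ := Function.ne_iff.1 hp
  obtain ⟨A, hA⟩ := exists_compound_eq_single (R := ℝ) I J
  intro h
  have hev := matrixEval_coeffPoly false ξ p A
  rw [h, map_zero, adjugateIf, cond_false, hA, single_mulVec_eq, dotProduct_smul] at hev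
  exact mul_ne_zero hJ hI (by simpa using hev.symm)

lemma coeffPoly_ne_zero [Nontrivial n] (b : Bool) {ξ p : Set.powersetCard n i → ℝ} (hξ : ξ ≠ 0)
    (hp : p ≠ 0) : coeffPoly b ξ p ≠ 0 := by
  cases b
  · exact coeffPoly_false_ne_zero hξ hp
  obtain ⟨A, hA⟩ := exists_matrixEval_ne_zero
    (mul_ne_zero (coeffPoly_false_ne_zero hξ hp) (det_mvPolynomialX_ne_zero n ℝ))
  rw [map_mul, RingHom.map_det] at hA
  obtain ⟨hA, hdet⟩ := mul_ne_zero_iff.1 hA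
  rw [RingHom.mapMatrix_apply, map_matrixEval_mvPolynomialX] at hdet
  intro h
  have hev : matrixEval A.adjugate (coeffPoly true ξ p) =
      matrixEval (A.det ^ (Fintype.card n - 2) • A) (coeffPoly false ξ p) := by
    rw [matrixEval_coeffPoly, matrixEval_coeffPoly, adjugateIf, cond_true,
      adjugate_adjugate A Fintype.one_lt_card.ne', adjugateIf, cond_false]
  rw [h, map_zero, matrixEval_smul (isHomogeneous_coeffPoly false ξ p)] at hev
  exact mul_ne_zero (pow_ne_zero _ (pow_ne_zero _ hdet)) hA hev.symm

/-- The product of the eight matrix coefficients that a transversal element must keep away from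
zero. -/
noncomputable def transversalPoly (ξ p : Bool → Set.powersetCard n i → ℝ) :
    MvPolynomial (n × n) ℝ :=
  ∏ s : Bool × Bool × Bool, coeffPoly s.2.2 (ξ s.1) (p s.2.1)

lemma matrixEval_transversalPoly (ξ p : Bool → Set.powersetCard n i → ℝ) (A : Matrix n n ℝ) :
    matrixEval A (transversalPoly ξ p) = ∏ s : Bool × Bool × Bool,
      ξ s.1 ⬝ᵥ compound i (adjugateIf s.2.2 A) *ᵥ p s.2.1 := by
  simp only [transversalPoly, map_prod, matrixEval_coeffPoly]

lemma isHomogeneous_transversalPoly (ξ p : Bool → Set.powersetCard n i → ℝ) :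
    (transversalPoly ξ p).IsHomogeneous
      (∑ s : Bool × Bool × Bool, i * bif s.2.2 then Fintype.card n - 1 else 1) :=
  .prod _ _ _ fun _ _ => isHomogeneous_coeffPoly _ _ _

lemma exists_pos_forall_exists_lt {X Y : Type*} [TopologicalSpace X] {K : Set X} (hK : IsCompact K)
    {F : X → Y → ℝ} (hF : ∀ y, Continuous (F · y)) (h : ∀ x ∈ K, ∃ y, 0 < F x y) :
    ∃ c > 0, ∀ x ∈ K, ∃ y, c < F x y := by
  have hopen (k : ℕ) : IsOpen {x | ∃ y, 1 / (k + 1 : ℝ) < F x y} := by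
    rw [Set.ofPred_exists]
    exact isOpen_iUnion fun y => isOpen_lt continuous_const (hF y)
  have hcover : K ⊆ ⋃ k : ℕ, {x | ∃ y, 1 / (k + 1 : ℝ) < F x y} := fun x hx => by
    obtain ⟨y, hy⟩ := h x hx
    obtain ⟨k, hk⟩ := exists_nat_one_div_lt hy
    exact Set.mem_iUnion.2 ⟨k, y, hk⟩
  obtain ⟨k, hk⟩ := hK.elim_directed_cover _ hopen hcover <| Monotone.directed_le
    fun k l hkl x ⟨y, hy⟩ => ⟨y, (Nat.one_div_le_one_div hkl).trans_lt hy⟩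
  exact ⟨1 / (k + 1 : ℝ), Nat.one_div_pos_of_nat, fun x hx => hk hx⟩

lemma exists_pos_forall_lt_abs_transversalPoly (n : Type*) [Fintype n] [LinearOrder n]
    [Nontrivial n] (i : ℕ) :
    ∃ c > 0, ∀ ξ p : Bool → Set.powersetCard n i → ℝ, (∀ b, ‖ξ b‖ = 1) → (∀ b, ‖p b‖ = 1) →
      ∃ A : Matrix n n ℝ, ‖A‖ ≤ 1 ∧ c < |matrixEval A (transversalPoly ξ p)| := by
  let U : Set (Bool → Set.powersetCard n i → ℝ) := Set.univ.pi fun _ => Metric.sphere 0 1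
  have hU : IsCompact U := isCompact_univ_pi fun _ => isCompact_sphere _ _
  have hmem (x) : x ∈ U ↔ ∀ b, ‖x b‖ = 1 := by simp [U]
  have hne {x} (hx : x ∈ U) (b) : x b ≠ 0 := norm_ne_zero_iff.1 (by simp [(hmem x).1 hx b])
  let F (x : (Bool → Set.powersetCard n i → ℝ) × (Bool → Set.powersetCard n i → ℝ))
      (A : Metric.closedBall (0 : Matrix n n ℝ) 1) : ℝ :=
    |matrixEval A.1 (transversalPoly x.1 x.2)|
  have hF (A) : Continuous (F · A) := by
    simp only [F, matrixEval_transversalPoly, dotProduct, mulVec]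
    fun_prop
  obtain ⟨c, hc, h⟩ := exists_pos_forall_exists_lt (hU.prod hU) hF fun x hx => by
    obtain ⟨A, hA, hA0⟩ := exists_norm_le_one_matrixEval_ne_zero
      (isHomogeneous_transversalPoly x.1 x.2)
      (Finset.prod_ne_zero_iff.2 fun s _ => coeffPoly_ne_zero s.2.2 (hne hx.1 _) (hne hx.2 _))
    exact ⟨⟨A, mem_closedBall_zero_iff.2 hA⟩, abs_pos.2 hA0⟩
  refine ⟨c, hc, fun ξ p hξ hp => ?_⟩
  obtain ⟨A, hA⟩ := h (ξ, p) ⟨(hmem ξ).2 hξ, (hmem p).2 hp⟩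
  exact ⟨A, mem_closedBall_zero_iff.1 A.2, hA⟩

lemma le_pow_card_mul_abs_of_le_abs_prod {σ : Type*} [Fintype σ] {x : σ → ℝ} {U c : ℝ} (hU : 1 ≤ U)
    (hx : ∀ s, |x s| ≤ U) (hc : c ≤ |∏ s, x s|) (s : σ) : c ≤ U ^ Fintype.card σ * |x s| := by
  classical
  calc c ≤ |x s| * ∏ t ∈ Finset.univ.erase s, |x t| := by
        rwa [← Finset.mul_prod_erase Finset.univ x (Finset.mem_univ s), abs_mul,
          Finset.abs_prod] at hc
    _ ≤ |x s| * U ^ (Finset.univ.erase s).card := by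
        gcongr
        rw [← Finset.prod_const]
        exact Finset.prod_le_prod (fun t _ => abs_nonneg _) fun t _ => hx t
    _ ≤ U ^ Fintype.card σ * |x s| := by
        rw [mul_comm]
        gcongr
        exact Finset.card_le_univ _

lemma abs_dotProduct_compound_mulVec_le {ξ p : Set.powersetCard n i → ℝ} (hξ : ‖ξ‖ = 1)
    (hp : ‖p‖ = 1) {A : Matrix n n ℝ} {B : ℝ} (hA : ‖A‖ ≤ B) :
    |ξ ⬝ᵥ compound i A *ᵥ p| ≤
      Fintype.card (Set.powersetCard n i) ^ 2 * (i.factorial * B ^ i) := by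
  calc |ξ ⬝ᵥ compound i A *ᵥ p|
      ≤ Fintype.card (Set.powersetCard n i) * ‖compound i A *ᵥ p‖ := by
        simpa [hξ] using! norm_dotProduct_le ξ (compound i A *ᵥ p)
    _ ≤ Fintype.card (Set.powersetCard n i) * (Fintype.card (Set.powersetCard n i) *
          (i.factorial * B ^ i)) := by
        gcongr
        refine (norm_mulVec_le _ _).trans ?_
        rw [hp, mul_one]
        gcongr
        exact (norm_compound_le A).trans (by gcongr)
    _ = _ := by ring

lemma exists_nat_forall_mul_pow_le (a : ℝ) (k : ℕ) : ∃ C : ℕ, ∀ B : ℝ, 1 ≤ B →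
    a * B ^ k ≤ C * B ^ C := by
  refine ⟨⌈a⌉₊ + k, fun B hB => mul_le_mul ((Nat.le_ceil a).trans ?_)
    (pow_le_pow_right₀ hB (Nat.le_add_left _ _)) (by positivity) (Nat.cast_nonneg _)⟩
  exact Nat.cast_le.2 (Nat.le_add_right _ _)

lemma MovesOff.smul {ι : Type*} [Fintype ι] {Q : ℝ} {L : Matrix ι ι ℝ} {ξ p : ι → ℝ}
    (h : MovesOff Q L ξ p) (a b : ℝ) : MovesOff Q L (a • ξ) (b • p) := by
  unfold MovesOff at *
  rw [mulVec_smul, smul_dotProduct, dotProduct_smul, norm_smul, norm_smul, smul_smul, smul_eq_mul,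
    abs_mul, abs_mul, ← Real.norm_eq_abs, ← Real.norm_eq_abs]
  calc ‖a‖ * ‖ξ‖ * (‖b‖ * ‖p‖) = ‖a‖ * ‖b‖ * (‖ξ‖ * ‖p‖) := by ring
    _ ≤ ‖a‖ * ‖b‖ * (Q * |ξ ⬝ᵥ (L *ᵥ p)|) := by gcongr
    _ = _ := by rw [Real.norm_eq_abs]; ring

lemma exists_norm_eq_one_smul_eq {E : Type*} [NormedAddCommGroup E] [NormedSpace ℝ E]
    [Nontrivial E] (v : E) : ∃ u : E, ‖u‖ = 1 ∧ ‖v‖ • u = v := by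
  rcases eq_or_ne v 0 with rfl | hv
  · obtain ⟨u, hu⟩ := exists_norm_eq E zero_le_one
    exact ⟨u, hu, by simp⟩
  · exact ⟨‖v‖⁻¹ • v, norm_smul_inv_norm hv, smul_inv_smul₀ (norm_ne_zero_iff.2 hv) v⟩

lemma hasTransversals_of_norm_eq_one {ι Γ : Type*} [Fintype ι] [DecidableEq ι] [Nonempty ι]
    [Group Γ] {R : Γ →* Matrix ι ι ℝ} {F : Set Γ} {Q : ℝ}
    (h : ∀ ξ p : Bool → ι → ℝ, (∀ b, ‖ξ b‖ = 1) → (∀ b, ‖p b‖ = 1) → ∃ f ∈ F, ∀ b b',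
      MovesOff Q (R f) (ξ b) (p b') ∧ MovesOff Q (R f⁻¹) (ξ b) (p b')) :
    HasTransversals R F Q := by
  intro ξ p
  choose u hu hξ using fun b => exists_norm_eq_one_smul_eq (ξ b)
  choose v hv hp using fun b => exists_norm_eq_one_smul_eq (p b)
  obtain ⟨f, hf, hmoves⟩ := h u v hu hv
  refine ⟨f, hf, fun b b' => ?_⟩
  rw [← hξ b, ← hp b']
  exact ⟨(hmoves b b').1.smul _ _, (hmoves b b').2.smul _ _⟩

lemma norm_adjugateIf_le [Nonempty n] {A : Matrix n n ℝ} {B : ℝ} (hB : 1 ≤ B) (hA : ‖A‖ ≤ B)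
    (b : Bool) :
    ‖adjugateIf b A‖ ≤ (Fintype.card n).factorial * B ^ Fintype.card n := by
  cases b
  · calc ‖A‖ ≤ 1 * B ^ 1 := by simpa using hA
      _ ≤ _ := by
        gcongr
        exacts [Nat.one_le_cast.2 (Nat.factorial_pos _), Fintype.card_pos]
  · exact norm_adjugate_le hB hA

lemma movesOff_of_le_transversalPoly {ξ p : Bool → Set.powersetCard n i → ℝ} {A : Matrix n n ℝ}
    {c X U : ℝ} (hc : 0 < c) (hX : 0 ≤ X) (hU : 1 ≤ U) (hξ : ∀ b, ‖ξ b‖ = 1) (hp : ∀ b, ‖p b‖ = 1)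
    (hle : ∀ s : Bool × Bool × Bool,
      |ξ s.1 ⬝ᵥ compound i (adjugateIf s.2.2 A) *ᵥ p s.2.1| ≤ U)
    (h : c ≤ X * |matrixEval A (transversalPoly ξ p)|) (s : Bool × Bool × Bool) :
    MovesOff (X * U ^ 8 / c) (compound i (adjugateIf s.2.2 A)) (ξ s.1) (p s.2.1) := by
  have hs : |matrixEval A (transversalPoly ξ p)| ≤
      U ^ 8 * |ξ s.1 ⬝ᵥ compound i (adjugateIf s.2.2 A) *ᵥ p s.2.1| :=
    le_pow_card_mul_abs_of_le_abs_prod hU hle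
      (congrArg abs (matrixEval_transversalPoly ξ p A)).le s
  calc ‖ξ s.1‖ * ‖p s.2.1‖ = c / c := by rw [hξ, hp, mul_one, div_self hc.ne']
    _ ≤ X * (U ^ 8 * |ξ s.1 ⬝ᵥ compound i (adjugateIf s.2.2 A) *ᵥ p s.2.1|) / c := by
      gcongr
      exact h.trans (by gcongr)
    _ = X * U ^ 8 / c * |ξ s.1 ⬝ᵥ compound i (adjugateIf s.2.2 A) *ᵥ p s.2.1| := by ring

lemma exists_hasTransversals (n : Type*) [Fintype n] [LinearOrder n] [Nontrivial n] (i : ℕ)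
    [Nonempty (Set.powersetCard n i)] :
    ∃ D C : ℕ, ∀ (W : Set (Matrix.SpecialLinearGroup n ℤ)) (P : GL n ℝ) (B : ℝ), 1 ≤ B →
      EscapesDegree (conjHom 1 '' W) D → (∀ f ∈ W, ‖conjHom P f‖ ≤ B) →
      HasTransversals ((compoundHom i).comp (conjHom P)) W (C * B ^ C) := by
  set N := Fintype.card (Set.powersetCard n i)
  set D := ∑ s : Bool × Bool × Bool, i * bif s.2.2 then Fintype.card n - 1 else 1
  obtain ⟨C₁, hC₁⟩ := exists_abs_matrixEval_le n D
  obtain ⟨c, hc, hlow⟩ := exists_pos_forall_lt_abs_transversalPoly n i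
  let b₀ : ℕ := N ^ 2 * (i.factorial * ((Fintype.card n).factorial) ^ i)
  obtain ⟨C, hC⟩ := exists_nat_forall_mul_pow_le (C₁ * b₀ ^ 8 / c) (C₁ + 8 * (Fintype.card n * i))
  refine ⟨D, C, fun W P B hB hW hWB => hasTransversals_of_norm_eq_one fun ξ p hξ hp => ?_⟩
  obtain ⟨A, hA, hcA⟩ := hlow ξ p hξ hp
  obtain ⟨f, hf, hAf⟩ := hC₁ W P B hB hW hWB _ A (isHomogeneous_transversalPoly ξ p) hA
  have hb₀ : 1 ≤ b₀ := Nat.one_le_iff_ne_zero.2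
    (mul_ne_zero (pow_ne_zero 2 Fintype.card_ne_zero)
      (mul_ne_zero (Nat.factorial_ne_zero _) (pow_ne_zero _ (Nat.factorial_ne_zero _))))
  have hU : 1 ≤ b₀ * B ^ (Fintype.card n * i) :=
    one_le_mul_of_one_le_of_one_le (Nat.one_le_cast.2 hb₀) (one_le_pow₀ hB)
  have hle (s : Bool × Bool × Bool) :
      |ξ s.1 ⬝ᵥ compound i (adjugateIf s.2.2 (conjHom P f)) *ᵥ p s.2.1| ≤
        b₀ * B ^ (Fintype.card n * i) := by
    refine (abs_dotProduct_compound_mulVec_le (hξ _) (hp _)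
      (norm_adjugateIf_le hB (hWB f hf) s.2.2)).trans_eq ?_
    push_cast [b₀]
    ring
  have hmoves (s : Bool × Bool × Bool) :
      MovesOff (C * B ^ C) (compound i (adjugateIf s.2.2 (conjHom P f))) (ξ s.1) (p s.2.1) := by
    refine (movesOff_of_le_transversalPoly hc (by positivity) hU hξ hp hle
      (hcA.le.trans hAf) s).mono ?_
    calc C₁ * B ^ C₁ * (b₀ * B ^ (Fintype.card n * i)) ^ 8 / c
        = C₁ * b₀ ^ 8 / c * B ^ (C₁ + 8 * (Fintype.card n * i)) := by ring
      _ ≤ C * B ^ C := hC B hB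
  refine ⟨f, hf, fun b b' => ⟨hmoves (b, b', false), ?_⟩⟩
  rw [MonoidHom.comp_apply, conjHom_inv]
  exact hmoves (b, b', true)

end Transversality

section Threshold

variable {n : Type*} {a : n → ℝ} {G : ℝ}

lemma exists_forall_le_pow_or_pow_le [Fintype n] (hG : 1 ≤ G) {j₀ : n}
    (hj₀ : G ^ Fintype.card n ≤ a j₀) :
    ∃ t < Fintype.card n, ∀ j, a j ≤ G ^ t ∨ G ^ (t + 1) ≤ a j := by
  by_contra! hall
  choose j hlower hupper using fun t : Fin (Fintype.card n) => hall t t.2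
  have hmono : StrictMono (a ∘ j) := fun s t hst =>
    calc a (j s) < G ^ ((s : ℕ) + 1) := hupper s
      _ ≤ G ^ (t : ℕ) := pow_le_pow_right₀ hG hst
      _ < a (j t) := hlower t
  have hsurj : Function.Surjective j :=
    ((Fintype.bijective_iff_injective_and_card j).2
      ⟨hmono.injective.of_comp, Fintype.card_fin _⟩).surjective
  obtain ⟨t, rfl⟩ := hsurj j₀
  exact ((hupper t).trans_le (pow_le_pow_right₀ hG t.2)).not_ge hj₀

lemma mul_prod_le_prod_of_threshold {A I : Finset n} {c : ℝ} (hG : 1 ≤ G)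
    (ha : ∀ i, 0 ≤ a i) (hA : ∀ i ∈ A, G * c ≤ a i) (hc : 0 ≤ c) (hAc : ∀ i ∉ A, a i ≤ c)
    (hcard : I.card = A.card) (hne : I ≠ A) : G * ∏ i ∈ I, a i ≤ ∏ i ∈ A, a i := by
  classical
  have hsdiff : (I \ A).card = (A \ I).card := Finset.card_sdiff_comm hcard
  have hcard0 : (A \ I).card ≠ 0 := fun h =>
    hne (Finset.eq_of_subset_of_card_le
      (Finset.sdiff_eq_empty_iff_subset.1 (Finset.card_eq_zero.1 h)) hcard.le).symm
  have hI : ∏ i ∈ I \ A, a i ≤ c ^ (A \ I).card := by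
    rw [← hsdiff, ← Finset.prod_const]
    exact Finset.prod_le_prod (fun i _ => ha i) fun i hi => hAc i (Finset.mem_sdiff.1 hi).2
  have hAI : (G * c) ^ (A \ I).card ≤ ∏ i ∈ A \ I, a i := by
    rw [← Finset.prod_const]
    exact Finset.prod_le_prod (fun _ _ => by positivity) fun i hi =>
      hA i (Finset.mem_sdiff.1 hi).1
  calc G * ∏ i ∈ I, a i = (G * ∏ i ∈ I \ A, a i) * ∏ i ∈ I ∩ A, a i := by
        rw [← Finset.prod_inter_mul_prod_sdiff I A]
        ring
    _ ≤ (G ^ (A \ I).card * c ^ (A \ I).card) * ∏ i ∈ I ∩ A, a i := by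
        gcongr
        · exact Finset.prod_nonneg fun i _ => ha i
        · exact Finset.prod_nonneg fun i _ => ha i
        · exact le_self_pow₀ hG hcard0
    _ ≤ (∏ i ∈ A \ I, a i) * ∏ i ∈ I ∩ A, a i := by
        rw [← mul_pow]
        gcongr
        exact Finset.prod_nonneg fun i _ => ha i
    _ = ∏ i ∈ A, a i := by
        rw [← Finset.prod_inter_mul_prod_sdiff A I, Finset.inter_comm, mul_comm]

lemma exists_powersetCard_gap [Fintype n] (ha : ∀ i, 0 < a i)
    (hprod : ∏ i, a i = 1) (hG : 1 < G) {j₀ : n} (hj₀ : G ^ Fintype.card n ≤ a j₀) :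
    ∃ i < Fintype.card n, ∃ I₀ I₁ : Set.powersetCard n i, I₁ ≠ I₀ ∧
      ∀ I ≠ I₀, G * ∏ x ∈ I.1, a x ≤ ∏ x ∈ I₀.1, a x := by
  classical
  obtain ⟨t, ht, hgap⟩ := exists_forall_le_pow_or_pow_le hG.le hj₀
  let A : Finset n := Finset.univ.filter fun j => G ^ (t + 1) ≤ a j
  have hj₀A : j₀ ∈ A := Finset.mem_filter_univ _ |>.2 <| (pow_le_pow_right₀ hG.le ht).trans hj₀
  obtain ⟨j₁, hj₁⟩ : ∃ j, a j ≤ 1 := by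
    by_contra! hlt
    refine (Finset.prod_lt_prod_of_nonempty (f := 1) (fun _ _ => one_pos) (fun i _ => hlt i)
      ⟨j₀, Finset.mem_univ _⟩).ne ?_
    rw [hprod]
    exact Finset.prod_const_one
  have hj₁A : j₁ ∉ A := fun h =>
    ((one_lt_pow₀ hG t.succ_ne_zero).trans_le (Finset.mem_filter.1 h).2).not_ge hj₁
  refine ⟨A.card, Finset.card_lt_univ_of_notMem hj₁A, ⟨A, rfl⟩,
    ⟨insert j₁ (A.erase j₀), ?_⟩, ?_, ?_⟩
  · rw [Set.powersetCard.mem_iff,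
      Finset.card_insert_of_notMem fun h => hj₁A (Finset.mem_of_mem_erase h),
      Finset.card_erase_add_one hj₀A]
  · exact fun h => hj₁A ((Subtype.ext_iff.1 h).subset (Finset.mem_insert_self _ _))
  · rintro ⟨I, hI⟩ hIA
    refine mul_prod_le_prod_of_threshold hG.le (fun i => (ha i).le) (c := G ^ t) ?_ ?_ ?_ hI
      fun h => hIA (Subtype.ext h)
    · exact fun i hi => pow_succ' G t ▸ (Finset.mem_filter.1 hi).2
    · positivity
    · exact fun i hi => (hgap i).resolve_right fun h => hi (Finset.mem_filter_univ _ |>.2 h)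

end Threshold

section SpectralGap

variable {n : Type*} [Fintype n] [DecidableEq n]

lemma norm_le_of_mem_spectrum {𝕜 : Type*} [NormedField 𝕜] {A : Matrix n n 𝕜} {l : 𝕜}
    (hl : l ∈ spectrum 𝕜 A) : ‖l‖ ≤ Fintype.card n * ‖A‖ := by
  rw [← spectrum_toLin', ← Module.End.hasEigenvalue_iff_mem_spectrum] at hl
  obtain ⟨v, hv⟩ := hl.exists_hasEigenvector
  refine le_of_mul_le_mul_right ?_ (norm_pos_iff.2 hv.2)
  calc ‖l‖ * ‖v‖ = ‖A *ᵥ v‖ := by rw [← norm_smul, ← hv.apply_eq_smul, toLin'_apply]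
    _ ≤ Fintype.card n * ‖A‖ * ‖v‖ := norm_mulVec_le A v

lemma exists_mem_spectrum_norm_trace_le [Nonempty n] {𝕜 : Type*} [NormedField 𝕜] [IsAlgClosed 𝕜]
    (A : Matrix n n 𝕜) : ∃ l ∈ spectrum 𝕜 A, ‖A.trace‖ ≤ Fintype.card n * ‖l‖ := by
  have hcard : A.charpoly.roots.card = Fintype.card n := by
    rw [Polynomial.splits_iff_card_roots.1 (IsAlgClosed.splits A.charpoly),
      charpoly_natDegree_eq_dim]
  have hroots : A.charpoly.roots ≠ 0 := fun h =>
    Fintype.card_ne_zero (α := n) (by rw [← hcard, h, Multiset.card_zero])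
  by_contra! hsmall
  have hlt : (A.charpoly.roots.map fun l => Fintype.card n * ‖l‖).sum
      < (A.charpoly.roots.map fun _ => ‖A.trace‖).sum :=
    Multiset.sum_lt_sum_of_nonempty hroots fun l hl =>
      hsmall l (mem_spectrum_iff_isRoot_charpoly.2 (Polynomial.isRoot_of_mem_roots hl))
  rw [Multiset.sum_map_mul_left, Multiset.map_const', Multiset.sum_replicate, hcard,
    nsmul_eq_mul] at hlt
  refine (lt_of_mul_lt_mul_left hlt (Nat.cast_nonneg _)).not_ge ?_
  rw [trace_eq_sum_roots_charpoly]
  exact norm_multiset_sum_le _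

lemma abs_trace_pow_le [Nonempty n] (A : Matrix n n ℝ) (k : ℕ) :
    |A.trace| ^ k ≤ (Fintype.card n : ℝ) ^ (k + 1) * ‖A ^ k‖ := by
  obtain ⟨l, hl, htr⟩ := exists_mem_spectrum_norm_trace_le (A.map Complex.ofRealHom)
  have htrace : ‖(A.map Complex.ofRealHom).trace‖ = |A.trace| := by
    have := AddMonoidHom.map_trace Complex.ofRealHom A
    rw [← this]
    exact Complex.norm_real _
  have hpow : ‖A.map Complex.ofRealHom ^ k‖ = ‖A ^ k‖ := by
    rw [← Matrix.map_pow]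
    exact norm_map_eq _ _ Complex.norm_real
  calc |A.trace| ^ k ≤ (Fintype.card n * ‖l‖) ^ k := by
        rw [← htrace]
        gcongr
    _ = (Fintype.card n : ℝ) ^ k * ‖l ^ k‖ := by rw [mul_pow, norm_pow]
    _ ≤ (Fintype.card n : ℝ) ^ k * (Fintype.card n * ‖A.map Complex.ofRealHom ^ k‖) := by
        gcongr
        exact norm_le_of_mem_spectrum (spectrum.pow_mem_pow _ k hl)
    _ = _ := by rw [hpow, pow_succ, mul_assoc]

lemma exists_orthogonal_mul_diagonal_mul_orthogonal {g : Matrix n n ℝ} (hg : IsUnit g) :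
    ∃ U ∈ orthogonalGroup n ℝ, ∃ V ∈ orthogonalGroup n ℝ, ∃ a : n → ℝ,
      (∀ i, 0 < a i) ∧ g = U * diagonal a * V := by
  have hpos : (gᴴ * g).PosDef :=
    PosDef.conjTranspose_mul_self g (mulVec_injective_of_isUnit hg)
  set q := hpos.isHermitian.eigenvectorUnitary
  set a : n → ℝ := fun i => √(hpos.isHermitian.eigenvalues i)
  have ha0 (i : n) : 0 < a i := Real.sqrt_pos.2 (hpos.eigenvalues_pos i)
  have ha2 : diagonal a * diagonal a = star (q : Matrix n n ℝ) * (star g * g) * q := by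
    have hsp := hpos.isHermitian.conjStarAlgAut_star_eigenvectorUnitary
    rw [Unitary.conjStarAlgAut_star_apply] at hsp
    refine Eq.trans ?_ hsp.symm
    rw [diagonal_mul_diagonal]
    exact congrArg diagonal (funext fun i => Real.mul_self_sqrt (hpos.eigenvalues_pos i).le)
  have hinv : diagonal a * diagonal a⁻¹ = 1 := by
    rw [diagonal_mul_diagonal, ← diagonal_one]
    exact congrArg diagonal (funext fun i => mul_inv_cancel₀ (ha0 i).ne')
  have hstar : star (diagonal a⁻¹) = diagonal a⁻¹ := by
    rw [star_eq_conjTranspose, diagonal_conjTranspose, star_trivial]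
  refine ⟨g * q * diagonal a⁻¹, ?_, star (q : Matrix n n ℝ), Unitary.star_mem q.2, a, ha0, ?_⟩
  · rw [mem_unitaryGroup_iff']
    calc _ = diagonal a⁻¹ * (star (q : Matrix n n ℝ) * (star g * g) * q) * diagonal a⁻¹ := by
          simp only [star_mul, hstar, mul_assoc]
      _ = (diagonal a⁻¹ * diagonal a) * (diagonal a * diagonal a⁻¹) := by
          simp only [← ha2, mul_assoc]
      _ = 1 := by rw [mul_eq_one_comm.1 hinv, hinv, one_mul]
  · rw [mul_assoc (g * _), mul_eq_one_comm.1 hinv, mul_one, mul_assoc,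
      Unitary.mul_star_self_of_mem q.2, mul_one]

variable {U V : Matrix n n ℝ} (hU : U ∈ orthogonalGroup n ℝ) (hV : V ∈ orthogonalGroup n ℝ)
include hU hV

lemma abs_det_orthogonal_mul_diagonal_mul (a : n → ℝ) :
    |(U * diagonal a * V).det| = |∏ i, a i| := by
  have habs {K : Matrix n n ℝ} (hK : K ∈ orthogonalGroup n ℝ) : |K.det| = 1 := by
    have hdet : K.det ∈ unitary ℝ := det_of_mem_unitary hK
    rw [← Real.norm_eq_abs, CStarRing.norm_of_mem_unitary hdet]
  rw [det_mul, det_mul, det_diagonal, abs_mul, abs_mul, habs hU, habs hV, one_mul, mul_one]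

lemma exists_norm_orthogonal_mul_diagonal_mul_le [Nonempty n] (a : n → ℝ) :
    ∃ i, ‖U * diagonal a * V‖ ≤ (Fintype.card n : ℝ) ^ 2 * |a i| := by
  obtain ⟨i, hi⟩ := Finite.exists_max fun i => |a i|
  refine ⟨i, ?_⟩
  calc ‖U * diagonal a * V‖ ≤ Fintype.card n * (Fintype.card n * 1 * ‖diagonal a‖) * 1 := by
        refine (norm_mul_le_card_mul _ _).trans ?_
        gcongr
        · refine (norm_mul_le_card_mul _ _).trans ?_
          gcongr
          exact norm_le_one_of_mem_orthogonalGroup hU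
        · exact norm_le_one_of_mem_orthogonalGroup hV
    _ = (Fintype.card n : ℝ) ^ 2 * ‖a‖ := by rw [norm_diagonal]; ring
    _ ≤ _ := by
        gcongr
        exact (pi_norm_le_iff_of_nonneg (abs_nonneg _)).2 hi

end SpectralGap

section FreeSubgroup

lemma norm_map_le_of_mem_pow {n M : Type*} [Fintype n] [DecidableEq n] [Monoid M]
    (R : M →* Matrix n n ℝ) {S : Set M} {X : ℝ} (hS : ∀ s ∈ S, ‖R s‖ ≤ X) :
    ∀ k : ℕ, ∀ f ∈ S ^ k, ‖R f‖ ≤ (Fintype.card n * X) ^ k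
  | 0, f, hf => by
    rw [pow_zero, Set.mem_one] at hf
    rw [hf, map_one, pow_zero]
    exact norm_le_one_of_mem_orthogonalGroup (one_mem _)
  | k + 1, f, hf => by
    rw [pow_succ] at hf
    obtain ⟨f, hf, s, hs, rfl⟩ := hf
    calc ‖R (f * s)‖ ≤ Fintype.card n * ‖R f‖ * ‖R s‖ := map_mul R f s ▸ norm_mul_le_card_mul _ _
      _ ≤ Fintype.card n * (Fintype.card n * X) ^ k * X := by
          have hX : 0 ≤ X := (norm_nonneg _).trans (hS s hs)
          gcongr
          exacts [norm_map_le_of_mem_pow R hS k f hf, hS s hs]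
      _ = _ := by ring

lemma exists_gap_pow_of_lt_abs_trace {n : Type*} [Fintype n] [DecidableEq n] [Nonempty n]
    {A : Matrix n n ℝ} (hdet : A.det = 1) (htr : (Fintype.card n : ℝ) ^ 2 < |A.trace|) {e : ℕ}
    (he : e ≠ 0) :
    ∃ U ∈ orthogonalGroup n ℝ, ∃ V ∈ orthogonalGroup n ℝ, ∃ a : n → ℝ, (∀ i, 0 < a i) ∧
      A ^ (2 * (e * Fintype.card n + 2)) = U * diagonal a * V ∧
      ∃ i < Fintype.card n, ∃ I₀ I₁ : Set.powersetCard n i, I₁ ≠ I₀ ∧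
        ∀ I ≠ I₀, |A.trace| ^ e * ∏ x ∈ I.1, a x ≤ ∏ x ∈ I₀.1, a x := by
  set d := (Fintype.card n : ℝ)
  set T := |A.trace|
  set m := e * Fintype.card n + 2 with hm
  have hd : 1 ≤ d := Nat.one_le_cast.2 Fintype.card_pos
  have hT : 1 < T := (one_le_pow₀ hd).trans_lt htr
  have hdetm : (A ^ (2 * m)).det = 1 := by rw [det_pow, hdet, one_pow]
  obtain ⟨U, hU, V, hV, a, ha, hA⟩ := exists_orthogonal_mul_diagonal_mul_orthogonal
    ((isUnit_iff_isUnit_det (A ^ (2 * m))).2 (hdetm ▸ isUnit_one))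
  have hprod : ∏ i, a i = 1 := by
    have habs := abs_det_orthogonal_mul_diagonal_mul hU hV a
    rwa [← hA, hdetm, abs_one, abs_of_pos (Finset.prod_pos fun i _ => ha i), eq_comm] at habs
  obtain ⟨j, hj⟩ := exists_norm_orthogonal_mul_diagonal_mul_le hU hV a
  rw [← hA, abs_of_pos (ha j)] at hj
  have hlarge : T ^ m * (T ^ (e * Fintype.card n) * T ^ 2) ≤ T ^ m * (a j * T ^ 2) := by
    calc _ = T ^ (2 * m) := by rw [hm]; ring
      _ ≤ d ^ (2 * m + 1) * (d ^ 2 * a j) := (abs_trace_pow_le A _).trans (by gcongr)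
      _ = (d ^ 2) ^ m * (a j * d ^ 3) := by ring
      _ ≤ (d ^ 2) ^ m * (a j * (d ^ 2) ^ 2) := by
          have := (ha j).le
          have : d ^ 3 ≤ (d ^ 2) ^ 2 := (pow_mul d 2 2) ▸ pow_le_pow_right₀ hd (by lia)
          gcongr
      _ ≤ T ^ m * (a j * T ^ 2) := by
          have := (ha j).le
          gcongr
  refine ⟨U, hU, V, hV, a, ha, hA,
    exists_powersetCard_gap ha hprod (one_lt_pow₀ hT he) (j₀ := j) ?_⟩
  rw [← pow_mul]
  exact le_of_mul_le_mul_right (le_of_mul_le_mul_left hlarge (by positivity)) (by positivity)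

lemma card_powersetCard_le (n : Type*) [Fintype n] (i : ℕ) :
    Fintype.card (Set.powersetCard n i) ≤ 2 ^ Fintype.card n :=
  (Fintype.card_le_of_injective _ Subtype.val_injective).trans_eq Fintype.card_finset

variable (n : Type*) [Fintype n] [LinearOrder n]

lemma exists_hasTransversals_of_lt_card [Nontrivial n] :
    ∃ D C : ℕ, ∀ (W : Set (Matrix.SpecialLinearGroup n ℤ)) (P : GL n ℝ) (B : ℝ), 1 ≤ B →
      EscapesDegree (conjHom 1 '' W) D → (∀ f ∈ W, ‖conjHom P f‖ ≤ B) →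
      ∀ i < Fintype.card n, HasTransversals ((compoundHom i).comp (conjHom P)) W (C * B ^ C) := by
  have hne (i : Fin (Fintype.card n)) : Nonempty (Set.powersetCard n i) :=
    let ⟨I, _, hI⟩ := Finset.exists_subset_card_eq (s := (Finset.univ : Finset n)) i.2.le
    ⟨⟨I, hI⟩⟩
  choose D C h using fun i : Fin (Fintype.card n) => exists_hasTransversals n i
  refine ⟨Finset.univ.sup D, Finset.univ.sup C, fun W P B hB hW hWB i hi => ?_⟩
  have hD : D ⟨i, hi⟩ ≤ Finset.univ.sup D := Finset.le_sup (Finset.mem_univ _)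
  have hC : C ⟨i, hi⟩ ≤ Finset.univ.sup C := Finset.le_sup (Finset.mem_univ _)
  refine (h ⟨i, hi⟩ W P B hB (hW.of_le hD) hWB).mono ?_
  gcongr

variable {n}

lemma isInversePair_compound_conjHom {i : ℕ} (hi : i ≤ Fintype.card n) {P : GL n ℝ}
    {f : Matrix.SpecialLinearGroup n ℤ} {B : ℝ} (hB : 1 ≤ B) (hf : ‖conjHom P f‖ ≤ B)
    (hf' : ‖conjHom P f⁻¹‖ ≤ B) :
    IsInversePair (compound i (conjHom P f)) (compound i (conjHom P f⁻¹))
      (2 ^ Fintype.card n * ((Fintype.card n).factorial * B ^ Fintype.card n)) := by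
  have hbound {A : Matrix n n ℝ} (hA : ‖A‖ ≤ B) :
      Fintype.card (Set.powersetCard n i) * ‖compound i A‖ ≤
        2 ^ Fintype.card n * ((Fintype.card n).factorial * B ^ Fintype.card n) := by
    gcongr
    · exact_mod_cast card_powersetCard_le n i
    · refine (norm_compound_le A).trans ?_
      gcongr
      exact (pow_le_pow_left₀ (norm_nonneg _) hA i).trans (pow_le_pow_right₀ hB hi)
  refine ⟨?_, hbound hf, hbound hf'⟩
  rw [← compound_mul, ← map_mul, mul_inv_cancel, map_one, compound_one]

variable (n) in
lemma exists_injective_lift_of_le_abs_trace [Nonempty n] (C : ℕ) :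
    ∃ R : ℕ, ∀ b : ℕ, ∃ N : ℕ, ∀ (F : Set (Matrix.SpecialLinearGroup n ℤ)) (P : GL n ℝ)
      (γ : Matrix.SpecialLinearGroup n ℤ) (T : ℝ), T = |((γ : Matrix n n ℤ).trace : ℝ)| → R ≤ T →
      (∀ f ∈ F, f⁻¹ ∈ F) → (∀ f ∈ F, ‖conjHom P f‖ ≤ T ^ b) →
      (∀ i < Fintype.card n,
        HasTransversals ((compoundHom i).comp (conjHom P)) F (C * (T ^ b) ^ C)) →
      ∃ h ∈ F, ∃ u ∈ F, ∃ y ∈ F, Function.Injective (FreeGroup.lift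
        ![γ ^ N * h * (γ ^ N)⁻¹ * u, y * (γ ^ N * h * (γ ^ N)⁻¹ * u) * y⁻¹]) := by
  set d := Fintype.card n
  refine ⟨d ^ 2 + 2 ^ d + d.factorial + C + 8, fun b => ?_⟩
  obtain ⟨e, he⟩ : ∃ e, e = 1 + 3 * (1 + b * C) + 23 * (2 + b * d) := ⟨_, rfl⟩
  refine ⟨2 * (e * d + 2), fun F P γ T hTγ hRT hinv hF htrans => ?_⟩
  push_cast at hRT
  have hd2 : (0 : ℝ) ≤ (d : ℝ) ^ 2 := by positivity
  have h2d : (0 : ℝ) ≤ (2 : ℝ) ^ d := by positivity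
  have hTd : (d : ℝ) ^ 2 < T := by linarith
  have hT2 : (2 : ℝ) ^ d ≤ T := by linarith
  have hTfact : (d.factorial : ℝ) ≤ T := by linarith
  have hTC : (C : ℝ) ≤ T := by linarith
  have hT8 : 8 ≤ T := by linarith
  have hT1 : 1 ≤ T := by linarith
  have hTtr : T = |(conjHom P γ).trace| := by rw [hTγ, trace_conjHom]
  obtain ⟨U, hU, V, hV, a, ha, hsvd, i, hi, I₀, I₁, hI, hgap⟩ :=
    exists_gap_pow_of_lt_abs_trace (det_conjHom P γ) (hTtr ▸ hTd) (e := e) (by lia)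
  have hpair (f) (hf : f ∈ F) : IsInversePair (compoundHom i (conjHom P f))
      (compoundHom i (conjHom P f⁻¹)) (T ^ (2 + b * d)) := by
    refine (isInversePair_compound_conjHom hi.le (one_le_pow₀ hT1) (hF f hf)
      (hF _ (hinv f hf))).mono ?_
    calc 2 ^ d * (d.factorial * (T ^ b) ^ d) ≤ T * (T * (T ^ b) ^ d) := by gcongr
      _ = T ^ (2 + b * d) := by ring
  have hQ : HasTransversals ((compoundHom i).comp (conjHom P)) F (T ^ (1 + b * C)) := by
    refine (htrans i hi).mono ?_
    calc C * (T ^ b) ^ C ≤ T * (T ^ b) ^ C := by gcongr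
      _ = T ^ (1 + b * C) := by ring
  have hcard : (Fintype.card (Set.powersetCard n i) : ℝ) ≤ T ^ (2 + b * d) :=
    calc (Fintype.card (Set.powersetCard n i) : ℝ) ≤ 2 ^ d := by
          exact_mod_cast card_powersetCard_le n i
      _ ≤ T := hT2
      _ ≤ T ^ (2 + b * d) := le_self_pow₀ hT1 (by lia)
  refine exists_injective_lift_of_gap hQ (one_le_pow₀ hT1) hcard hpair
    (compound_mem_orthogonalGroup hU) (compound_mem_orthogonalGroup hV)
    (α := fun I => ∏ x ∈ I.1, a x) (fun I => Finset.prod_pos fun x _ => ha x) ?_ (G := T ^ e) ?_ hI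
    (hTtr ▸ hgap)
  · rw [MonoidHom.comp_apply, map_pow, hsvd, map_mul, map_mul, ← compound_diagonal]
    rfl
  · calc 8 * (T ^ (1 + b * C)) ^ 3 * (T ^ (2 + b * d)) ^ 23
        ≤ T * (T ^ (1 + b * C)) ^ 3 * (T ^ (2 + b * d)) ^ 23 := by gcongr
      _ = T ^ e := by rw [he]; ring

lemma finite_pow {M : Type*} [Monoid M] {S : Set M} (hS : S.Finite) : ∀ k : ℕ, (S ^ k).Finite
  | 0 => by simpa only [pow_zero] using Set.finite_one
  | k + 1 => pow_succ S k ▸ (finite_pow hS k).mul hS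

lemma exists_finite_symmetric_subset {Γ : Type*} [Group Γ] {S W : Set Γ} (h1 : 1 ∈ S)
    (hinv : ∀ s ∈ S, s⁻¹ ∈ S) {k : ℕ} (hW : W.Finite) (hWS : W ⊆ S ^ k) :
    ∃ S' ⊆ S, S'.Finite ∧ 1 ∈ S' ∧ (∀ s ∈ S', s⁻¹ ∈ S') ∧ W ⊆ S' ^ k := by
  choose f hf using fun w : W => Set.mem_pow.1 (hWS w.2)
  have := hW.to_subtype
  let F : Set Γ := Set.range fun p : W × Fin k => (f p.1 p.2 : Γ)
  have hFS : F ⊆ S := Set.range_subset_iff.2 fun p => (f p.1 p.2).2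
  have hF : F.Finite := Set.finite_range _
  refine ⟨{1} ∪ (F ∪ F⁻¹), ?_, (Set.finite_singleton 1).union (hF.union hF.inv), by simp, ?_, ?_⟩
  · rintro s (rfl | hs | hs)
    · exact h1
    · exact hFS hs
    · exact inv_inv s ▸ hinv _ (hFS hs)
  · rintro s (rfl | hs | hs)
    · simp
    · exact .inr (.inr (Set.inv_mem_inv.2 hs))
    · exact .inr (.inl hs)
  · exact fun w hw => Set.mem_pow.2
      ⟨fun i => ⟨f ⟨w, hw⟩ i, .inr (.inl ⟨(⟨w, hw⟩, i), rfl⟩)⟩, hf ⟨w, hw⟩⟩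

lemma inv_mem_pow_of_forall_inv_mem {Γ : Type*} [Group Γ] {S : Set Γ} (hinv : ∀ s ∈ S, s⁻¹ ∈ S)
    (k : ℕ) : ∀ f ∈ S ^ k, f⁻¹ ∈ S ^ k := fun f hf => by
  have hS : S⁻¹ ⊆ S := fun s hs => inv_inv s ▸ hinv _ hs
  refine Set.pow_subset_pow_left hS ?_
  rwa [inv_pow, Set.inv_mem_inv]

lemma conj_pair_mem_pow {Γ : Type*} [Group Γ] {S : Set Γ} (h1 : 1 ∈ S) (hinv : ∀ s ∈ S, s⁻¹ ∈ S)
    {p q : ℕ} {g h u y : Γ} (hg : g ∈ S ^ p) (hh : h ∈ S ^ q) (hu : u ∈ S ^ q) (hy : y ∈ S ^ q) :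
    g * h * g⁻¹ * u ∈ S ^ (2 * p + 4 * q) ∧
      y * (g * h * g⁻¹ * u) * y⁻¹ ∈ S ^ (2 * p + 4 * q) := by
  have hmul {p q : ℕ} {x z : Γ} (hx : x ∈ S ^ p) (hz : z ∈ S ^ q) : x * z ∈ S ^ (p + q) :=
    pow_add S p q ▸ Set.mul_mem_mul hx hz
  have hinvpow := inv_mem_pow_of_forall_inv_mem hinv
  have hx := hmul (hmul (hmul hg hh) (hinvpow p g hg)) hu
  exact ⟨Set.pow_subset_pow_right h1 (by lia) hx,
    Set.pow_subset_pow_right h1 (by lia) (hmul (hmul hy hx) (hinvpow q y hy))⟩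

variable (n) [Nontrivial n]

lemma exists_injective_lift_of_escapesDegree :
    ∃ D : ℕ, ∀ k : ℕ, ∃ m : ℕ, 1 ≤ m ∧ ∀ S : Set (Matrix.SpecialLinearGroup n ℤ), S.Finite →
      1 ∈ S → (∀ s ∈ S, s⁻¹ ∈ S) → EscapesDegree (conjHom 1 '' (S ^ k)) D →
      ∃ a ∈ S ^ m, ∃ b ∈ S ^ m, Function.Injective (FreeGroup.lift ![a, b]) := by
  obtain ⟨Dtrans, C, htrans⟩ := exists_hasTransversals_of_lt_card n
  obtain ⟨C', hnorm⟩ := exists_norm_conjHom_le n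
  obtain ⟨R, hfree⟩ := exists_injective_lift_of_le_abs_trace n C
  obtain ⟨Dtrace, htrace⟩ := exists_lt_abs_trace n (R + C' + Fintype.card n + 1)
  refine ⟨1 + Dtrans + Dtrace, fun k => ?_⟩
  obtain ⟨N, hN⟩ := hfree ((C' + 2) * k)
  refine ⟨2 * ((1 + (k + k)) * N) + 4 * k + 1, by lia, fun S hfin h1 hinv hS => ?_⟩
  have hSk : S ^ k ⊆ S ^ (1 + (k + k)) := Set.pow_subset_pow_right h1 (by lia)
  obtain ⟨γ, hγ, hmax⟩ := Set.exists_max_image (S ^ (1 + (k + k)))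
    (fun f => |((f : Matrix n n ℤ).trace : ℝ)|) (finite_pow hfin _) ⟨1, Set.one_mem_pow h1⟩
  set T := |((γ : Matrix n n ℤ).trace : ℝ)| with hT
  have hlarge {r : ℕ} (hr : r ≤ R + C' + Fintype.card n + 1) : (r : ℝ) ≤ T := by
    obtain ⟨f, hf, hlt⟩ := htrace (S ^ k) (hS.of_le (by lia))
    have hlt' : (r : ℤ) ≤ |(f : Matrix n n ℤ).trace| := by lia
    exact le_trans (by exact_mod_cast hlt') (hmax f (hSk hf))
  have hT1 : 1 ≤ T := by exact_mod_cast hlarge (r := 1) (by lia)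
  obtain ⟨P, hP⟩ := hnorm S (S ^ k) T h1 hT1 (hS.of_le (by lia)) (by
    rwa [← pow_add, ← pow_succ', add_comm])
  have hball (f) (hf : f ∈ S ^ k) : ‖conjHom P f‖ ≤ T ^ ((C' + 2) * k) := by
    refine (norm_map_le_of_mem_pow _ hP k f hf).trans ?_
    rw [pow_mul]
    gcongr
    calc Fintype.card n * (C' * T ^ C') ≤ T * (T * T ^ C') := by
          gcongr
          exacts [hlarge (by lia), hlarge (by lia)]
      _ = T ^ (C' + 2) := by ring
  obtain ⟨h, hh, u, hu, y, hy, hinj⟩ := hN (S ^ k) P γ T hT (hlarge (by lia))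
    (inv_mem_pow_of_forall_inv_mem hinv k) hball
    (htrans (S ^ k) P _ (one_le_pow₀ hT1) (hS.of_le (by lia)) hball)
  have hγN : γ ^ N ∈ S ^ ((1 + (k + k)) * N) := pow_mul S _ N ▸ Set.pow_mem_pow hγ
  obtain ⟨ha, hb⟩ := conj_pair_mem_pow h1 hinv hγN hh hu hy
  exact ⟨_, Set.pow_subset_pow_right h1 (by lia) ha, _,
    Set.pow_subset_pow_right h1 (by lia) hb, hinj⟩

end FreeSubgroup

end UniformTits

open UniformTits in
theorem uniform_tits_SL_Z_general (n : Type*) [Fintype n] [DecidableEq n] [Nontrivial n] :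
    ∃ m : ℕ, 1 ≤ m ∧ ∀ S : Set (Matrix.SpecialLinearGroup n ℤ), 1 ∈ S → (∀ s ∈ S, s⁻¹ ∈ S) →
      IsZariskiDense
        (Subgroup.closure (Matrix.SpecialLinearGroup.map (Int.castRingHom ℝ) '' S)) →
      ∃ a ∈ S ^ m, ∃ b ∈ S ^ m, Function.Injective (FreeGroup.lift ![a, b]) := by
  obtain ⟨_⟩ : Nonempty (LinearOrder n) := ⟨.lift' _ (Fintype.equivFin n).injective⟩
  obtain rfl : ‹DecidableEq n› = LinearOrder.toDecidableEq := Subsingleton.elim _ _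
  obtain ⟨D, hD⟩ := exists_injective_lift_of_escapesDegree n
  obtain ⟨m, hm, hfree⟩ := hD (Module.finrank ℝ (MvPolynomial.homogeneousSubmodule (n × n) ℝ D))
  refine ⟨m, hm, fun S h1 hinv hS => ?_⟩
  obtain ⟨W, hWS, hW, hWesc⟩ := Set.exists_subset_image_finite_and.1
    (escapesDegree_pow_of_isZariskiDense h1 hinv hS D).exists_finite_subset
  obtain ⟨S', hS', hfin, h1', hinv', hWS'⟩ := exists_finite_symmetric_subset h1 hinv hW hWS
  obtain ⟨a, ha, b, hb, hab⟩ := hfree S' hfin h1' hinv' (hWesc.mono (Set.image_mono hWS'))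
  exact ⟨a, Set.pow_subset_pow_left hS' ha, b, Set.pow_subset_pow_left hS' hb, hab⟩

/-- **Uniform Tits alternative for Zariski-dense subgroups of `SL_d(ℤ)`.** For every `d ≥ 2`
there is `m ≥ 1` such that for every finite symmetric `S ⊆ SL_d(ℤ)` containing `1` whose
generated subgroup is Zariski dense in `SL_d(ℝ)`, the ball `S ^ m` contains two elements
generating a free group of rank 2. -/
theorem uniform_tits_SL_Z (d : ℕ) (hd : 2 ≤ d) :
    ∃ m : ℕ, 1 ≤ m ∧
      ∀ S : Finset (Matrix.SpecialLinearGroup (Fin d) ℤ),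
        (1 : Matrix.SpecialLinearGroup (Fin d) ℤ) ∈ S → (∀ s ∈ S, s⁻¹ ∈ S) →
        -- Zariski density in `SL_d(ℝ)` of the subgroup generated by the image of `S`:
        (∀ p : MvPolynomial (Fin d × Fin d) ℝ,
          (∀ g : Matrix.SpecialLinearGroup (Fin d) ℝ,
            g ∈ Subgroup.closure
              ((Matrix.SpecialLinearGroup.map (n := Fin d) (Int.castRingHom ℝ)) ''
                (S : Set (Matrix.SpecialLinearGroup (Fin d) ℤ))) →
            MvPolynomial.eval (fun ij => (g : Matrix (Fin d) (Fin d) ℝ) ij.1 ij.2) p = 0) →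
          ∀ g : Matrix.SpecialLinearGroup (Fin d) ℝ,
            MvPolynomial.eval (fun ij => (g : Matrix (Fin d) (Fin d) ℝ) ij.1 ij.2) p = 0) →
        ∃ a ∈ (S : Set (Matrix.SpecialLinearGroup (Fin d) ℤ)) ^ m,
          ∃ b ∈ (S : Set (Matrix.SpecialLinearGroup (Fin d) ℤ)) ^ m,
            Function.Injective
              (FreeGroup.lift ![a, b] :
                FreeGroup (Fin 2) →* Matrix.SpecialLinearGroup (Fin d) ℤ) := by
  have := Fin.nontrivial_iff_two_le.2 hd
  exact (uniform_tits_SL_Z_general (Fin d)).imp fun _ h => h.imp_right fun hfree S => hfree S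
end

section
/- The ping-pong lemma (real case): Let d ≥ 2, and let ε > 0 and r > 2ε. Let a, b ∈ GL_d(ℝ). Suppose a is (r,ε)-proximal with attracting point v_a and repelling hyperplane H_a, a⁻¹ is (r,ε)-proximal with attracting point v_{a⁻¹} and repelling hyperplane H_{a⁻¹}, and similarly b and b⁻¹ are (r,ε)-proximal with data (v_b, H_b) and (v_{b⁻¹}, H_{b⁻¹}). Assume the separation conditions: each of the attracting points v_a, v_{a⁻¹} is at projective distance at least r from each of the repelling hyperplanes H_b and H_{b⁻¹}, and each of v_b, v_{b⁻¹} is at projective distance at least r from each of H_a and H_{a⁻¹}. Then a and b are independent (they generate a free group of rank 2). -/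
open Matrix Pointwise

/-- The standard projective distance between the lines spanned by two (nonzero) vectors of
`ℝᵈ`: `d([x],[y]) = √(‖x‖²‖y‖² - ⟨x,y⟩²) / (‖x‖‖y‖)`. -/
noncomputable def projDist {d : ℕ} (x y : Fin d → ℝ) : ℝ :=
  Real.sqrt ((∑ i, x i ^ 2) * (∑ i, y i ^ 2) - (∑ i, x i * y i) ^ 2) /
    (Real.sqrt (∑ i, x i ^ 2) * Real.sqrt (∑ i, y i ^ 2))

/-- The projective distance from the line `[x]` to (the projectivization of) a linear
subspace `H`. -/
noncomputable def projDistToSubspace {d : ℕ} (x : Fin d → ℝ)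
    (H : Submodule ℝ (Fin d → ℝ)) : ℝ :=
  sInf {r : ℝ | ∃ y ∈ H, y ≠ 0 ∧ r = projDist x y}

/-- `g` is `(r,ε)`-proximal with attracting point `v` and repelling hyperplane `H`:
`H` is a hyperplane, `v ≠ 0`, every point at projective distance `≥ ε` from `H` is sent
within `ε` of `[v]`, and `d([v], H) ≥ r`. -/
def IsProximal {d : ℕ} (g : Matrix (Fin d) (Fin d) ℝ) (r ε : ℝ)
    (v : Fin d → ℝ) (H : Submodule ℝ (Fin d → ℝ)) : Prop :=
  v ≠ 0 ∧ Module.finrank ℝ H = d - 1 ∧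
    (∀ p : Fin d → ℝ, p ≠ 0 → ε ≤ projDistToSubspace p H → projDist (g.mulVec p) v ≤ ε) ∧
    r ≤ projDistToSubspace v H

/-!
If a word `s ⋯ t` in the generators is reduced, each letter is applied to points close to the
attracting point of the next one, which are far from its own repelling hyperplane. Hence the word
moves every point `ε`-far from the repelling hyperplane of `t` to within `ε` of the attracting point
of `s`. The attracting balls may overlap, so there need not be a point outside all of them on which
every word can be tested. However, every element of the free group is conjugate to a cyclically
reduced word, for which the attracting point of `s` is `r`-far from the repelling hyperplane of `t`.
As projective space is connected, some point lies at distance exactly `r / 2` from this attracting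
point. Since `r > 2ε`, it is still `ε`-far from the hyperplane, so the word moves it into the
`ε`-ball to which it does not belong: the word acts nontrivially.
-/

open Metric Projectivization Set
open scoped LinearAlgebra.Projectivization

theorem injective_of_forall_isCyclicallyReduced {ι M : Type*} [Monoid M] (f : FreeGroup ι →* M)
    (hf : ∀ L, FreeGroup.IsCyclicallyReduced L → f (FreeGroup.mk L) = 1 → L = []) :
    Function.Injective f := by
  classical
  rw [injective_iff_map_eq_one]
  intro x hx
  set C := FreeGroup.mk (FreeGroup.reduceCyclically.conjugator x.toWord)
  set L := FreeGroup.reduceCyclically x.toWord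
  have hconj : x = C * FreeGroup.mk L * C⁻¹ := by
    rw [FreeGroup.inv_mk, FreeGroup.mul_mk, FreeGroup.mul_mk,
      FreeGroup.reduceCyclically.conj_conjugator_reduceCyclically, FreeGroup.mk_toWord]
  have hL : f (FreeGroup.mk L) = 1 := by
    rw [show FreeGroup.mk L = C⁻¹ * x * C by rw [hconj]; group, map_mul, map_mul, hx, mul_one,
      ← map_mul, inv_mul_cancel, map_one]
  have hnil : L = [] :=
    hf L (FreeGroup.reduceCyclically.isCyclicallyReduced FreeGroup.isReduced_toWord) hL
  rw [hconj, hnil, ← FreeGroup.one_eq_mk, mul_one, mul_inv_cancel]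

section SetPingPong

variable {ι G X : Type*} [Group G] [MulAction G X] {f : FreeGroup ι →* G} {A U : ι × Bool → Set X}

theorem mapsTo_smul_of_isReduced (hmaps : ∀ s, MapsTo (f (FreeGroup.mk [s]) • ·) (U s) (A s))
    (hsub : ∀ s t, (s.1 = t.1 → s.2 = t.2) → A t ⊆ U s) (s : ι × Bool) (L : List (ι × Bool))
    (hL : FreeGroup.IsReduced (s :: L)) :
    MapsTo (f (FreeGroup.mk (s :: L)) • ·) (U ((s :: L).getLast (List.cons_ne_nil s L))) (A s) := by
  induction L generalizing s with
  | nil => exact hmaps s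
  | cons t L ih =>
    rw [FreeGroup.isReduced_cons_cons] at hL
    intro p hp
    have htail : f (FreeGroup.mk (t :: L)) • p ∈ A t := ih t hL.2 hp
    have hhead : f (FreeGroup.mk [s]) • f (FreeGroup.mk (t :: L)) • p ∈ A s :=
      hmaps s (hsub s t hL.1 htail)
    rwa [← mul_smul, ← map_mul, FreeGroup.mul_mk] at hhead

theorem injective_of_mapsTo_of_ssubset
    (hmaps : ∀ s, MapsTo (f (FreeGroup.mk [s]) • ·) (U s) (A s))
    (hsub : ∀ s t, (s.1 = t.1 → s.2 = t.2) → A t ⊂ U s) : Function.Injective f := by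
  refine injective_of_forall_isCyclicallyReduced f fun L hL hf ↦ ?_
  cases L with
  | nil => rfl
  | cons s L =>
    have hlast : A s ⊂ U ((s :: L).getLast (List.cons_ne_nil s L)) :=
      hsub _ _ (hL.2 _ (List.getLast?_eq_getLast_of_ne_nil _) s rfl)
    obtain ⟨p, hpU, hpA⟩ := exists_of_ssubset hlast
    have hp := mapsTo_smul_of_isReduced hmaps (fun s t h ↦ (hsub s t h).subset) s L hL.1 hpU
    exact absurd (by simpa [hf] using hp) hpA

end SetPingPong

section MetricPingPong

variable {ι G X : Type*} [PseudoMetricSpace X] {ε r : ℝ}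

/-- The metric form of the `ε`-contracting condition on `g`, for an arbitrary action of `g` on a
metric space and an arbitrary repelling set `K`. -/
def IsContracting [SMul G X] (g : G) (ε : ℝ) (v : X) (K : Set X) : Prop :=
  ∀ p, ε ≤ infDist p K → dist (g • p) v ≤ ε

variable [PreconnectedSpace X]

theorem exists_dist_eq_of_le_dist {x y : X} (hr₀ : 0 ≤ r) (hr : r ≤ dist x y) :
    ∃ p, dist x p = r :=
  intermediate_value_univ x y (continuous_const.dist continuous_id) ⟨by simpa using hr₀, hr⟩

theorem closedBall_ssubset_setOf_le_infDist {x : X} {K : Set X} (hε : 0 ≤ ε) (hr : 2 * ε < r)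
    (hK : r ≤ infDist x K) : closedBall x ε ⊂ {p | ε ≤ infDist p K} := by
  have le_infDist {p : X} (hp : dist x p ≤ r - ε) : ε ≤ infDist p K := by
    linarith [infDist_le_infDist_add_dist (s := K) (x := x) (y := p)]
  have hKne : K.Nonempty := by
    rw [nonempty_iff_ne_empty]
    rintro rfl
    rw [infDist_empty] at hK
    linarith
  obtain ⟨y, hy⟩ := hKne
  have hxy : r ≤ dist x y := hK.trans (infDist_le_dist_of_mem hy)
  obtain ⟨p, hp⟩ : ∃ p, dist x p = r / 2 :=
    exists_dist_eq_of_le_dist (y := y) (by linarith) (by linarith)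
  refine ssubset_iff_exists.2 ⟨fun q hq ↦ le_infDist ?_, p, le_infDist (by linarith), ?_⟩
  · linarith [mem_closedBall'.1 hq]
  · rw [mem_closedBall', not_le]
    linarith

theorem ping_pong_lemma_general [Group G] [MulAction G X] {f : FreeGroup ι →* G}
    {v : ι × Bool → X} {K : ι × Bool → Set X} (hε : 0 ≤ ε) (hr : 2 * ε < r)
    (hf : ∀ s, IsContracting (f (FreeGroup.mk [s])) ε (v s) (K s))
    (hsep : ∀ s t, (s.1 = t.1 → s.2 = t.2) → r ≤ infDist (v t) (K s)) :
    Function.Injective f :=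
  injective_of_mapsTo_of_ssubset (A := fun s ↦ closedBall (v s) ε)
    (U := fun s ↦ {p | ε ≤ infDist p (K s)}) hf
    fun s t h ↦ closedBall_ssubset_setOf_le_infDist hε hr (hsep s t h)

end MetricPingPong

section Veronese

variable {n : Type*} [Fintype n]

/-- The Veronese map `x ↦ x xᵀ / (√2 ‖x‖²)` into the `n × n` matrices with the Frobenius norm. It
embeds the projective space, and the factor `1 / √2` makes the distance of the images equal to
`projDist`. -/
noncomputable def veronese (x : n → ℝ) : EuclideanSpace ℝ (n × n) :=
  WithLp.toLp 2 fun ij ↦ x ij.1 * x ij.2 / (√2 * ∑ i, x i ^ 2)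

theorem sum_sq_pos {x : n → ℝ} (hx : x ≠ 0) : 0 < ∑ i, x i ^ 2 := by
  obtain ⟨i, hi⟩ := Function.ne_iff.1 hx
  exact Finset.sum_pos' (fun j _ ↦ sq_nonneg (x j)) ⟨i, Finset.mem_univ i, sq_pos_of_ne_zero hi⟩

theorem veronese_smul {c : ℝ} (hc : c ≠ 0) (x : n → ℝ) : veronese (c • x) = veronese x := by
  ext ij
  simp only [veronese, Pi.smul_apply, smul_eq_mul, mul_pow, ← Finset.mul_sum]
  field_simp

theorem continuous_veronese : Continuous fun x : {x : n → ℝ // x ≠ 0} ↦ veronese x.1 := by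
  have hcoord (i : n) : Continuous fun x : {x : n → ℝ // x ≠ 0} ↦ x.1 i :=
    (continuous_apply i).comp continuous_subtype_val
  refine (PiLp.continuous_toLp 2 _).comp (continuous_pi fun ij ↦ ?_)
  refine ((hcoord ij.1).mul (hcoord ij.2)).div
    (continuous_const.mul (continuous_finsetSum _ fun i _ ↦ (hcoord i).pow 2)) fun x ↦ ?_
  have := sum_sq_pos x.2
  positivity

theorem sum_mul_div_sub_mul_div_sq {K : Type*} [Field K] (x y : n → K) (a b : K) :
    ∑ ij : n × n, (x ij.1 * x ij.2 / a - y ij.1 * y ij.2 / b) ^ 2 =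
      (∑ i, x i ^ 2) ^ 2 / a ^ 2 - 2 * (∑ i, x i * y i) ^ 2 / (a * b) +
        (∑ i, y i ^ 2) ^ 2 / b ^ 2 := by
  simp only [sq (Finset.sum _ _), Fintype.sum_mul_sum, ← Fintype.sum_prod_type']
  simp only [Finset.mul_sum, Finset.sum_div, ← Finset.sum_sub_distrib, ← Finset.sum_add_distrib]
  exact Fintype.sum_congr _ _ fun ij ↦ by ring

theorem dist_veronese {d : ℕ} {x y : Fin d → ℝ} (hx : x ≠ 0) (hy : y ≠ 0) :
    dist (veronese x) (veronese y) = projDist x y := by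
  have hx' := sum_sq_pos hx
  have hy' := sum_sq_pos hy
  rw [EuclideanSpace.dist_eq, projDist, ← Real.sqrt_mul hx'.le, ← Real.sqrt_div' _ (by positivity)]
  simp only [veronese, Real.dist_eq, sq_abs, sum_mul_div_sub_mul_div_sq, mul_pow]
  congr 1
  field_simp
  norm_num
  ring

end Veronese

section ProjectiveMetric

variable {n : Type*} [Fintype n] {d : ℕ}

/-- The projective distance as a pseudometric on `ℙ ℝ (n → ℝ)`. Pulling it back along the Veronese
map gives the triangle inequality for free. -/
noncomputable instance : PseudoMetricSpace (ℙ ℝ (n → ℝ)) :=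
  .induced (fun p ↦ veronese p.rep) inferInstance

theorem veronese_rep_mk {x : n → ℝ} (hx : x ≠ 0) : veronese (mk ℝ x hx).rep = veronese x := by
  obtain ⟨c, hc⟩ := exists_smul_eq_mk_rep ℝ x hx
  rw [← hc, Units.smul_def, veronese_smul c.ne_zero]

theorem continuous_mk' : Continuous (mk' ℝ : {x : n → ℝ // x ≠ 0} → ℙ ℝ (n → ℝ)) :=
  continuous_induced_rng.2 <| continuous_veronese.congr fun x ↦ (veronese_rep_mk x.2).symm

instance [Nontrivial n] : PreconnectedSpace (ℙ ℝ (n → ℝ)) := by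
  have hrank : 1 < Module.rank ℝ (n → ℝ) := by
    rw [rank_fun', Nat.one_lt_cast]
    exact Fintype.one_lt_card
  have : PreconnectedSpace {x : n → ℝ // x ≠ 0} :=
    Subtype.preconnectedSpace (isConnected_compl_singleton_of_one_lt_rank hrank 0).isPreconnected
  have hsurj : Function.Surjective (mk' ℝ : {x : n → ℝ // x ≠ 0} → ℙ ℝ (n → ℝ)) :=
    fun p ↦ ⟨⟨p.rep, p.rep_nonzero⟩, mk_rep p⟩
  exact hsurj.denseRange.preconnectedSpace continuous_mk'

theorem dist_mk_mk {x y : Fin d → ℝ} (hx : x ≠ 0) (hy : y ≠ 0) :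
    dist (mk ℝ x hx) (mk ℝ y hy) = projDist x y := by
  rw [← dist_veronese hx hy, ← veronese_rep_mk hx, ← veronese_rep_mk hy]
  rfl

theorem infDist_mk_projectivization {x : Fin d → ℝ} (hx : x ≠ 0)
    (H : Submodule ℝ (Fin d → ℝ)) :
    infDist (mk ℝ x hx) H.projectivization = projDistToSubspace x H := by
  rw [infDist_eq_iInf, ← sInf_image', projDistToSubspace]
  congr 1
  ext c
  constructor
  · rintro ⟨p, hp, rfl⟩
    induction p with
    | h y hy => exact ⟨y, hp, hy, dist_mk_mk hx hy⟩
  · rintro ⟨y, hyH, hy, rfl⟩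
    exact ⟨mk ℝ y hy, hyH, dist_mk_mk hx hy⟩

theorem IsProximal.isContracting {g : GL (Fin d) ℝ} {r ε : ℝ} {v : Fin d → ℝ}
    {H : Submodule ℝ (Fin d → ℝ)} (hg : IsProximal (g : Matrix (Fin d) (Fin d) ℝ) r ε v H) :
    IsContracting g ε (mk ℝ v hg.1) H.projectivization := by
  intro p hp
  induction p with
  | h x hx =>
    rw [infDist_mk_projectivization] at hp
    rw [smul_mk, dist_mk_mk]
    exact hg.2.2.1 x hx hp

end ProjectiveMetric

/-- **The ping-pong lemma.** If `a, a⁻¹, b, b⁻¹` are `(r,ε)`-proximal (`r > 2ε`) and the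
attracting points of `a^{±1}` are `r`-far from the repelling hyperplanes of `b^{±1}` and
vice versa, then `a` and `b` generate a free group of rank 2. -/
theorem ping_pong_lemma {d : ℕ} (hd : 2 ≤ d) {ε r : ℝ} (hε : 0 < ε) (hr : 2 * ε < r)
    (a b : GL (Fin d) ℝ)
    (va va' vb vb' : Fin d → ℝ) (Ha Ha' Hb Hb' : Submodule ℝ (Fin d → ℝ))
    (hpa : IsProximal (a : Matrix (Fin d) (Fin d) ℝ) r ε va Ha)
    (hpa' : IsProximal ((a⁻¹ : GL (Fin d) ℝ) : Matrix (Fin d) (Fin d) ℝ) r ε va' Ha')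
    (hpb : IsProximal (b : Matrix (Fin d) (Fin d) ℝ) r ε vb Hb)
    (hpb' : IsProximal ((b⁻¹ : GL (Fin d) ℝ) : Matrix (Fin d) (Fin d) ℝ) r ε vb' Hb')
    (sep1 : r ≤ projDistToSubspace va Hb) (sep2 : r ≤ projDistToSubspace va Hb')
    (sep3 : r ≤ projDistToSubspace va' Hb) (sep4 : r ≤ projDistToSubspace va' Hb')
    (sep5 : r ≤ projDistToSubspace vb Ha) (sep6 : r ≤ projDistToSubspace vb Ha')
    (sep7 : r ≤ projDistToSubspace vb' Ha) (sep8 : r ≤ projDistToSubspace vb' Ha') :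
    Function.Injective (FreeGroup.lift ![a, b] : FreeGroup (Fin 2) →* GL (Fin d) ℝ) := by
  have := Fin.nontrivial_iff_two_le.2 hd
  refine ping_pong_lemma_general (v := fun s ↦ cond s.2
      (![mk ℝ va hpa.1, mk ℝ vb hpb.1] s.1) (![mk ℝ va' hpa'.1, mk ℝ vb' hpb'.1] s.1))
    (K := fun s ↦ (cond s.2 (![Ha, Hb] s.1) (![Ha', Hb'] s.1)).projectivization) hε.le hr ?_ ?_
  · simpa [Fin.forall_fin_two, FreeGroup.lift_mk] using
      ⟨⟨hpa'.isContracting, hpa.isContracting⟩, hpb'.isContracting, hpb.isContracting⟩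
  · simp only [Prod.forall, Fin.forall_fin_two, Bool.forall_bool]
    simp [infDist_mk_projectivization, *, hpa.2.2.2, hpa'.2.2.2, hpb.2.2.2, hpb'.2.2.2]
end

section
/- Eigenvalue versus conjugation-minimal norm (Proposition 1, Archimedean case): For every d ≥ 1 there is a constant c = c(d) > 0 such that for every compact subset Ω of SL_d(ℂ) with 1 ∈ Ω, one has Λ(Ω^{d²}) ≥ c·E(Ω), where Λ(Ω^{d²}) = sup{ρ(y) : y ∈ Ω^{d²}} with ρ(y) the spectral radius of y (the maximal modulus of an eigenvalue of y), and E(Ω) = inf_{h ∈ SL_d(ℂ)} sup_{y ∈ Ω} ‖h·y·h⁻¹‖ with ‖·‖ the operator norm on d×d complex matrices. -/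
open Matrix Pointwise

/-- The `ℓ²`-norm of a vector in `ℂᵈ`. -/
noncomputable def cvNorm {d : ℕ} (x : Fin d → ℂ) : ℝ :=
  Real.sqrt (∑ i, ‖x i‖ ^ 2)

/-- The operator norm of a complex `d × d` matrix with respect to the Hermitian norm
on `ℂᵈ` (supremum over the closed unit ball). -/
noncomputable def cOpNorm {d : ℕ} (M : Matrix (Fin d) (Fin d) ℂ) : ℝ :=
  sSup {r : ℝ | ∃ x : Fin d → ℂ, cvNorm x ≤ 1 ∧ r = cvNorm (M.mulVec x)}

/-- The spectral radius of a complex matrix: the maximal modulus of an eigenvalue, i.e. of a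
root of the characteristic polynomial. -/
noncomputable def specRad {d : ℕ} (M : Matrix (Fin d) (Fin d) ℂ) : ℝ :=
  sSup {r : ℝ | ∃ μ ∈ M.charpoly.roots, r = ‖μ‖}

/-!
Suppose the conjugation-minimal norms `E(Ω)` grow faster than the spectral radii on `Ω ^ (d ^ 2)`.
Conjugate each `Ω` so that its norm is comparable to `E(Ω)`, divide by `E(Ω)`, and let `S` be the
set of limits along an ultrafilter. Let `P ⊇ S` be the set of limits of scalings of `Ω` by factors
in `[0, 1]`. Then `1 ∈ P`, and traces vanish on `S * P ^ (d ^ 2 - 1)`. For dimension reasons the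
powers of the span of `P` stabilise after `d ^ 2 - 1` steps, so the span of `S * P ^ (d ^ 2 - 1)` is
a non-unital algebra of trace-zero matrices containing `S`; it consists of nilpotent matrices, and
is nilpotent by Engel's theorem.

A nilpotent space of matrices can be conjugated arbitrarily close to zero: if `b i` spans it and
`Φ y = ∑ i, (b i)⋆ * y * b i`, then `Φ` is nilpotent, `p = ∑ k, Φ ^ k 1 ≥ 1` satisfies
`(b i)⋆ * p * b i ≤ p`, and conjugation by `√p` makes every `b i` a contraction. Rescaling the `b i`
beforehand yields any contraction ratio. Such a conjugation pushes the norm of some `Ω` below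
`E(Ω)`, which is absurd.
-/

section NilpotentSubspaces

open Polynomial

lemma exists_pow_eq_aeval_mul_pow {K A : Type*} [Field K] [Ring A] [Algebra K A] {a : A}
    (ha : IsIntegral K a) : ∃ (n : ℕ) (q : K[X]), a ^ n = aeval a q * a ^ (2 * n + 1) := by
  obtain ⟨r, hr, hXr⟩ :=
    exists_eq_pow_rootMultiplicity_mul_and_not_dvd (minpoly K a) (minpoly.ne_zero ha) 0
  set n := rootMultiplicity 0 (minpoly K a)
  rw [map_zero, sub_zero] at hr hXr
  obtain ⟨u, v, huv⟩ : IsCoprime (X ^ (n + 1)) r :=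
    (irreducible_X.coprime_iff_not_dvd.2 hXr).pow_left
  have hpow : X ^ n = u * X ^ (2 * n + 1) + v * minpoly K a := by
    rw [hr]
    linear_combination (-X ^ n) * huv
  refine ⟨n, u, ?_⟩
  simpa using congrArg (aeval a) hpow

lemma exists_isIdempotentElem_aeval_X_mul {K A : Type*} [Field K] [Ring A] [Algebra K A] {a : A}
    (ha : IsIntegral K a) :
    ∃ q : K[X], IsIdempotentElem (aeval a (X * q)) ∧
      (aeval a (X * q) = 0 → IsNilpotent a) := by
  obtain ⟨n, q, hq⟩ := exists_pow_eq_aeval_mul_pow ha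
  have hpow : aeval a (X ^ n : K[X]) = aeval a (X * (q * X ^ n) * X ^ n) := by
    rw [show X * (q * X ^ n) * X ^ n = q * X ^ (2 * n + 1) by ring, map_mul, map_pow, map_pow,
      aeval_X, hq]
  refine ⟨q * X ^ n, ?_, fun h => ⟨n, ?_⟩⟩
  · have := congrArg (fun x => aeval a (X * q) * x) hpow
    simp only [← map_mul] at this
    rw [IsIdempotentElem, ← map_mul]
    convert this.symm using 2 <;> ring
  · rw [map_mul, h, zero_mul, map_pow, aeval_X] at hpow
    exact hpow

lemma mul_aeval_mem {R A : Type*} [CommSemiring R] [Semiring A] [Algebra R A]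
    {N : Submodule R A} (hN : N * N ≤ N) {a : A} (ha : a ∈ N) (q : R[X]) :
    a * aeval a q ∈ N := by
  have hpow (n : ℕ) : a ^ (n + 1) ∈ N := by
    induction n with
    | zero => simpa using ha
    | succ n ih => exact pow_succ a (n + 1) ▸ hN (Submodule.mul_mem_mul ih ha)
  rw [aeval_eq_sum_range, Finset.mul_sum]
  refine N.sum_mem fun i _ => ?_
  rw [mul_smul_comm, ← pow_succ']
  exact N.smul_mem _ (hpow i)

variable {K V : Type*} [Field K] [AddCommGroup V] [Module K V] [FiniteDimensional K V]

lemma isNilpotent_of_forall_trace_eq_zero [CharZero K] {N : Submodule K (Module.End K V)}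
    (hN : N * N ≤ N) (htr : ∀ a ∈ N, LinearMap.trace K V a = 0) {a : Module.End K V}
    (ha : a ∈ N) : IsNilpotent a := by
  obtain ⟨q, hidem, hnil⟩ :=
    exists_isIdempotentElem_aeval_X_mul (Algebra.IsIntegral.isIntegral (R := K) a)
  have hmem : aeval a (X * q) ∈ N := by
    rw [map_mul, aeval_X]
    exact mul_aeval_mem hN ha q
  exact hnil ((LinearMap.IsIdempotentElem.trace_eq_zero_iff hidem).1 (htr _ hmem))

attribute [local instance] LieRing.ofAssociativeRing

lemma exists_pow_eq_bot_of_forall_isNilpotent {R M : Type*} [CommRing R] [AddCommGroup M]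
    [Module R M] [IsNoetherian R M] {N : Submodule R (Module.End R M)} (hN : N * N ≤ N)
    (hnil : ∀ a ∈ N, IsNilpotent a) : ∃ m : ℕ, N ^ m = ⊥ := by
  let L : LieSubalgebra R (Module.End R M) :=
    { N with
      lie_mem' := fun hx hy =>
        N.sub_mem (hN (Submodule.mul_mem_mul hx hy)) (hN (Submodule.mul_mem_mul hy hx)) }
  have hL : LieModule.IsNilpotent L M :=
    (LieModule.isNilpotent_iff_forall' (R := R)).2 fun x => hnil x.1 x.2
  obtain ⟨m, hm⟩ := (LieModule.isNilpotent_iff R L M).1 hL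
  have mapsTo_lcs (k : ℕ) :
      ∀ w ∈ N ^ k, ∀ v, w v ∈ LieModule.lowerCentralSeries R L M k := by
    induction k with
    | zero => simp
    | succ k ih =>
      intro w hw v
      rw [pow_succ'] at hw
      induction hw using Submodule.mul_induction_on' with
      | mem_mul_mem x hx y hy =>
        rw [LieModule.lowerCentralSeries_succ]
        exact LieSubmodule.lie_mem_lie (x := (⟨x, hx⟩ : L)) (LieSubmodule.mem_top _) (ih y hy v)
      | add x _ y _ hx hy => exact add_mem hx hy
  refine ⟨m, (Submodule.eq_bot_iff _).2 fun w hw => LinearMap.ext fun v => ?_⟩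
  simpa [hm] using mapsTo_lcs m w hw v

lemma exists_pow_eq_bot_of_forall_trace_eq_zero [CharZero K] {n : Type*} [Fintype n]
    [DecidableEq n] {N : Submodule K (Matrix n n K)} (hN : N * N ≤ N)
    (htr : ∀ a ∈ N, a.trace = 0) : ∃ m : ℕ, N ^ m = ⊥ := by
  let f : Matrix n n K →ₐ[K] Module.End K (n → K) := toLinAlgEquiv'.toAlgHom
  have hf : Function.Injective f := toLinAlgEquiv'.injective
  have hmul : N.map f.toLinearMap * N.map f.toLinearMap ≤ N.map f.toLinearMap := by
    rw [← Submodule.map_mul]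
    exact Submodule.map_mono hN
  have htr' : ∀ a ∈ N.map f.toLinearMap, LinearMap.trace K (n → K) a = 0 := by
    rintro _ ⟨a, ha, rfl⟩
    exact (trace_toLin'_eq a).trans (htr a ha)
  obtain ⟨m, hm⟩ := exists_pow_eq_bot_of_forall_isNilpotent hmul fun _ =>
    isNilpotent_of_forall_trace_eq_zero hmul htr'
  refine ⟨m, ?_⟩
  rw [← Submodule.map_pow] at hm
  exact Submodule.map_injective_of_injective hf (hm.trans (Submodule.map_bot _).symm)

lemma pow_succ_eq_pow_of_finrank_le {A : Type*} [Ring A] [Algebra K A] [FiniteDimensional K A]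
    {N : Submodule K A} (h1 : 1 ∈ N) {k : ℕ} (hk : Module.finrank K A ≤ k + 1) :
    N ^ (k + 1) = N ^ k := by
  cases subsingleton_or_nontrivial A
  · exact Subsingleton.elim _ _
  have hmono : Monotone (N ^ ·) := pow_right_monotone (Submodule.one_le.2 h1)
  -- As `N ^ 0` already has dimension one, subtracting one from the dimensions saves one step.
  have hpos (i : ℕ) : 0 < Module.finrank K ↥(N ^ i) := by
    rw [Module.finrank_pos_iff, Submodule.nontrivial_iff_ne_bot, Submodule.ne_bot_iff]
    exact ⟨1, by simpa using Submodule.pow_mem_pow N h1 i, one_ne_zero⟩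
  have heq {i : ℕ} (h : Module.finrank K ↥(N ^ i) - 1 = Module.finrank K ↥(N ^ (i + 1)) - 1) :
      N ^ i = N ^ (i + 1) :=
    Submodule.eq_of_le_of_finrank_eq (hmono i.le_succ)
      (by have := hpos i; have := hpos (i + 1); omega)
  have hstab {i : ℕ} (hik : Module.finrank K A - 1 ≤ i) :=
    Nat.stabilises_of_monotone (f := fun i => Module.finrank K ↥(N ^ i) - 1)
      (fun _ _ hij => Nat.sub_le_sub_right (Submodule.finrank_mono (hmono hij)) 1)
      (fun i => Nat.sub_le_sub_right (Submodule.finrank_le _) 1)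
      (fun i hi => by rwa [pow_succ N (i + 1), ← heq hi, ← pow_succ]) hik
  exact (heq ((hstab (by omega)).trans (hstab (by omega)).symm)).symm

lemma exists_span_pow_eq_bot_of_trace_mul_eq_zero [CharZero K] {n : Type*} [Fintype n]
    [DecidableEq n] {S P : Set (Matrix n n K)} (h1 : 1 ∈ P) (hSP : S ⊆ P) {k : ℕ}
    (hk : Fintype.card n ^ 2 ≤ k + 1) (htr : ∀ s ∈ S, ∀ w ∈ P ^ k, (s * w).trace = 0) :
    ∃ m : ℕ, Submodule.span K S ^ m = ⊥ := by
  set X := Submodule.span K S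
  set N := Submodule.span K P
  have h1N : 1 ∈ N := Submodule.subset_span h1
  have hstab : N ^ (k + 1) = N ^ k := pow_succ_eq_pow_of_finrank_le h1N <| by
    rwa [Module.finrank_matrix, Module.finrank_self, mul_one, ← sq]
  have hstab_add (j : ℕ) : N ^ (k + j) = N ^ k := by
    induction j with
    | zero => rfl
    | succ j ih => rw [← add_assoc, pow_succ, ih, ← pow_succ, hstab]
  have hmul : X * N ^ k * (X * N ^ k) ≤ X * N ^ k := calc
    X * N ^ k * (X * N ^ k) ≤ X * N ^ k * (N * N ^ k) := by
      gcongr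
      exact Submodule.span_mono hSP
    _ = X * N ^ k := by rw [mul_assoc, ← pow_succ', ← pow_add, hstab_add]
  have htrace : ∀ a ∈ X * N ^ k, a.trace = 0 := by
    suffices X * N ^ k ≤ LinearMap.ker (traceLinearMap n K K) from this
    rw [Submodule.span_pow, Submodule.span_mul_span, Submodule.span_le]
    rintro _ ⟨s, hs, w, hw, rfl⟩
    exact htr s hs w hw
  have hX : X ≤ X * N ^ k := fun x hx => by
    simpa using Submodule.mul_mem_mul hx (Submodule.pow_mem_pow N h1N k)
  obtain ⟨m, hm⟩ := exists_pow_eq_bot_of_forall_trace_eq_zero hmul htrace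
  exact ⟨m, eq_bot_mono (pow_le_pow_left' hX m) hm⟩

end NilpotentSubspaces

section Contraction

variable {A ι : Type*} [Fintype ι]

/-- The completely positive map `y ↦ ∑ i, (b i)⋆ * y * b i` with Kraus operators `b`. -/
def krausMap [Ring A] [StarRing A] [Algebra ℂ A] (b : ι → A) : Module.End ℂ A :=
  ∑ i, LinearMap.mulLeftRight ℂ (star (b i), b i)

lemma krausMap_apply [Ring A] [StarRing A] [Algebra ℂ A] (b : ι → A) (y : A) :
    krausMap b y = ∑ i, star (b i) * y * b i := by
  simp [krausMap]

lemma krausMap_pow_eq_zero [Ring A] [StarRing A] [Algebra ℂ A] {b : ι → A} {m : ℕ}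
    (hb : Submodule.span ℂ (Set.range b) ^ m = ⊥) : krausMap b ^ m = 0 := by
  set X := Submodule.span ℂ (Set.range b)
  have mem_top_mul_pow (k : ℕ) (y : A) : (krausMap b ^ k) y ∈ (⊤ : Submodule ℂ A) * X ^ k := by
    induction k with
    | zero => simp
    | succ k ih =>
      rw [pow_succ' (krausMap b), Module.End.mul_apply, krausMap_apply, pow_succ, ← mul_assoc]
      refine sum_mem fun i _ => Submodule.mul_mem_mul ?_ (Submodule.subset_span ⟨i, rfl⟩)
      have := Submodule.mul_mem_mul (Submodule.mem_top (x := star (b i))) ih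
      rw [← mul_assoc] at this
      exact mul_le_mul_left le_top (X ^ k) this
  ext y
  simpa [hb] using mem_top_mul_pow m y

section Order

variable [CStarAlgebra A] [PartialOrder A] [StarOrderedRing A] (b : ι → A)

lemma krausMap_nonneg {y : A} (hy : 0 ≤ y) : 0 ≤ krausMap b y := by
  rw [krausMap_apply]
  exact Finset.sum_nonneg fun i _ => star_left_conjugate_nonneg hy _

lemma star_mul_mul_le_krausMap {y : A} (hy : 0 ≤ y) (i : ι) :
    star (b i) * y * b i ≤ krausMap b y := by
  rw [krausMap_apply]
  exact Finset.single_le_sum (f := fun j => star (b j) * y * b j)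
    (fun j _ => star_left_conjugate_nonneg hy _) (Finset.mem_univ i)

lemma exists_nonneg_eq_one_add_krausMap {b : ι → A} {m : ℕ}
    (hb : Submodule.span ℂ (Set.range b) ^ m = ⊥) : ∃ p : A, 0 ≤ p ∧ p = 1 + krausMap b p := by
  have hpow (k : ℕ) : 0 ≤ (krausMap b ^ k) 1 := by
    induction k with
    | zero => exact zero_le_one
    | succ k ih => exact pow_succ' (krausMap b) k ▸ krausMap_nonneg b ih
  refine ⟨(∑ k ∈ Finset.range m, krausMap b ^ k) 1, ?_, ?_⟩
  · rw [LinearMap.sum_apply]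
    exact Finset.sum_nonneg fun k _ => hpow k
  · have h := congrArg (· 1) (mul_neg_geom_sum (krausMap b) m)
    rw [krausMap_pow_eq_zero hb] at h
    rw [← sub_eq_iff_eq_add]
    simpa [sub_mul] using h

lemma norm_conj_le_one_of_star_mul_mul_le {a : A} {g : Aˣ}
    (h : star a * (star (g : A) * g) * a ≤ star (g : A) * g) : ‖g * a * (↑g⁻¹ : A)‖ ≤ 1 := by
  nontriviality A
  have hg : star (↑g⁻¹ : A) * (star (g : A) * g) * ↑g⁻¹ = 1 := by
    rw [← mul_assoc, ← star_mul, Units.mul_inv, star_one, one_mul, Units.mul_inv]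
  have hle : star (g * a * (↑g⁻¹ : A)) * (g * a * (↑g⁻¹ : A)) ≤ 1 := by
    simpa only [star_mul, mul_assoc, hg] using
      (star_left_conjugate_le_conjugate h (↑g⁻¹ : A)).trans_eq hg
  have := CStarAlgebra.norm_le_norm_of_nonneg_of_le (star_mul_self_nonneg _) hle
  rwa [CStarRing.norm_star_mul_self, CStarRing.norm_one, ← sq,
    sq_le_one_iff₀ (norm_nonneg _)] at this

lemma exists_unit_norm_conj_le_one {κ : Type*} [Finite κ] {b : κ → A} {m : ℕ}
    (hb : Submodule.span ℂ (Set.range b) ^ m = ⊥) :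
    ∃ g : Aˣ, ∀ i, ‖g * b i * (↑g⁻¹ : A)‖ ≤ 1 := by
  cases nonempty_fintype κ
  obtain ⟨p, hp0, hp⟩ := exists_nonneg_eq_one_add_krausMap hb
  have h1p : 1 ≤ p := hp ▸ le_add_of_nonneg_right (krausMap_nonneg b hp0)
  obtain ⟨g, hg⟩ := (CFC.isUnit_sqrt_iff p).2
    (CStarAlgebra.isUnit_of_le 1 h1p isStrictlyPositive_one)
  have hgp : star (g : A) * g = p := by
    rw [hg, (CFC.sqrt_nonneg p).isSelfAdjoint.star_eq, CFC.sqrt_mul_sqrt_self p]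
  refine ⟨g, fun i => norm_conj_le_one_of_star_mul_mul_le ?_⟩
  rw [hgp]
  calc star (b i) * p * b i ≤ krausMap b p := star_mul_mul_le_krausMap b hp0 i
    _ ≤ 1 + krausMap b p := le_add_of_nonneg_left zero_le_one
    _ = p := hp.symm

end Order

lemma exists_unit_norm_conj_le {A : Type*} [CStarAlgebra A] {X : Submodule ℂ A}
    [FiniteDimensional ℂ X] {m : ℕ} (hX : X ^ m = ⊥) {ε : ℝ} (hε : 0 < ε) :
    ∃ g : Aˣ, ∀ x ∈ X, ‖g * x * (↑g⁻¹ : A)‖ ≤ ε * ‖x‖ := by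
  let _ := CStarAlgebra.spectralOrder A
  let _ := CStarAlgebra.spectralOrderedRing A
  let b := Module.finBasis ℂ X
  obtain ⟨C, hC, opNorm_le⟩ := b.exists_opNorm_le (F := A)
  have hspan : Submodule.span ℂ (Set.range fun i => ((C / ε : ℝ) : ℂ) • (b i : A)) ^ m = ⊥ := by
    refine eq_bot_mono (pow_le_pow_left' (Submodule.span_le.2 ?_) m) hX
    rintro _ ⟨i, rfl⟩
    exact X.smul_mem _ (b i).2
  obtain ⟨g, hg⟩ := exists_unit_norm_conj_le_one hspan
  let conj : X →L[ℂ] A := LinearMap.toContinuousLinearMap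
    (LinearMap.mulLeftRight ℂ ((g : A), (↑g⁻¹ : A)) ∘ₗ X.subtype)
  have hconj : ‖conj‖ ≤ C * (ε / C) := by
    refine opNorm_le (by positivity) fun i => ?_
    have h := hg i
    rw [mul_smul_comm, smul_mul_assoc, norm_smul, Complex.norm_of_nonneg (by positivity),
      ← le_div_iff₀' (by positivity), one_div_div] at h
    simpa [conj] using h
  rw [mul_div_cancel₀ ε hC.ne'] at hconj
  exact ⟨g, fun x hx => by simpa [conj] using conj.le_of_opNorm_le hconj ⟨x, hx⟩⟩

end Contraction

section LimitArgument

open Filter Topology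

section LimitSet

variable {ι X : Type*} [TopologicalSpace X] {l : Filter ι}

/-- The lower Kuratowski limit of a family of sets, in the sequential form: all limits along `l` of
selections `y i ∈ T i`. -/
def limitSet (l : Filter ι) (T : ι → Set X) : Set X :=
  {x | ∃ y : ι → X, (∀ i, y i ∈ T i) ∧ Tendsto y l (𝓝 x)}

lemma limitSet_mono {S T : ι → Set X} (h : ∀ i, S i ⊆ T i) : limitSet l S ⊆ limitSet l T :=
  fun _ ⟨y, hy, hyx⟩ => ⟨y, fun i => h i (hy i), hyx⟩

lemma subset_limitSet {S : Set X} {T : ι → Set X} (h : ∀ i, S ⊆ T i) : S ⊆ limitSet l T :=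
  fun x hx => ⟨fun _ => x, fun i => h i hx, tendsto_const_nhds⟩

lemma limitSet_mul_subset [Mul X] [ContinuousMul X] (S T : ι → Set X) :
    limitSet l S * limitSet l T ⊆ limitSet l (S * T) := by
  rintro _ ⟨x, ⟨y, hy, hyx⟩, x', ⟨y', hy', hyx'⟩, rfl⟩
  exact ⟨y * y', fun i => Set.mul_mem_mul (hy i) (hy' i), hyx.mul hyx'⟩

lemma limitSet_pow_subset [Monoid X] [ContinuousMul X] (T : ι → Set X) (k : ℕ) :
    limitSet l T ^ k ⊆ limitSet l (T ^ k) := by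
  induction k with
  | zero => exact subset_limitSet fun _ => by simp
  | succ k ih =>
    rw [pow_succ, pow_succ]
    exact (Set.mul_subset_mul_right ih).trans (limitSet_mul_subset _ _)

lemma exists_mem_limitSet_tendsto {U : Ultrafilter ι} {T : ι → Set X} {K : Set X}
    (hK : IsCompact K) (hTK : ∀ i, T i ⊆ K) {y : ι → X} (hy : ∀ i, y i ∈ T i) :
    ∃ x ∈ limitSet U T, x ∈ K ∧ Tendsto y U (𝓝 x) := by
  have hyK : ∀ᶠ i in (U : Filter ι), y i ∈ K := .of_forall fun i => hTK i (hy i)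
  obtain ⟨x, hxK, hx⟩ := hK.ultrafilter_le_nhds (U.map y) (le_principal_iff.2 hyK)
  exact ⟨x, ⟨y, hy, hx⟩, hxK, hx⟩

end LimitSet

section TraceGap

open scoped Matrix.Norms.L2Operator

variable {n : Type*} [Fintype n] [DecidableEq n]

lemma Icc_smul_pow_subset {A : Type*} [Ring A] [Algebra ℝ A] (T : Set A) (k : ℕ) :
    (Set.Icc (0 : ℝ) 1 • T) ^ k ⊆ Set.Icc (0 : ℝ) 1 • T ^ k := by
  induction k with
  | zero =>
    rw [pow_zero, pow_zero, Set.one_subset]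
    exact ⟨1, Set.right_mem_Icc.2 zero_le_one, 1, Set.one_mem_one, one_smul ℝ 1⟩
  | succ k ih =>
    rw [pow_succ, pow_succ]
    refine (Set.mul_subset_mul_right ih).trans ?_
    rintro _ ⟨_, ⟨a, ha, x, hx, rfl⟩, _, ⟨b, hb, y, hy, rfl⟩, rfl⟩
    exact ⟨a * b, ⟨mul_nonneg ha.1 hb.1, mul_le_one₀ ha.2 hb.1 hb.2⟩, x * y,
      Set.mul_mem_mul hx hy, (smul_mul_smul_comm a x b y).symm⟩

lemma norm_trace_le_of_mem_inv_smul_mul {T : Set (Matrix n n ℂ)} {R δ : ℝ} {k : ℕ} (hR : 0 < R)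
    (htr : ∀ y ∈ T ^ (k + 1), ‖y.trace‖ ≤ δ * R) {a : Matrix n n ℂ}
    (ha : a ∈ R⁻¹ • T * (Set.Icc (0 : ℝ) 1 • T) ^ k) : ‖a.trace‖ ≤ δ := by
  obtain ⟨_, ⟨y, hy, rfl⟩, v, hv, rfl⟩ := ha
  obtain ⟨c, hc, w, hw, rfl⟩ := Icc_smul_pow_subset T k hv
  have hyw : ‖(y * w).trace‖ ≤ δ * R := htr _ (pow_succ' T k ▸ Set.mul_mem_mul hy hw)
  calc ‖(R⁻¹ • y * c • w).trace‖ = R⁻¹ * c * ‖(y * w).trace‖ := by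
        rw [smul_mul_smul_comm, trace_smul, norm_smul,
          Real.norm_of_nonneg (mul_nonneg (inv_nonneg.2 hR.le) hc.1)]
    _ ≤ R⁻¹ * 1 * (δ * R) := by
        gcongr
        exact hc.2
    _ = δ := by field_simp

lemma trace_mul_eq_zero_of_mem_limitSet {ι : Type*} {l : Filter ι} [l.NeBot]
    {T : ι → Set (Matrix n n ℂ)} {R δ : ι → ℝ} {k : ℕ} (hR : ∀ i, 0 < R i)
    (hδ : Tendsto δ l (𝓝 0)) (htr : ∀ i, ∀ y ∈ T i ^ (k + 1), ‖y.trace‖ ≤ δ i * R i)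
    {s w : Matrix n n ℂ} (hs : s ∈ limitSet l fun i => (R i)⁻¹ • T i)
    (hw : w ∈ limitSet l (fun i => Set.Icc (0 : ℝ) 1 • T i) ^ k) : (s * w).trace = 0 := by
  obtain ⟨a, ha, hlim⟩ :=
    limitSet_mul_subset _ _ (Set.mul_mem_mul hs (limitSet_pow_subset _ k hw))
  have htrace : Tendsto (fun i => (a i).trace) l (𝓝 (s * w).trace) :=
    (continuous_id.matrix_trace.tendsto (s * w)).comp hlim
  exact tendsto_nhds_unique htrace <| squeeze_zero_norm
    (fun i => norm_trace_le_of_mem_inv_smul_mul (hR i) (htr i) (ha i)) hδ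

lemma exists_unit_forall_conj_limitSet {ι : Type*} {l : Filter ι} [l.NeBot]
    {T : ι → Set (Matrix n n ℂ)} {R δ : ι → ℝ} {k : ℕ} (hk : Fintype.card n ^ 2 ≤ k + 1)
    (hR : ∀ i, 1 ≤ R i) (h1 : ∀ i, 1 ∈ T i) (hδ : Tendsto δ l (𝓝 0))
    (htr : ∀ i, ∀ y ∈ T i ^ (k + 1), ‖y.trace‖ ≤ δ i * R i) {ε : ℝ} (hε : 0 < ε) :
    ∃ g : (Matrix n n ℂ)ˣ, ∀ x ∈ limitSet l (fun i => (R i)⁻¹ • T i),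
      ‖g * x * (↑g⁻¹ : Matrix n n ℂ)‖ ≤ ε * ‖x‖ := by
  have hR0 (i) : 0 < R i := zero_lt_one.trans_le (hR i)
  have hSP : limitSet l (fun i => (R i)⁻¹ • T i) ⊆
      limitSet l (fun i => Set.Icc (0 : ℝ) 1 • T i) :=
    limitSet_mono fun i => Set.smul_set_subset_smul
      ⟨inv_nonneg.2 (hR0 i).le, inv_le_one_of_one_le₀ (hR i)⟩
  have h1P : (1 : Matrix n n ℂ) ∈ limitSet l (fun i => Set.Icc (0 : ℝ) 1 • T i) :=
    subset_limitSet
      (fun i => Set.one_subset.2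
        (Set.mem_smul.2 ⟨1, Set.right_mem_Icc.2 zero_le_one, 1, h1 i, one_smul ℝ 1⟩))
      Set.one_mem_one
  obtain ⟨m, hm⟩ := exists_span_pow_eq_bot_of_trace_mul_eq_zero h1P hSP hk
    fun s hs w hw => trace_mul_eq_zero_of_mem_limitSet hR0 hδ htr hs hw
  obtain ⟨g, hg⟩ := exists_unit_norm_conj_le hm hε
  exact ⟨g, fun x hx => hg x (Submodule.subset_span hx)⟩

lemma exists_norm_conj_le_of_norm_trace_pow_le {k : ℕ} (hk : Fintype.card n ^ 2 ≤ k + 1)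
    {ε : ℝ} (hε : 0 < ε) :
    ∃ δ > 0, ∀ (T : Set (Matrix n n ℂ)) (R : ℝ), 1 ≤ R → 1 ∈ T → (∀ y ∈ T, ‖y‖ ≤ R) →
      (∀ y ∈ T ^ (k + 1), ‖y.trace‖ ≤ δ * R) →
      ∃ g : (Matrix n n ℂ)ˣ, ∀ y ∈ T, ‖g * y * (↑g⁻¹ : Matrix n n ℂ)‖ ≤ ε * R := by
  by_contra! hcon
  choose T R hR h1 hTR htr hlarge using fun i : ℕ =>
    hcon (1 / ((i : ℝ) + 1)) Nat.one_div_pos_of_nat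
  have hR0 (i) : 0 < R i := zero_lt_one.trans_le (hR i)
  have hδ : Tendsto (fun i : ℕ => 1 / ((i : ℝ) + 1)) (hyperfilter ℕ) (𝓝 0) :=
    tendsto_one_div_add_atTop_nhds_zero_nat.mono_left Nat.hyperfilter_le_atTop
  obtain ⟨g, hg⟩ := exists_unit_forall_conj_limitSet hk hR h1 hδ htr (half_pos hε)
  choose y hyT hy using fun i => hlarge i g
  have hT_ball (i) : (R i)⁻¹ • T i ⊆ Metric.closedBall 0 1 := by
    rintro _ ⟨z, hz, rfl⟩
    rw [mem_closedBall_zero_iff, norm_smul, Real.norm_of_nonneg (inv_nonneg.2 (hR0 i).le),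
      inv_mul_le_iff₀ (hR0 i), mul_one]
    exact hTR i z hz
  have := FiniteDimensional.proper ℂ (Matrix n n ℂ)
  obtain ⟨x, hxS, hx1, hyx⟩ := exists_mem_limitSet_tendsto (isCompact_closedBall 0 1) hT_ball
    fun i => Set.smul_mem_smul_set (hyT i)
  have hε_le : ε ≤ ‖g * x * (↑g⁻¹ : Matrix n n ℂ)‖ := by
    refine ge_of_tendsto' ((hyx.const_mul (g : Matrix n n ℂ)).mul_const _).norm fun i => ?_
    rw [mul_smul_comm, smul_mul_assoc, norm_smul,
      Real.norm_of_nonneg (inv_nonneg.2 (hR0 i).le), le_inv_mul_iff₀' (hR0 i)]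
    exact (hy i).le
  have hx_norm : ‖x‖ ≤ 1 := mem_closedBall_zero_iff.1 hx1
  nlinarith [hg x hxS]

lemma exists_norm_conj_le_of_norm_conj_le_of_norm_trace_pow_le {k : ℕ}
    (hk : Fintype.card n ^ 2 ≤ k + 1) {ε : ℝ} (hε : 0 < ε) :
    ∃ δ > 0, ∀ (T : Set (Matrix n n ℂ)) (R : ℝ) (h : (Matrix n n ℂ)ˣ), 1 ≤ R → 1 ∈ T →
      (∀ y ∈ T, ‖h * y * (↑h⁻¹ : Matrix n n ℂ)‖ ≤ R) →
      (∀ y ∈ T ^ (k + 1), ‖y.trace‖ ≤ δ * R) →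
      ∃ g : (Matrix n n ℂ)ˣ, ∀ y ∈ T, ‖g * y * (↑g⁻¹ : Matrix n n ℂ)‖ ≤ ε * R := by
  obtain ⟨δ, hδ, hcore⟩ := exists_norm_conj_le_of_norm_trace_pow_le hk hε
  refine ⟨δ, hδ, fun T R h hR h1 hT htr => ?_⟩
  obtain ⟨g, hg⟩ := hcore (ConjAct.toConjAct h • T) R hR ⟨1, h1, smul_one _⟩
    (by rintro _ ⟨y, hy, rfl⟩; exact hT y hy)
    (by
      rw [← smul_pow']
      rintro _ ⟨y, hy, rfl⟩
      exact (congrArg norm (trace_units_conj h y)).trans_le (htr y hy))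
  refine ⟨g * h, fun y hy => ?_⟩
  simpa [ConjAct.units_smul_def, mul_assoc] using hg _ (Set.smul_mem_smul_set hy)

end TraceGap

end LimitArgument

section SpectralRadius

open scoped Matrix.Norms.L2Operator

variable {d : ℕ}

lemma cvNorm_eq_norm (x : Fin d → ℂ) :
    cvNorm x = ‖(WithLp.toLp 2 x : EuclideanSpace ℂ (Fin d))‖ := by
  rw [EuclideanSpace.norm_eq, cvNorm]

lemma cOpNorm_eq_norm (M : Matrix (Fin d) (Fin d) ℂ) : cOpNorm M = ‖M‖ := by
  rw [cstar_norm_def, ← ContinuousLinearMap.sSup_unitClosedBall_eq_norm, cOpNorm]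
  congr 1
  ext r
  rw [Set.mem_image, (WithLp.equiv 2 (Fin d → ℂ)).exists_congr_left]
  simp [cvNorm_eq_norm, eq_comm]

lemma norm_le_specRad {M : Matrix (Fin d) (Fin d) ℂ} {μ : ℂ} (hμ : μ ∈ M.charpoly.roots) :
    ‖μ‖ ≤ specRad M := by
  have heq : {r : ℝ | ∃ μ ∈ M.charpoly.roots, r = ‖μ‖} =
      norm '' (M.charpoly.roots.toFinset : Set ℂ) := by
    ext r
    simp [eq_comm]
  refine le_csSup ?_ ⟨μ, hμ, rfl⟩
  exact heq ▸ (M.charpoly.roots.toFinset.finite_toSet.image _).bddAbove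

lemma specRad_nonneg (M : Matrix (Fin d) (Fin d) ℂ) : 0 ≤ specRad M :=
  Real.sSup_nonneg (by rintro _ ⟨μ, -, rfl⟩; exact norm_nonneg μ)

lemma specRad_le_norm (M : Matrix (Fin d) (Fin d) ℂ) : specRad M ≤ ‖M‖ := by
  refine Real.sSup_le ?_ (norm_nonneg M)
  rintro _ ⟨μ, hμ, rfl⟩
  cases isEmpty_or_nonempty (Fin d)
  · simp [charpoly, det_isEmpty] at hμ
  · have := FiniteDimensional.proper ℂ (Matrix (Fin d) (Fin d) ℂ)
    exact spectrum.norm_le_norm_of_mem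
      (mem_spectrum_of_isRoot_charpoly (Polynomial.isRoot_of_mem_roots hμ))

lemma norm_trace_le_mul_specRad (M : Matrix (Fin d) (Fin d) ℂ) :
    ‖M.trace‖ ≤ d * specRad M := by
  have hcard : M.charpoly.roots.card ≤ d := by
    simpa using M.charpoly.card_roots'
  calc ‖M.trace‖ ≤ (M.charpoly.roots.map norm).sum := by
        rw [trace_eq_sum_roots_charpoly]
        exact norm_multiset_sum_le _
    _ ≤ M.charpoly.roots.card • specRad M := by
        rw [← Multiset.card_map norm]
        refine Multiset.sum_le_card_nsmul _ _ fun r hr => ?_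
        obtain ⟨μ, hμ, rfl⟩ := Multiset.mem_map.1 hr
        exact norm_le_specRad hμ
    _ ≤ d * specRad M := by
        rw [nsmul_eq_mul]
        gcongr
        exact specRad_nonneg M

end SpectralRadius

section MinConjNorm

open scoped Matrix.Norms.L2Operator

variable {d : ℕ} {Ω : Set (Matrix (Fin d) (Fin d) ℂ)}

/-- The minimal norm `E(Ω) = inf_h sup_{y ∈ Ω} ‖h y h⁻¹‖` over `h ∈ SL_d(ℂ)`, in the
`ℓ²` operator norm. For unbounded `Ω` the supremum takes the junk value `0`. -/
noncomputable def minConjNorm (Ω : Set (Matrix (Fin d) (Fin d) ℂ)) : ℝ :=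
  ⨅ h : Matrix.SpecialLinearGroup (Fin d) ℂ,
    sSup ((fun y => ‖(h : Matrix (Fin d) (Fin d) ℂ) * y *
      (↑h⁻¹ : Matrix (Fin d) (Fin d) ℂ)‖) '' Ω)

/-- The maximal spectral radius `Λ(Ω) = sup_{y ∈ Ω} ρ(y)` over `Ω`, with junk value `0` if the
spectral radii on `Ω` are unbounded. -/
noncomputable def maxSpecRad (Ω : Set (Matrix (Fin d) (Fin d) ℂ)) : ℝ :=
  sSup (specRad '' Ω)

lemma isBounded_set_pow {M : Type*} [Bornology M] [Monoid M] [BoundedMul M] {s : Set M}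
    (hs : Bornology.IsBounded s) (k : ℕ) : Bornology.IsBounded (s ^ k) := by
  induction k with
  | zero => exact pow_zero s ▸ Set.finite_one.isBounded
  | succ k ih => exact pow_succ s k ▸ isBounded_mul ih hs

lemma specRad_le_maxSpecRad (hΩ : Bornology.IsBounded Ω) {y : Matrix (Fin d) (Fin d) ℂ}
    (hy : y ∈ Ω) : specRad y ≤ maxSpecRad Ω := by
  obtain ⟨C, hC⟩ := hΩ.exists_norm_le
  refine le_csSup ⟨C, ?_⟩ ⟨y, hy, rfl⟩
  rintro _ ⟨z, hz, rfl⟩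
  exact (specRad_le_norm z).trans (hC z hz)

lemma bddAbove_norm_mul_mul_image {A : Type*} [NormedRing A] {s : Set A}
    (hs : Bornology.IsBounded s) (a b : A) : BddAbove ((fun y => ‖a * y * b‖) '' s) := by
  obtain ⟨C, hC⟩ := hs.exists_norm_le
  refine ⟨‖a‖ * C * ‖b‖, ?_⟩
  rintro _ ⟨y, hy, rfl⟩
  refine (norm_mul_le _ _).trans ?_
  gcongr
  refine (norm_mul_le _ _).trans ?_
  gcongr
  exact hC y hy

lemma one_le_minConjNorm (hd : 1 ≤ d) (hΩ : Bornology.IsBounded Ω) (h1 : 1 ∈ Ω) :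
    1 ≤ minConjNorm Ω := by
  have : Nonempty (Fin d) := ⟨⟨0, hd⟩⟩
  refine le_ciInf fun h => ?_
  refine le_csSup (bddAbove_norm_mul_mul_image hΩ _ _) ⟨1, h1, ?_⟩
  simp only [mul_one, ← Matrix.SpecialLinearGroup.coe_mul, mul_inv_cancel,
    Matrix.SpecialLinearGroup.coe_one, norm_one]

lemma exists_unit_norm_conj_le_of_minConjNorm_lt (hΩ : Bornology.IsBounded Ω) {r : ℝ}
    (hr : minConjNorm Ω < r) : ∃ g : (Matrix (Fin d) (Fin d) ℂ)ˣ,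
      ∀ y ∈ Ω, ‖g * y * (↑g⁻¹ : Matrix (Fin d) (Fin d) ℂ)‖ ≤ r := by
  obtain ⟨h, hh⟩ := exists_lt_of_ciInf_lt hr
  refine ⟨Matrix.SpecialLinearGroup.toGL h, fun y hy => ?_⟩
  exact (le_csSup (bddAbove_norm_mul_mul_image hΩ _ _) ⟨y, hy, rfl⟩).trans hh.le

lemma exists_specialLinearGroup_conj_eq (hd : 1 ≤ d) (g : (Matrix (Fin d) (Fin d) ℂ)ˣ) :
    ∃ h : Matrix.SpecialLinearGroup (Fin d) ℂ, ∀ y : Matrix (Fin d) (Fin d) ℂ,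
      (h : Matrix (Fin d) (Fin d) ℂ) * y * (↑h⁻¹ : Matrix (Fin d) (Fin d) ℂ) =
        g * y * (↑g⁻¹ : Matrix (Fin d) (Fin d) ℂ) := by
  have hdet : (g : Matrix (Fin d) (Fin d) ℂ).det ≠ 0 := (isUnits_det_units g).ne_zero
  obtain ⟨c, hc⟩ := IsAlgClosed.exists_pow_nat_eq (g : Matrix (Fin d) (Fin d) ℂ).det⁻¹ hd
  have hc0 : c ≠ 0 := by
    rintro rfl
    rw [zero_pow (by omega)] at hc
    exact inv_ne_zero hdet hc.symm
  obtain ⟨h, hh⟩ : ∃ h : Matrix.SpecialLinearGroup (Fin d) ℂ,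
      (h : Matrix (Fin d) (Fin d) ℂ) = c • g :=
    ⟨⟨c • g, by rw [det_smul, Fintype.card_fin, hc, inv_mul_cancel₀ hdet]⟩, rfl⟩
  have hinv : (↑h⁻¹ : Matrix (Fin d) (Fin d) ℂ) = c⁻¹ • (↑g⁻¹ : Matrix (Fin d) (Fin d) ℂ) := by
    refine left_inv_eq_right_inv (a := (h : Matrix (Fin d) (Fin d) ℂ)) ?_ ?_
    · rw [← Matrix.SpecialLinearGroup.coe_mul, inv_mul_cancel, Matrix.SpecialLinearGroup.coe_one]
    · rw [hh, smul_mul_smul_comm, mul_inv_cancel₀ hc0, one_smul, Units.mul_inv]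
  refine ⟨h, fun y => ?_⟩
  rw [hh, hinv, smul_mul_assoc, smul_mul_smul_comm, mul_inv_cancel₀ hc0, one_smul]

lemma minConjNorm_le (hd : 1 ≤ d) (hΩ : Ω.Nonempty) (g : (Matrix (Fin d) (Fin d) ℂ)ˣ) {r : ℝ}
    (hg : ∀ y ∈ Ω, ‖g * y * (↑g⁻¹ : Matrix (Fin d) (Fin d) ℂ)‖ ≤ r) : minConjNorm Ω ≤ r := by
  obtain ⟨h, hh⟩ := exists_specialLinearGroup_conj_eq hd g
  refine ciInf_le_of_le ⟨0, ?_⟩ h (csSup_le (hΩ.image _) ?_)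
  · rintro _ ⟨h, rfl⟩
    exact Real.sSup_nonneg (by rintro _ ⟨y, -, rfl⟩; exact norm_nonneg _)
  · rintro _ ⟨y, hy, rfl⟩
    simpa only [hh] using hg y hy

theorem eigenvalue_vs_min_norm_general (d : ℕ) (hd : 1 ≤ d) :
    ∃ c : ℝ, 0 < c ∧ ∀ Ω : Set (Matrix (Fin d) (Fin d) ℂ), Bornology.IsBounded Ω → 1 ∈ Ω →
      c * minConjNorm Ω ≤ maxSpecRad (Ω ^ (d ^ 2)) := by
  obtain ⟨k, hk⟩ : ∃ k, d ^ 2 = k + 1 := Nat.exists_eq_add_one.2 (pow_pos hd 2)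
  obtain ⟨δ, hδ, hcontract⟩ := exists_norm_conj_le_of_norm_conj_le_of_norm_trace_pow_le
    (n := Fin d) (by rw [Fintype.card_fin, hk]) (ε := 1 / 4) (by norm_num)
  refine ⟨2 * δ / d, by positivity, fun Ω hΩ h1 => ?_⟩
  have hE : 1 ≤ minConjNorm Ω := one_le_minConjNorm hd hΩ h1
  by_contra! hlt
  obtain ⟨h, hh⟩ := exists_unit_norm_conj_le_of_minConjNorm_lt hΩ
    (show minConjNorm Ω < 2 * minConjNorm Ω by linarith)
  have htr : ∀ y ∈ Ω ^ (k + 1), ‖y.trace‖ ≤ δ * (2 * minConjNorm Ω) := by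
    rw [← hk]
    intro y hy
    calc ‖y.trace‖ ≤ d * specRad y := norm_trace_le_mul_specRad y
      _ ≤ d * (2 * δ / d * minConjNorm Ω) := by
        gcongr
        exact (specRad_le_maxSpecRad (isBounded_set_pow hΩ _) hy).trans hlt.le
      _ = δ * (2 * minConjNorm Ω) := by field_simp
  obtain ⟨g, hg⟩ := hcontract Ω (2 * minConjNorm Ω) h (by linarith) h1 hh htr
  linarith [minConjNorm_le hd ⟨1, h1⟩ g hg]

end MinConjNorm

/-- **Eigenvalue versus conjugation-minimal norm (Proposition 1, Archimedean case).**
For every `d ≥ 1` there is `c = c(d) > 0` such that for every compact `Ω ⊆ SL_d(ℂ)` with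
`1 ∈ Ω` one has `Λ(Ω^{d²}) ≥ c · E(Ω)`, where `Λ` is the supremum of spectral radii and
`E(Ω) = inf_h sup_{y ∈ Ω} ‖h y h⁻¹‖`. -/
theorem eigenvalue_vs_min_norm (d : ℕ) (hd : 1 ≤ d) :
    ∃ c : ℝ, 0 < c ∧
      ∀ Ω : Set (Matrix.SpecialLinearGroup (Fin d) ℂ),
        IsCompact ((fun g : Matrix.SpecialLinearGroup (Fin d) ℂ =>
          (g : Matrix (Fin d) (Fin d) ℂ)) '' Ω) →
        (1 : Matrix.SpecialLinearGroup (Fin d) ℂ) ∈ Ω →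
        c * (⨅ h : Matrix.SpecialLinearGroup (Fin d) ℂ,
              sSup ((fun y : Matrix.SpecialLinearGroup (Fin d) ℂ =>
                cOpNorm ((h * y * h⁻¹ : Matrix.SpecialLinearGroup (Fin d) ℂ) :
                  Matrix (Fin d) (Fin d) ℂ)) '' Ω)) ≤
          sSup ((fun y : Matrix.SpecialLinearGroup (Fin d) ℂ =>
            specRad (y : Matrix (Fin d) (Fin d) ℂ)) '' (Ω ^ (d ^ 2))) := by
  obtain ⟨c, hc, hmain⟩ := eigenvalue_vs_min_norm_general d hd
  refine ⟨c, hc, fun Ω hΩ h1 => ?_⟩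
  have hpow := Set.image_pow (Matrix.SpecialLinearGroup.coeMonoidHom (R := ℂ)) Ω (d ^ 2)
  open scoped Matrix.Norms.L2Operator in
  simpa only [minConjNorm, maxSpecRad, cOpNorm_eq_norm, Matrix.SpecialLinearGroup.coe_mul,
    ← hpow, Set.image_image, Matrix.SpecialLinearGroup.coeMonoidHom_apply] using
    hmain (Matrix.SpecialLinearGroup.coeMonoidHom '' Ω) hΩ.isBounded ⟨1, h1, rfl⟩
end
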